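/- arXiv:1104.5690 — 3 statements merged into one kernel-verified Lean document; each statement's English description precedes it below -/
import Mathlib

section
/- Let x ∈ P be a positive braid with ℓ(x) = m. Then ℓ(ε(x)·x) ≤ 2m. If moreover x is palindromic-free and m > 1, then ℓ(ε(x)·x) = 2m (i.e. additionally not ℓ(ε(x)·x) ≤ 2m − 1). -/
/-!
Since `ε` inverts each generator, `ε(x) x = (rev x)⁻¹ x`, where `rev` reverses words. The bound
`ℓ(ε(x) x) ≤ 2m` follows from the positivity of `Δ^(-p) x` and `x⁻¹ Δ^(p+m)`, the fact that `ε`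
sends a positive braid to the inverse of a positive one, and the fact that conjugation by `Δ`
preserves positivity (`lenLE_double`).

For the lower bound, let `x` be palindromic-free and let `p` be a common left divisor of `x = p u`
and `rev x`. Then `x` is a common left multiple of `u` and `rev p`, and it is the least one: if the
least one is `l = a u = e (rev p)` and `x = b l` with `b` nontrivial, then `p = b a`, so
`x = b e (rev a) (rev b)` begins and ends with the same generator (`PF.left_lcm`). Two consequences:

* `p` divides `Δ`. Inductively, let `p` be a divisor of `Δ` and `x = p σ_j u` with `p σ_j` dividing
  `rev x`. Then `Δ u` is a left multiple of `σ_j u` and of `rev p`, hence of `x`, so `p σ_j` is a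
  right divisor of `Δ` (`PF.simple_of_dvd`).
* If `g` is such a common divisor, `x = g y` and `y` divides `Δ^r` with `r ≥ 1`, then `x` divides
  `Δ^r`, because `Δ^r` is a left multiple of both `y` and `rev g` (`PF.dvd_D_pow`).

Let `g` be the left gcd of `x = g y` and `rev x = g z`. Then `ε(x) x = z⁻¹ y` with `y`, `z` left
coprime, and neither `y` nor `z` divides `Δ^(m-1)` since `x` does not; this uses `m > 1`. Coprimality
turns these into lower bounds for the exponents occurring in the definition of the canonical length
of `z⁻¹ y` (`dvd_D_pow_of_coprime`, `PF.reduced_fraction`), and adding the two bounds gives the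
result (`not_lenLE_double`).

The background is Garside's theory of the positive braid monoid `M`, given by the braid presentation:
the reduction property (`reduces`), cancellation, the Garside element `D` with its quasi-centrality,
least common multiples and greatest common divisors for `∣` (which is left divisibility), and the
injectivity of `M → B_n` (`toB_injective`), obtained by mapping `B_n` to the units of the Ore
localization of `M`.
-/

def braidRels (m : ℕ) : Set (FreeGroup (Fin m)) :=
  { r | (∃ i j : Fin m, (i : ℕ) + 1 < (j : ℕ) ∧
          r = FreeGroup.of i * FreeGroup.of j * (FreeGroup.of i)⁻¹ * (FreeGroup.of j)⁻¹) ∨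
        (∃ i j : Fin m, (i : ℕ) + 1 = (j : ℕ) ∧
          r = FreeGroup.of i * FreeGroup.of j * FreeGroup.of i *
              (FreeGroup.of j)⁻¹ * (FreeGroup.of i)⁻¹ * (FreeGroup.of j)⁻¹) }

/-- The braid group on `n` strands. -/
abbrev B (n : ℕ) := PresentedGroup (braidRels (n - 1))

/-- The Artin generators. -/
def σ {n : ℕ} (i : Fin (n - 1)) : B n := PresentedGroup.of i

/-- Evaluation of a signed word in the generators. -/
def π {n : ℕ} (w : List (Fin (n - 1) × Bool)) : B n :=
  (w.map (fun p => if p.2 then σ p.1 else (σ p.1)⁻¹)).prod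

/-- The submonoid of positive braids. -/
def P (n : ℕ) : Submonoid (B n) := Submonoid.closure (Set.range (σ (n := n)))

def σ' {n : ℕ} (j : ℕ) : B n := if h : j < n - 1 then σ ⟨j, h⟩ else 1

/-- The Garside half-twist element Δ. -/
def Δ (n : ℕ) : B n :=
  ((List.range (n - 1)).map
    (fun k => (((List.range (k + 1)).reverse).map (σ' (n := n))).prod)).prod

/-- Simple elements: positive prefixes of Δ. -/
def Simple {n : ℕ} (s : B n) : Prop := s ∈ P n ∧ s⁻¹ * Δ n ∈ P n

/-- Palindromic-free positive braids. -/
def PalFree {n : ℕ} (x : B n) : Prop :=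
  ∀ i : Fin (n - 1), (σ i)⁻¹ * x * (σ i)⁻¹ ∉ P n

/-- Canonical length at most `m`. -/
def lenLE {n : ℕ} (x : B n) (m : ℕ) : Prop :=
  ∃ p : ℤ, (Δ n) ^ (-p) * x ∈ P n ∧ x⁻¹ * (Δ n) ^ (p + (m : ℤ)) ∈ P n

/-- Canonical length exactly `m`. -/
def lenEQ {n : ℕ} (x : B n) (m : ℕ) : Prop :=
  lenLE x m ∧ (1 ≤ m → ¬ lenLE x (m - 1))

/-- Left normal form (as a list of simple factors). -/
def IsLeftNF {n : ℕ} (x : B n) (L : List (B n)) : Prop :=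
  (∀ s ∈ L, Simple s ∧ s ≠ 1) ∧ L.prod = x ∧
  ∀ i : ℕ, i + 1 < L.length → ∀ u : B n, Simple u →
    u⁻¹ * (L.getD i 1 * L.getD (i + 1) 1) ∈ P n → u⁻¹ * L.getD i 1 ∈ P n

/-- Right normal form (as a list of simple factors). -/
def IsRightNF {n : ℕ} (x : B n) (L : List (B n)) : Prop :=
  (∀ s ∈ L, Simple s ∧ s ≠ 1) ∧ L.prod = x ∧
  ∀ i : ℕ, i + 1 < L.length → ∀ u : B n, Simple u →
    (L.getD i 1 * L.getD (i + 1) 1) * u⁻¹ ∈ P n → L.getD (i + 1) 1 * u⁻¹ ∈ P n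

namespace PosBraid

/-! ### The positive braid monoid -/

/-- Adjacency of generator indices: `|i - j| = 1`. -/
def Adj {k : ℕ} (i j : Fin k) : Prop := (i : ℕ) + 1 = j ∨ (j : ℕ) + 1 = i

/-- Indices of commuting distinct generators: `|i - j| > 1`. -/
def Far {k : ℕ} (i j : Fin k) : Prop := (i : ℕ) + 1 < j ∨ (j : ℕ) + 1 < i

lemma Adj.symm {k : ℕ} {i j : Fin k} (h : Adj i j) : Adj j i := Or.symm h

lemma Far.symm {k : ℕ} {i j : Fin k} (h : Far i j) : Far j i := Or.symm h

lemma eq_or_adj_or_far {k : ℕ} (i j : Fin k) : i = j ∨ Adj i j ∨ Far i j := by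
  unfold Adj Far; rw [Fin.ext_iff]; omega

/-- The defining relations of the positive braid monoid, closed under symmetry. -/
inductive Base {k : ℕ} : FreeMonoid (Fin k) → FreeMonoid (Fin k) → Prop
  | comm (i j : Fin k) (h : Far i j) :
      Base (FreeMonoid.of i * FreeMonoid.of j) (FreeMonoid.of j * FreeMonoid.of i)
  | braid (i j : Fin k) (h : Adj i j) :
      Base (FreeMonoid.of i * FreeMonoid.of j * FreeMonoid.of i)
        (FreeMonoid.of j * FreeMonoid.of i * FreeMonoid.of j)

/-- One application of a defining relation inside a word. -/
def Step {k : ℕ} (u v : FreeMonoid (Fin k)) : Prop :=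
  ∃ p l r q, Base l r ∧ u = p * l * q ∧ v = p * r * q

lemma Base.symm {k : ℕ} {u v : FreeMonoid (Fin k)} (h : Base u v) : Base v u := by
  cases h with
  | comm i j h => exact .comm j i h.symm
  | braid i j h => exact .braid j i h.symm

lemma Step.symm {k : ℕ} {u v : FreeMonoid (Fin k)} (h : Step u v) : Step v u := by
  obtain ⟨p, l, r, q, h, rfl, rfl⟩ := h
  exact ⟨p, r, l, q, h.symm, rfl, rfl⟩

lemma Step.mul_left {k : ℕ} {u v : FreeMonoid (Fin k)} (w : FreeMonoid (Fin k)) (h : Step u v) :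
    Step (w * u) (w * v) := by
  obtain ⟨p, l, r, q, h, rfl, rfl⟩ := h
  exact ⟨w * p, l, r, q, h, by simp only [mul_assoc], by simp only [mul_assoc]⟩

lemma Step.mul_right {k : ℕ} {u v : FreeMonoid (Fin k)} (w : FreeMonoid (Fin k)) (h : Step u v) :
    Step (u * w) (v * w) := by
  obtain ⟨p, l, r, q, h, rfl, rfl⟩ := h
  exact ⟨p, l, r, q * w, h, by simp only [mul_assoc], by simp only [mul_assoc]⟩

/-- Equivalence of positive words: the existence of a chain of elementary steps. -/
def wordCon (k : ℕ) : Con (FreeMonoid (Fin k)) where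
  r := Relation.ReflTransGen Step
  iseqv := ⟨fun _ => .refl, fun h => by
      induction h with
      | refl => exact .refl
      | tail _ h ih => exact .head h.symm ih,
    fun h h' => h.trans h'⟩
  mul' := by
    intro w x y z h h'
    exact (Relation.ReflTransGen.lift (· * y) (fun _ _ => Step.mul_right y) _ _ h).trans
      (Relation.ReflTransGen.lift (x * ·) (fun _ _ => Step.mul_left x) _ _ h')

/-- The positive braid monoid on `k` generators, given by Artin's presentation. -/
abbrev M (k : ℕ) := (wordCon k).Quotient

/-- The class of a positive word. -/
def cl {k : ℕ} : FreeMonoid (Fin k) →* M k := (wordCon k).mk'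

/-- The generators of the positive braid monoid. -/
def s {k : ℕ} (i : Fin k) : M k := cl (FreeMonoid.of i)

lemma cl_surj {k : ℕ} (a : M k) : ∃ u, cl u = a := Con.mk'_surjective a

lemma cl_eq_iff {k : ℕ} {u v : FreeMonoid (Fin k)} :
    cl u = cl v ↔ Relation.ReflTransGen Step u v := (wordCon k).eq

lemma cl_of_mul {k : ℕ} (i : Fin k) (u : FreeMonoid (Fin k)) :
    cl (FreeMonoid.of i * u) = s i * cl u := map_mul _ _ _

lemma cl_eq_of_base {k : ℕ} {u v : FreeMonoid (Fin k)} (h : Base u v) : cl u = cl v :=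
  cl_eq_iff.2 (.single ⟨1, u, v, 1, h, by simp, by simp⟩)

lemma s_comm {k : ℕ} {i j : Fin k} (h : Far i j) : s i * s j = s j * s i := by
  simpa only [map_mul, s] using cl_eq_of_base (.comm i j h)

lemma s_braid {k : ℕ} {i j : Fin k} (h : Adj i j) : s i * s j * s i = s j * s i * s j := by
  simpa only [map_mul, s] using cl_eq_of_base (.braid i j h)

lemma s_comm' {k : ℕ} {i j : Fin k} (h : Far i j) (z : M k) :
    s i * (s j * z) = s j * (s i * z) := by
  rw [← mul_assoc, s_comm h, mul_assoc]

lemma s_braid' {k : ℕ} {i j : Fin k} (h : Adj i j) (z : M k) :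
    s i * (s j * (s i * z)) = s j * (s i * (s j * z)) := by
  have := congrArg (· * z) (s_braid h)
  simpa only [mul_assoc] using this

@[elab_as_elim]
lemma M.ind {k : ℕ} {motive : M k → Prop} (one : motive 1)
    (mul : ∀ i a, motive a → motive (s i * a)) (a : M k) : motive a := by
  obtain ⟨u, rfl⟩ := cl_surj a
  induction u using FreeMonoid.inductionOn' with
  | one => simpa using one
  | of_mul i u ih => rw [cl_of_mul]; exact mul i _ ih

/-- The universal property of the positive braid monoid. -/
def lift {k : ℕ} {N : Type*} [Monoid N] (f : Fin k → N)
    (hc : ∀ i j, Far i j → f i * f j = f j * f i)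
    (hb : ∀ i j, Adj i j → f i * f j * f i = f j * f i * f j) : M k →* N :=
  (wordCon k).lift (FreeMonoid.lift f) (by
    intro u v h
    change Relation.ReflTransGen Step u v at h
    change FreeMonoid.lift f u = FreeMonoid.lift f v
    induction h with
    | refl => rfl
    | tail _ h ih =>
      rw [ih]
      obtain ⟨p, l, r, q, h, rfl, rfl⟩ := h
      have : FreeMonoid.lift f l = FreeMonoid.lift f r := by
        cases h with
        | comm i j h => simpa using hc i j h
        | braid i j h => simpa using hb i j h
      simp only [map_mul, this])

lemma lift_s {k : ℕ} {N : Type*} [Monoid N] (f : Fin k → N) (hc) (hb) (i : Fin k) :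
    lift f hc hb (s i) = f i := by
  change FreeMonoid.lift f (FreeMonoid.of i) = f i
  simp

/-- The length homomorphism. -/
def lenHom (k : ℕ) : M k →* Multiplicative ℕ :=
  lift (fun _ => Multiplicative.ofAdd 1) (fun _ _ _ => rfl) (fun _ _ _ => rfl)

/-- The length of a positive braid: the number of letters of any word representing it. -/
def len {k : ℕ} (a : M k) : ℕ := Multiplicative.toAdd (lenHom k a)

@[simp] lemma len_one {k : ℕ} : len (1 : M k) = 0 := by simp [len]

@[simp] lemma len_mul {k : ℕ} (a b : M k) : len (a * b) = len a + len b := by simp [len]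

@[simp] lemma len_s {k : ℕ} (i : Fin k) : len (s i) = 1 := by simp [len, lenHom, lift_s]

lemma eq_one_or {k : ℕ} (a : M k) : a = 1 ∨ ∃ i b, a = s i * b := by
  induction a using M.ind with
  | one => exact .inl rfl
  | mul i a _ => exact .inr ⟨i, a, rfl⟩

lemma eq_one_of_len {k : ℕ} {a : M k} (h : len a = 0) : a = 1 := by
  rcases eq_one_or a with rfl | ⟨i, b, rfl⟩
  · rfl
  · simp at h

/-! ### Least common multiples of generators and cancellation -/

/-- The relation between `(i, a)` and `(j, b)` expressing that `s i * a = s j * b` holds for the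
obvious reason: this element is a multiple of the least common multiple of `s i` and `s j`. -/
def Form {k : ℕ} (i : Fin k) (a : M k) (j : Fin k) (b : M k) : Prop :=
  (i = j ∧ a = b) ∨ (Adj i j ∧ ∃ c, a = s j * (s i * c) ∧ b = s i * (s j * c)) ∨
    (Far i j ∧ ∃ c, a = s j * c ∧ b = s i * c)

lemma Form.symm {k : ℕ} {i j : Fin k} {a b : M k} (h : Form i a j b) : Form j b i a := by
  rcases h with ⟨rfl, rfl⟩ | ⟨h, c, rfl, rfl⟩ | ⟨h, c, rfl, rfl⟩
  · exact .inl ⟨rfl, rfl⟩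
  · exact .inr (.inl ⟨h.symm, c, rfl, rfl⟩)
  · exact .inr (.inr ⟨h.symm, c, rfl, rfl⟩)

/-- Garside's reduction property for pairs with second components of length less than `L`. -/
def Reduces (k L : ℕ) : Prop :=
  ∀ (i j : Fin k) (a b : M k), len a < L → s i * a = s j * b → Form i a j b

lemma Reduces.cancel {k L : ℕ} (H : Reduces k L) {i : Fin k} {a b : M k} (hl : len a < L)
    (h : s i * a = s i * b) : a = b := by
  rcases H i i a b hl h with ⟨_, h⟩ | ⟨h, _⟩ | ⟨h, _⟩
  · exact h
  · unfold Adj at h; omega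
  · unfold Far at h; omega

lemma Reduces.adj {k L : ℕ} (H : Reduces k L) {i j : Fin k} (hij : Adj i j) {a b : M k}
    (hl : len a < L) (h : s i * a = s j * b) :
    ∃ c, a = s j * (s i * c) ∧ b = s i * (s j * c) := by
  rcases H i j a b hl h with ⟨h, _⟩ | ⟨h, h'⟩ | ⟨h, _⟩
  · subst h; unfold Adj at hij; omega
  · exact h'
  · unfold Adj at hij; unfold Far at h; omega

lemma Reduces.far {k L : ℕ} (H : Reduces k L) {i j : Fin k} (hij : Far i j) {a b : M k}
    (hl : len a < L) (h : s i * a = s j * b) : ∃ c, a = s j * c ∧ b = s i * c := by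
  rcases H i j a b hl h with ⟨h, _⟩ | ⟨h, h'⟩ | ⟨h, h'⟩
  · subst h; unfold Far at hij; omega
  · unfold Far at hij; unfold Adj at h; omega
  · exact h'

/-- The case of three distinct indices with `t` commuting with `i` and adjacent to `j`. -/
lemma Form.trans_far_adj {k L : ℕ} (H : Reduces k L) {i t j : Fin k} {c c' : M k}
    (hit : Far i t) (htj : Adj t j) (hij : i ≠ j) (hl : len c < L)
    (h : s i * c = s j * (s t * c')) :
    Form i (s t * c) j (s t * (s j * c')) := by
  have hlen := congrArg len h
  simp only [len_mul, len_s] at hlen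
  rcases eq_or_adj_or_far i j with h0 | h0 | h0
  · exact absurd h0 hij
  · obtain ⟨e, rfl, he⟩ := H.adj h0 hl h
    simp only [len_mul, len_s] at hlen hl
    obtain ⟨f, rfl, hf⟩ := H.far hit.symm (by omega) he
    simp only [len_mul, len_s] at hlen
    obtain ⟨g, rfl, rfl⟩ := H.adj htj.symm (by omega) hf
    refine .inr (.inl ⟨h0, s t * (s j * (s i * g)), ?_, ?_⟩)
    · rw [s_comm' hit, s_braid' htj, s_braid' h0.symm, s_comm' hit.symm]
    · rw [s_braid' h0.symm, s_comm' hit g, s_comm' hit.symm, s_braid' htj]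
  · obtain ⟨e, rfl, he⟩ := H.far h0 hl h
    simp only [len_mul, len_s] at hlen hl
    obtain ⟨f, rfl, rfl⟩ := H.far hit.symm (by omega) he
    refine .inr (.inr ⟨h0, s t * (s j * f), ?_, ?_⟩)
    · rw [s_braid' htj]
    · rw [s_comm' h0.symm, s_comm' hit.symm]

/-- Garside's case analysis: two reductions `s i * a = s t * d` and `s t * d = s j * b` compose,
provided the reduction property is known for shorter elements. -/
lemma Form.trans {k L : ℕ} (H : Reduces k L) {i t j : Fin k} {a d b : M k} (hl : len d ≤ L)
    (h₁ : Form i a t d) (h₂ : Form t d j b) : Form i a j b := by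
  rcases h₁ with ⟨rfl, rfl⟩ | h₁
  · exact h₂
  by_cases hij : i = j
  · subst hij
    left
    refine ⟨rfl, ?_⟩
    rcases h₁ with ⟨h, c, rfl, rfl⟩ | ⟨h, c, rfl, rfl⟩
    · simp only [len_mul, len_s] at hl
      rcases h₂ with ⟨rfl, _⟩ | ⟨h', c', hc, rfl⟩ | ⟨h', _⟩
      · unfold Adj at h; omega
      · have := H.cancel (by simp only [len_mul, len_s]; omega) hc
        rw [H.cancel (by omega) this]
      · unfold Adj at h; unfold Far at h'; omega
    · simp only [len_mul, len_s] at hl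
      rcases h₂ with ⟨rfl, _⟩ | ⟨h', _⟩ | ⟨h', c', hc, rfl⟩
      · unfold Far at h; omega
      · unfold Far at h; unfold Adj at h'; omega
      · rw [H.cancel (by omega) hc]
  rcases h₂ with ⟨rfl, rfl⟩ | h₂
  · exact .inr h₁
  rcases h₁ with ⟨h, c, rfl, rfl⟩ | ⟨h, c, rfl, rfl⟩ <;> simp only [len_mul, len_s] at hl <;>
    rcases h₂ with ⟨h', c', hc, rfl⟩ | ⟨h', c', hc, rfl⟩
  · -- The distinct neighbours `i` and `j` of `t` lie on opposite sides of it, hence commute.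
    have hf : Far i j := by
      unfold Adj at h h'; unfold Far; rw [Fin.ext_iff] at hij; omega
    have hlen := congrArg len hc
    simp only [len_mul, len_s] at hlen
    obtain ⟨e, h1, h2⟩ := H.far hf (by simp only [len_mul, len_s]; omega) hc
    obtain ⟨f, rfl, rfl⟩ := H.adj h' (by omega) h1
    simp only [len_mul, len_s] at hlen hl
    obtain ⟨g, rfl, h3⟩ := H.adj h.symm (by omega) h2
    simp only [len_mul, len_s] at hlen
    have h4 := H.cancel (by simp only [len_mul, len_s]; omega) h3
    obtain ⟨z, rfl, rfl⟩ := H.far hf.symm (by omega) h4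
    refine .inr (.inr ⟨hf, s t * (s i * (s j * (s t * z))), ?_, ?_⟩)
    · rw [s_comm' hf, s_braid' h, s_braid' h', s_comm' hf.symm]
    · rw [s_comm' hf.symm, s_braid' h'.symm, s_braid' h.symm]
  · have hlen := congrArg len hc
    simp only [len_mul, len_s] at hlen
    exact (Form.trans_far_adj H h'.symm h.symm (Ne.symm hij) (by omega) hc.symm).symm
  · exact Form.trans_far_adj H h h' hij (by omega) hc
  · rcases H i j c c' (by omega) hc with ⟨h0, _⟩ | ⟨h0, e, rfl, rfl⟩ | ⟨h0, e, rfl, rfl⟩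
    · exact absurd h0 hij
    · refine .inr (.inl ⟨h0, s t * e, ?_, ?_⟩)
      · rw [s_comm' h', s_comm' h.symm]
      · rw [s_comm' h.symm, s_comm' h']
    · refine .inr (.inr ⟨h0, s t * e, ?_, ?_⟩)
      · rw [s_comm' h']
      · rw [s_comm' h.symm]

lemma of_mul_inj {k : ℕ} {i j : Fin k} {u v : FreeMonoid (Fin k)}
    (h : FreeMonoid.of i * u = FreeMonoid.of j * v) : i = j ∧ u = v :=
  List.cons.inj h

lemma Form.of_step {k : ℕ} {i j : Fin k} {u v : FreeMonoid (Fin k)}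
    (h : Step (FreeMonoid.of i * u) (FreeMonoid.of j * v)) : Form i (cl u) j (cl v) := by
  obtain ⟨p, l, r, q, h, hu, hv⟩ := h
  cases p with
  | one =>
    cases h with
    | comm i' j' h =>
      simp only [one_mul, mul_assoc] at hu hv
      obtain ⟨rfl, rfl⟩ := of_mul_inj hu
      obtain ⟨rfl, rfl⟩ := of_mul_inj hv
      exact .inr (.inr ⟨h, cl q, cl_of_mul _ _, cl_of_mul _ _⟩)
    | braid i' j' h =>
      simp only [one_mul, mul_assoc] at hu hv
      obtain ⟨rfl, rfl⟩ := of_mul_inj hu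
      obtain ⟨rfl, rfl⟩ := of_mul_inj hv
      exact .inr (.inl ⟨h, cl q, by simp only [cl_of_mul], by simp only [cl_of_mul]⟩)
  | of_mul x p =>
    simp only [mul_assoc] at hu hv
    obtain ⟨rfl, rfl⟩ := of_mul_inj hu
    obtain ⟨rfl, rfl⟩ := of_mul_inj hv
    refine .inl ⟨rfl, ?_⟩
    simp only [map_mul, cl_eq_of_base h]

lemma len_cl_eq {k : ℕ} {u v : FreeMonoid (Fin k)} (h : Relation.ReflTransGen Step u v) :
    len (cl u) = len (cl v) := by rw [cl_eq_iff.2 h]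

/-- Garside's reduction property. The outer induction is on the length, the inner one on the number
of elementary steps leading from one word to the other. -/
theorem reduces (k L : ℕ) : Reduces k L := by
  induction L with
  | zero => intro i j a b h; omega
  | succ L H =>
    intro i j a b hl h
    obtain ⟨u, rfl⟩ := cl_surj a
    obtain ⟨v, rfl⟩ := cl_surj b
    rw [← cl_of_mul, ← cl_of_mul, cl_eq_iff] at h
    have key : ∀ w, Relation.ReflTransGen Step (FreeMonoid.of i * u) w →
        ∀ j v, w = FreeMonoid.of j * v → Form i (cl u) j (cl v) := by
      intro w hw
      induction hw with
      | refl =>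
        intro j v h
        obtain ⟨rfl, rfl⟩ := of_mul_inj h
        exact .inl ⟨rfl, rfl⟩
      | @tail w₁ w₂ h₁ h₂ ih =>
        rintro j v rfl
        have h3 := len_cl_eq h₁
        cases w₁ with
        | one => simp [cl_of_mul] at h3
        | of_mul t d =>
          simp only [cl_of_mul, len_mul, len_s] at h3
          exact Form.trans H (by omega) (ih t d rfl) (Form.of_step h₂)
    exact key _ h j v rfl

theorem form_of_eq {k : ℕ} {i j : Fin k} {a b : M k} (h : s i * a = s j * b) : Form i a j b :=
  reduces k (len a + 1) i j a b (by omega) h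

theorem mul_left_cancel' {k : ℕ} {a b c : M k} (h : a * b = a * c) : b = c := by
  induction a using M.ind with
  | one => simpa using h
  | mul i a ih =>
    rw [mul_assoc, mul_assoc] at h
    exact ih ((reduces k (len (a * b) + 1)).cancel (by omega) h)

/-! ### Reversal -/

/-- Reversal of words as a homomorphism to the opposite monoid. -/
def revHom (k : ℕ) : M k →* (M k)ᵐᵒᵖ :=
  lift (fun i => MulOpposite.op (s i))
    (fun i j h => by rw [← MulOpposite.op_mul, ← MulOpposite.op_mul, s_comm h])
    (fun i j h => by
      simp only [← MulOpposite.op_mul, ← mul_assoc]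
      rw [s_braid h])

/-- The anti-automorphism reading words backwards. -/
def rev {k : ℕ} (a : M k) : M k := (revHom k a).unop

@[simp] lemma rev_one {k : ℕ} : rev (1 : M k) = 1 := by simp [rev]

@[simp] lemma rev_mul {k : ℕ} (a b : M k) : rev (a * b) = rev b * rev a := by simp [rev]

@[simp] lemma rev_s {k : ℕ} (i : Fin k) : rev (s i) = s i := by simp [rev, revHom, lift_s]

@[simp] lemma rev_rev {k : ℕ} (a : M k) : rev (rev a) = a := by
  induction a using M.ind with
  | one => simp
  | mul i a ih => simp [ih]

lemma rev_inj {k : ℕ} {a b : M k} (h : rev a = rev b) : a = b := by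
  rw [← rev_rev a, h, rev_rev]

lemma rev_pow {k : ℕ} (a : M k) (m : ℕ) : rev (a ^ m) = rev a ^ m := by
  induction m with
  | zero => simp
  | succ m ih => rw [pow_succ, rev_mul, ih, pow_succ']

theorem mul_right_cancel' {k : ℕ} {a b c : M k} (h : b * a = c * a) : b = c := by
  have := congrArg rev h
  rw [rev_mul, rev_mul] at this
  exact rev_inj (mul_left_cancel' this)

/-! ### The Garside element -/

/-- The generator with index `j`, or `1` if `j` is out of range. -/
def t {k : ℕ} (j : ℕ) : M k := if h : j < k then s ⟨j, h⟩ else 1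

lemma t_val {k : ℕ} (i : Fin k) : t (i : ℕ) = s i := by simp [t]

@[simp] lemma rev_t {k : ℕ} (j : ℕ) : rev (t j : M k) = t j := by
  unfold t; split <;> simp

lemma t_comm {k i j : ℕ} (h : i + 1 < j) : (t i * t j : M k) = t j * t i := by
  unfold t
  split
  · split
    · exact s_comm (.inl h)
    · simp
  · simp

lemma t_braid {k i : ℕ} (h : i + 1 < k) :
    (t i * t (i + 1) * t i : M k) = t (i + 1) * t i * t (i + 1) := by
  rw [t, t, dif_pos h, dif_pos (by omega)]
  exact s_braid (.inl rfl)

/-- The descending product `t (m - 1) ⋯ t 1 * t 0`. -/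
def desc (k : ℕ) : ℕ → M k
  | 0 => 1
  | m + 1 => t m * desc k m

/-- The ascending product `t 0 * t 1 ⋯ t (m - 1)`. -/
def asc (k : ℕ) : ℕ → M k
  | 0 => 1
  | m + 1 => asc k m * t m

/-- The Garside element of the submonoid generated by the first `m` generators. -/
def dl (k : ℕ) : ℕ → M k
  | 0 => 1
  | m + 1 => dl k m * desc k (m + 1)

/-- The Garside element of the positive braid monoid. -/
def D (k : ℕ) : M k := dl k k

lemma rev_desc (k m : ℕ) : rev (desc k m) = asc k m := by
  induction m with
  | zero => simp [desc, asc]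
  | succ m ih => simp [desc, asc, ih]

lemma desc_comm {k m j : ℕ} (h : m < j) : desc k m * t j = t j * desc k m := by
  induction m with
  | zero => simp [desc]
  | succ m ih =>
    rw [desc, mul_assoc, ih (by omega), ← mul_assoc, t_comm h, mul_assoc]

lemma dl_comm {k m j : ℕ} (h : m < j) : dl k m * t j = t j * dl k m := by
  induction m with
  | zero => simp [dl]
  | succ m ih =>
    rw [dl, mul_assoc, desc_comm h, ← mul_assoc, ih (by omega), mul_assoc]

lemma desc_shift {k m i : ℕ} (h : i + 1 < m) (hm : m ≤ k) :
    desc k m * t (i + 1) = t i * desc k m := by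
  induction m with
  | zero => omega
  | succ m ih =>
    rcases Nat.lt_or_ge (i + 1) m with h' | h'
    · rw [desc, mul_assoc, ih h' (by omega), ← mul_assoc, ← t_comm h', mul_assoc]
    · obtain rfl : m = i + 1 := by omega
      calc desc k (i + 1 + 1) * t (i + 1)
          = t (i + 1) * (t i * (desc k i * t (i + 1))) := by simp only [desc, mul_assoc]
        _ = (t (i + 1) * t i * t (i + 1)) * desc k i := by
            rw [desc_comm (by omega)]; simp only [mul_assoc]
        _ = t i * desc k (i + 1 + 1) := by
            rw [← t_braid (by omega)]; simp only [desc, mul_assoc]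

lemma dl_eq_asc (k m : ℕ) : dl k (m + 1) = asc k (m + 1) * dl k m := by
  induction m with
  | zero => simp [dl, desc, asc]
  | succ m ih =>
    calc dl k (m + 1 + 1) = dl k (m + 1) * (t (m + 1) * desc k (m + 1)) := rfl
      _ = asc k (m + 1) * (dl k m * t (m + 1)) * desc k (m + 1) := by
          rw [ih]; simp only [mul_assoc]
      _ = asc k (m + 1) * t (m + 1) * (dl k m * desc k (m + 1)) := by
          rw [dl_comm (by omega)]; simp only [mul_assoc]

lemma rev_dl (k m : ℕ) : rev (dl k m) = dl k m := by
  induction m with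
  | zero => simp [dl]
  | succ m ih => rw [dl, rev_mul, ih, rev_desc, ← dl_eq_asc, dl]

lemma t_mul_dl {k m i : ℕ} (h : i < m) (hm : m ≤ k) :
    t i * dl k m = dl k m * t (m - 1 - i) := by
  induction m generalizing i with
  | zero => omega
  | succ m ih =>
    have key : ∀ i < m, t i * dl k (m + 1) = dl k (m + 1) * t (m - i) := by
      intro i hi
      rw [dl, ← mul_assoc, ih hi (by omega), mul_assoc, ← desc_shift (by omega) hm, ← mul_assoc]
      congr 2
      omega
    rcases Nat.lt_or_ge i m with h' | h'
    · simpa using key i h'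
    · obtain rfl : i = m := by omega
      rcases Nat.eq_zero_or_pos i with rfl | h0
      · simp [dl, desc]
      · have := congrArg rev (key 0 h0)
        simp only [rev_mul, rev_t, rev_dl, Nat.sub_zero] at this
        simp [this]

lemma dl_eq_mul_t {k m i : ℕ} (h : i < m) (hm : m ≤ k) : ∃ y, dl k m = y * t i := by
  induction m generalizing i with
  | zero => omega
  | succ m ih =>
    rcases Nat.lt_or_ge i m with h' | h'
    · obtain ⟨y, hy⟩ := ih h' (by omega)
      exact ⟨asc k (m + 1) * y, by rw [dl_eq_asc, hy, mul_assoc]⟩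
    · obtain rfl : i = m := by omega
      rcases Nat.eq_zero_or_pos i with rfl | h0
      · exact ⟨1, by simp [dl, desc]⟩
      · obtain ⟨j, rfl⟩ : ∃ j, i = j + 1 := ⟨i - 1, by omega⟩
        obtain ⟨y, hy⟩ := ih (i := j) (by omega) (by omega)
        exact ⟨y * desc k (j + 1 + 1), by rw [dl, hy, mul_assoc, mul_assoc, desc_shift (by omega) hm]⟩

@[simp] lemma rev_D (k : ℕ) : rev (D k) = D k := rev_dl k k

lemma D_eq_mul_s {k : ℕ} (i : Fin k) : ∃ y, D k = y * s i := by
  rw [← t_val]; exact dl_eq_mul_t i.2 le_rfl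

lemma s_dvd_D {k : ℕ} (i : Fin k) : s i ∣ D k := by
  obtain ⟨y, hy⟩ := D_eq_mul_s i
  exact ⟨rev y, by rw [← rev_D, hy]; simp⟩

lemma s_mul_D {k : ℕ} (i : Fin k) : ∃ j, s i * D k = D k * s j := by
  refine ⟨⟨k - 1 - i, by omega⟩, ?_⟩
  rw [← t_val, ← t_val]
  exact t_mul_dl i.2 le_rfl

lemma mul_D {k : ℕ} (a : M k) : ∃ a', a * D k = D k * a' := by
  induction a using M.ind with
  | one => exact ⟨1, by simp⟩
  | mul i a ih =>
    obtain ⟨a', h⟩ := ih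
    obtain ⟨j, hj⟩ := s_mul_D i
    exact ⟨s j * a', by rw [mul_assoc, h, ← mul_assoc, hj, mul_assoc]⟩

/-- Right multiplication by a power of the Garside element may be moved to the left. -/
lemma mul_D_pow {k : ℕ} (a : M k) (m : ℕ) : ∃ a', a * D k ^ m = D k ^ m * a' := by
  induction m with
  | zero => exact ⟨a, by simp⟩
  | succ m ih =>
    obtain ⟨b, hb⟩ := ih
    obtain ⟨c, hc⟩ := mul_D b
    exact ⟨c, by rw [pow_succ, ← mul_assoc, hb, mul_assoc, hc, mul_assoc]⟩

lemma D_pow_mul {k : ℕ} (a : M k) (m : ℕ) : ∃ a', D k ^ m * a = a' * D k ^ m := by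
  obtain ⟨b, hb⟩ := mul_D_pow (rev a) m
  refine ⟨rev b, rev_inj ?_⟩
  simpa [rev_pow] using hb

/-- Left divisors of a power of the Garside element are also right divisors of it. -/
lemma right_dvd_of_dvd {k m : ℕ} {a : M k} (h : a ∣ D k ^ m) : ∃ b, D k ^ m = b * a := by
  obtain ⟨b, hb⟩ := h
  obtain ⟨b', hb'⟩ := D_pow_mul b m
  refine ⟨b', mul_right_cancel' (a := b) ?_⟩
  rw [hb', hb, mul_assoc]

lemma rev_dvd_D_pow {k m : ℕ} {a : M k} (h : a ∣ D k ^ m) : rev a ∣ D k ^ m := by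
  obtain ⟨b, hb⟩ := right_dvd_of_dvd h
  have := congrArg rev hb
  rw [rev_pow, rev_D, rev_mul] at this
  exact ⟨rev b, this⟩

lemma dvd_of_right_dvd {k m : ℕ} {a b : M k} (h : D k ^ m = b * a) : a ∣ D k ^ m := by
  have := congrArg rev h
  rw [rev_pow, rev_D, rev_mul] at this
  simpa using rev_dvd_D_pow ⟨_, this⟩

lemma dvd_D_pow {k : ℕ} (a : M k) : ∃ m, a ∣ D k ^ m := by
  induction a using M.ind with
  | one => exact ⟨0, by simp⟩
  | mul i a ih =>
    obtain ⟨m, b, hb⟩ := ih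
    obtain ⟨c, hc⟩ := s_dvd_D i
    obtain ⟨c', hc'⟩ := mul_D_pow c m
    exact ⟨m + 1, b * c', by
      calc D k ^ (m + 1) = s i * (c * D k ^ m) := by rw [pow_succ', ← mul_assoc, ← hc]
        _ = s i * a * (b * c') := by rw [hc', hb]; simp only [mul_assoc]⟩

/-! ### Lattice properties of divisibility -/

/-- The least common multiple of two generators. -/
lemma atom_lcm {k : ℕ} (i j : Fin k) : ∃ c d, s i * c = s j * d ∧
    ∀ a b, s i * a = s j * b → c ∣ a ∧ d ∣ b := by
  rcases eq_or_adj_or_far i j with rfl | h | h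
  · exact ⟨1, 1, rfl, fun a b _ => ⟨one_dvd a, one_dvd b⟩⟩
  · refine ⟨s j * s i, s i * s j, by simpa only [mul_assoc] using s_braid h, fun a b hab => ?_⟩
    obtain ⟨c, rfl, rfl⟩ := (reduces k (len a + 1)).adj h (by omega) hab
    exact ⟨⟨c, by rw [mul_assoc]⟩, ⟨c, by rw [mul_assoc]⟩⟩
  · refine ⟨s j, s i, s_comm h, fun a b hab => ?_⟩
    obtain ⟨c, rfl, rfl⟩ := (reduces k (len a + 1)).far h (by omega) hab
    exact ⟨⟨c, rfl⟩, ⟨c, rfl⟩⟩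

lemma dvd_of_mul_dvd_mul {k : ℕ} {a b c : M k} (h : a * b ∣ a * c) : b ∣ c := by
  obtain ⟨d, hd⟩ := h
  rw [mul_assoc] at hd
  exact ⟨d, mul_left_cancel' hd⟩

lemma exists_lcm_of_common {k : ℕ} (L : ℕ) : ∀ z a b : M k, len z < L → a ∣ z → b ∣ z →
    ∃ l, a ∣ l ∧ b ∣ l ∧ ∀ w, a ∣ w → b ∣ w → l ∣ w := by
  induction L with
  | zero => intro z a b h; omega
  | succ L ih =>
    intro z a b hz ha hb
    rcases eq_one_or a with rfl | ⟨i, a, rfl⟩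
    · exact ⟨b, one_dvd b, dvd_rfl, fun _ _ h => h⟩
    rcases eq_one_or b with rfl | ⟨j, b, rfl⟩
    · exact ⟨_, dvd_rfl, one_dvd _, fun _ h _ => h⟩
    obtain ⟨c, d, hcd, hmin⟩ := atom_lcm i j
    obtain ⟨z₁, hz₁⟩ : s i ∣ z := (dvd_mul_right _ _).trans ha
    obtain ⟨z₂, hz₂⟩ : s j ∣ z := (dvd_mul_right _ _).trans hb
    have hl₁ := congrArg len hz₁
    have hl₂ := congrArg len hz₂
    simp only [len_mul, len_s] at hl₁ hl₂
    obtain ⟨hc, -⟩ := hmin _ _ (hz₁.symm.trans hz₂)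
    -- `s i * u` is the least common multiple of `s i * a` and `s j`.
    obtain ⟨u, hau, hcu, hu⟩ := ih z₁ a c (by omega)
      (dvd_of_mul_dvd_mul (by rwa [← hz₁])) hc
    have hu' : s j ∣ s i * u := by
      obtain ⟨e, rfl⟩ := hcu
      exact ⟨d * e, by rw [← mul_assoc, hcd, mul_assoc]⟩
    have huz : ∀ w, s i * a ∣ w → s j ∣ w → s i * u ∣ w := by
      rintro w hw ⟨w₂, hw₂⟩
      obtain ⟨w₁, rfl⟩ : s i ∣ w := (dvd_mul_right _ _).trans hw
      exact mul_dvd_mul_left _ (hu _ (dvd_of_mul_dvd_mul hw) (hmin _ _ hw₂).1)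
    obtain ⟨v, hv⟩ := hu'
    obtain ⟨l, hvl, hbl, hl⟩ := ih z₂ v b (by omega)
      (dvd_of_mul_dvd_mul (by rw [← hz₂, ← hv]; exact huz z ha ⟨z₂, hz₂⟩))
      (dvd_of_mul_dvd_mul (by rwa [← hz₂]))
    refine ⟨s j * l, ?_, mul_dvd_mul_left _ hbl, ?_⟩
    · exact (mul_dvd_mul_left _ hau).trans (hv ▸ mul_dvd_mul_left _ hvl)
    · intro w hw hw'
      have h := huz w hw ((dvd_mul_right _ _).trans hw')
      obtain ⟨w₂, rfl⟩ : s j ∣ w := (dvd_mul_right _ _).trans hw'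
      rw [hv] at h
      exact mul_dvd_mul_left _ (hl _ (dvd_of_mul_dvd_mul h) (dvd_of_mul_dvd_mul hw'))

theorem exists_lcm {k : ℕ} (a b : M k) :
    ∃ l, a ∣ l ∧ b ∣ l ∧ ∀ w, a ∣ w → b ∣ w → l ∣ w := by
  obtain ⟨m, hm⟩ := dvd_D_pow a
  obtain ⟨m', hm'⟩ := dvd_D_pow b
  exact exists_lcm_of_common _ (D k ^ (m + m')) a b (Nat.lt_succ_self _)
    (hm.trans (pow_dvd_pow _ (by omega))) (hm'.trans (pow_dvd_pow _ (by omega)))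

theorem exists_gcd {k : ℕ} (a b : M k) :
    ∃ g, g ∣ a ∧ g ∣ b ∧ ∀ d, d ∣ a → d ∣ b → d ∣ g := by
  have key : ∀ N, ∀ d, d ∣ a → d ∣ b → len a < len d + N →
      ∃ g, g ∣ a ∧ g ∣ b ∧ ∀ d, d ∣ a → d ∣ b → d ∣ g := by
    intro N
    induction N with
    | zero =>
      rintro d ⟨c, rfl⟩ _ h
      simp only [len_mul] at h
      omega
    | succ N ih =>
      intro d hda hdb hl
      by_cases hmax : ∀ e, d ∣ e → e ∣ a → e ∣ b → e = d
      · refine ⟨d, hda, hdb, fun e hea heb => ?_⟩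
        obtain ⟨l, hdl, hel, hl⟩ := exists_lcm d e
        rw [hmax l hdl (hl _ hda hea) (hl _ hdb heb)] at hel
        exact hel
      · push Not at hmax
        obtain ⟨e, ⟨c, rfl⟩, hea, heb, hne⟩ := hmax
        refine ih (d * c) hea heb ?_
        have : len c ≠ 0 := fun h => hne (by rw [eq_one_of_len h, mul_one])
        rw [len_mul]
        omega
  exact key (len a + 1) 1 (one_dvd _) (one_dvd _) (by simp)

/-- Least common left multiples. -/
theorem exists_left_lcm {k : ℕ} (a b : M k) : ∃ l, (∃ c, l = c * a) ∧ (∃ c, l = c * b) ∧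
    ∀ w, (∃ c, w = c * a) → (∃ c, w = c * b) → ∃ c, w = c * l := by
  have conv : ∀ {x y : M k}, (∃ c, y = c * x) ↔ rev x ∣ rev y := by
    intro x y
    constructor
    · rintro ⟨c, rfl⟩
      exact ⟨rev c, by simp⟩
    · rintro ⟨c, hc⟩
      exact ⟨rev c, rev_inj (by simpa using hc)⟩
  obtain ⟨l, ha, hb, hl⟩ := exists_lcm (rev a) (rev b)
  refine ⟨rev l, conv.2 (by simpa using ha), conv.2 (by simpa using hb), fun w hwa hwb => ?_⟩
  exact conv.2 (by simpa using hl _ (conv.1 hwa) (conv.1 hwb))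

/-- If `y` and `z` are left coprime and `z` divides `y * D ^ m`, then `z` divides `D ^ m`: indeed
the greatest common divisor of `y * D ^ m` and `z * D ^ m` is `D ^ m`. -/
lemma dvd_D_pow_of_coprime {k m : ℕ} {y z : M k} (hc : ∀ d, d ∣ y → d ∣ z → d = 1)
    (h : z ∣ y * D k ^ m) : z ∣ D k ^ m := by
  obtain ⟨g, hgy, hgz, hg⟩ := exists_gcd (y * D k ^ m) (z * D k ^ m)
  have hD : ∀ a : M k, D k ^ m ∣ a * D k ^ m := fun a => by
    obtain ⟨a', ha'⟩ := mul_D_pow a m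
    exact ⟨a', ha'⟩
  obtain ⟨e, rfl⟩ := hg _ (hD y) (hD z)
  obtain ⟨e', he'⟩ := D_pow_mul e m
  rw [he'] at hgy hgz hg
  have cancel : ∀ a : M k, e' * D k ^ m ∣ a * D k ^ m → e' ∣ a := by
    rintro a ⟨f, hf⟩
    obtain ⟨f', hf'⟩ := D_pow_mul f m
    rw [mul_assoc, hf', ← mul_assoc] at hf
    exact ⟨f', mul_right_cancel' hf⟩
  have h1 := hc e' (cancel y hgy) (cancel z hgz)
  rw [h1, one_mul] at hg
  exact hg z h (dvd_mul_right _ _)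

/-! ### Palindromic-free positive braids -/

/-- The monoid version of the palindromic-free condition. -/
def PF {k : ℕ} (x : M k) : Prop := ∀ i y, x ≠ s i * y * s i

lemma PF.rev {k : ℕ} {x : M k} (h : PF x) : PF (rev x) := by
  intro i y hy
  refine h i (PosBraid.rev y) (rev_inj ?_)
  simpa [mul_assoc] using hy

/-- If `x = p * u` is palindromic-free and `p` also left divides `rev x`, then `x` is the least
common left multiple of `u` and `rev p`: otherwise this multiple would be `a * u` with
`p = s i * b * a`, and both `x = s i * b * a * u` and `a * u` would end in `s i`. -/
lemma PF.left_lcm {k : ℕ} {x p u : M k} (hx : PF x) (hu : x = p * u) (hp : p ∣ PosBraid.rev x)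
    {w : M k} (h₁ : ∃ c, w = c * u) (h₂ : ∃ c, w = c * PosBraid.rev p) : ∃ c, w = c * x := by
  obtain ⟨l, ⟨a, rfl⟩, ⟨e, he⟩, hl⟩ := exists_left_lcm u (PosBraid.rev p)
  have hxp : ∃ c, x = c * PosBraid.rev p := by
    obtain ⟨c, hc⟩ := hp
    exact ⟨PosBraid.rev c, rev_inj (by simpa using hc)⟩
  obtain ⟨b, hb⟩ := hl x ⟨p, hu⟩ hxp
  have hpb : p = b * a := mul_right_cancel' (a := u) (by rw [← hu, hb, mul_assoc])
  rcases eq_one_or b with rfl | ⟨i, b, rfl⟩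
  · rw [one_mul] at hb
    rw [hb]
    exact hl w h₁ h₂
  · refine absurd ?_ (hx i (b * (e * (PosBraid.rev a * PosBraid.rev b))))
    rw [hb, he, hpb]
    simp [mul_assoc]

/-- A common left divisor of a palindromic-free `x` and of `rev x` divides the Garside element. -/
lemma PF.simple_of_dvd {k : ℕ} {x p : M k} (hx : PF x) (h : p ∣ x) (h' : p ∣ PosBraid.rev x) :
    p ∣ D k := by
  suffices ∀ q, ∀ p, p ∣ D k → p * q ∣ x → p * q ∣ PosBraid.rev x → p * q ∣ D k by
    simpa using this p 1 (one_dvd _) (by simpa using h) (by simpa using h')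
  intro q
  induction q using M.ind with
  | one => intro p hp _ _; simpa using hp
  | mul j q ih =>
    intro p hp h h'
    rw [← mul_assoc] at h h' ⊢
    refine ih (p * s j) ?_ h h'
    obtain ⟨u, hu⟩ := (dvd_mul_right (p * s j) q).trans h
    -- `D * u` is a left multiple of `s j * u` and of `rev p`, hence of `x = p * s j * u`.
    have h₁ : ∃ c, D k * u = c * (s j * u) := by
      obtain ⟨y, hy⟩ := D_eq_mul_s j
      exact ⟨y, by rw [hy, mul_assoc]⟩
    have h₂ : ∃ c, D k * u = c * PosBraid.rev p := by
      obtain ⟨u', hu'⟩ := D_pow_mul u 1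
      have hp' : p ∣ D k ^ 1 := by simpa using hp
      obtain ⟨b, hb⟩ := right_dvd_of_dvd (rev_dvd_D_pow hp')
      refine ⟨u' * b, ?_⟩
      rw [mul_assoc, ← hb, ← hu', pow_one]
    obtain ⟨c, hc⟩ := hx.left_lcm (hu.trans (mul_assoc _ _ _))
      ((dvd_mul_right _ _).trans ((dvd_mul_right _ _).trans h')) h₁ h₂
    have : D k ^ 1 = c * (p * s j) := by
      rw [pow_one]
      refine mul_right_cancel' (a := u) ?_
      rw [hc, hu, mul_assoc c]
    simpa using dvd_of_right_dvd this

/-- Removing from a palindromic-free `x` a common left divisor of `x` and `rev x` does not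
decrease the number of simple factors, as long as this number is at least two. -/
lemma PF.dvd_D_pow {k m : ℕ} {x g y : M k} (hx : PF x) (hxy : x = g * y)
    (hg : g ∣ PosBraid.rev x) (hy : y ∣ D k ^ (m + 1)) : x ∣ D k ^ (m + 1) := by
  have hgD : g ∣ D k ^ (m + 1) :=
    (hx.simple_of_dvd ⟨y, hxy⟩ hg).trans (dvd_pow_self _ (Nat.succ_ne_zero m))
  obtain ⟨c, hc⟩ := hx.left_lcm hxy hg (right_dvd_of_dvd hy) (right_dvd_of_dvd (rev_dvd_D_pow hgD))
  exact dvd_of_right_dvd hc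

/-- The fraction `(rev x)⁻¹ * x` in lowest terms, with the number of simple factors of its
numerator and denominator. -/
theorem PF.reduced_fraction {k m : ℕ} {x : M k} (hx : PF x) (hm : ¬ x ∣ D k ^ (m + 1)) :
    ∃ g y z, x = g * y ∧ PosBraid.rev x = g * z ∧
      (∀ r, y ∣ z * D k ^ r → m + 2 ≤ r) ∧ (∀ r, z ∣ y * D k ^ r → m + 2 ≤ r) := by
  obtain ⟨g, ⟨y, hy⟩, ⟨z, hz⟩, hg⟩ := exists_gcd x (PosBraid.rev x)
  have hc : ∀ d, d ∣ y → d ∣ z → d = 1 := by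
    intro d hdy hdz
    have h := hg (g * d) (hy ▸ mul_dvd_mul_left g hdy) (hz ▸ mul_dvd_mul_left g hdz)
    obtain ⟨e, he⟩ := h
    have := congrArg len he
    simp only [len_mul] at this
    exact eq_one_of_len (by omega)
  refine ⟨g, y, z, hy, hz, fun r hr => ?_, fun r hr => ?_⟩
  · by_contra! hlt
    refine hm (hx.dvd_D_pow hy ⟨z, hz⟩ ?_)
    exact (dvd_D_pow_of_coprime (fun d h h' => hc d h' h) hr).trans (pow_dvd_pow _ (by omega))
  · by_contra! hlt
    have h : PosBraid.rev x ∣ D k ^ (m + 1) := by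
      refine hx.rev.dvd_D_pow hz ?_
        ((dvd_D_pow_of_coprime hc hr).trans (pow_dvd_pow _ (by omega)))
      rw [rev_rev]
      exact ⟨y, hy⟩
    exact hm (by simpa using rev_dvd_D_pow h)

/-! ### The embedding into the braid group -/

/-- The canonical homomorphism from the positive braid monoid to the braid group. -/
def toB (n : ℕ) : M (n - 1) →* B n :=
  lift (σ (n := n))
    (by
      have key : ∀ i j : Fin (n - 1), (i : ℕ) + 1 < j →
          (σ i * σ j : B n) = σ j * σ i := by
        intro i j h
        have := PresentedGroup.one_of_mem (rels := braidRels (n - 1)) (.inl ⟨i, j, h, rfl⟩)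
        simp only [map_mul, map_inv] at this
        have h' : (σ i * σ j * (σ i)⁻¹ * (σ j)⁻¹ : B n) = 1 := this
        rwa [mul_inv_eq_one, mul_inv_eq_iff_eq_mul] at h'
      rintro i j (h | h)
      · exact key i j h
      · exact (key j i h).symm)
    (by
      have key : ∀ i j : Fin (n - 1), (i : ℕ) + 1 = j →
          (σ i * σ j * σ i : B n) = σ j * σ i * σ j := by
        intro i j h
        have := PresentedGroup.one_of_mem (rels := braidRels (n - 1)) (.inr ⟨i, j, h, rfl⟩)
        simp only [map_mul, map_inv] at this
        have h' : (σ i * σ j * σ i * (σ j)⁻¹ * (σ i)⁻¹ * (σ j)⁻¹ : B n) = 1 := this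
        rwa [mul_inv_eq_one, mul_inv_eq_iff_eq_mul, mul_inv_eq_iff_eq_mul] at h'
      rintro i j (h | h)
      · exact key i j h
      · exact (key j i h).symm)

@[simp] lemma toB_s {n : ℕ} (i : Fin (n - 1)) : toB n (s i) = σ i := lift_s _ _ _ i

lemma left_ore {k : ℕ} (r a : M k) : ∃ v u, u * r = v * a := by
  obtain ⟨m, hm⟩ := dvd_D_pow a
  obtain ⟨b, hb⟩ := right_dvd_of_dvd hm
  obtain ⟨r', hr'⟩ := D_pow_mul r m
  exact ⟨r' * b, D k ^ m, by rw [hr', hb, mul_assoc]⟩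

/-- Any two positive braids have a common left multiple, so left fractions can be formed. -/
noncomputable instance oreTop (k : ℕ) : OreLocalization.OreSet (⊤ : Submonoid (M k)) where
  ore_right_cancel r₁ r₂ a h := ⟨1, by rw [mul_right_cancel' h]⟩
  oreNum r a := (left_ore r (a : M k)).choose
  oreDenom r a := ⟨(left_ore r (a : M k)).choose_spec.choose, trivial⟩
  ore_eq r a := (left_ore r (a : M k)).choose_spec.choose_spec

/-- The units of the monoid of left fractions of the positive braid monoid. -/
abbrev Frac (k : ℕ) := (OreLocalization (⊤ : Submonoid (M k)) (M k))ˣ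

/-- A positive braid as an invertible fraction. -/
noncomputable def fracUnit {k : ℕ} (a : M k) : Frac k :=
  OreLocalization.numeratorUnit (⟨a, trivial⟩ : (⊤ : Submonoid (M k)))

lemma fracUnit_val {k : ℕ} (a : M k) :
    ((fracUnit a : Frac k) : OreLocalization (⊤ : Submonoid (M k)) (M k)) =
      OreLocalization.numeratorHom a := rfl

lemma fracUnit_mul {k : ℕ} (a b : M k) : fracUnit (a * b) = fracUnit a * fracUnit b := by
  ext
  simp only [Units.val_mul, fracUnit_val, map_mul]

lemma fracUnit_inj {k : ℕ} {a b : M k} (h : fracUnit a = fracUnit b) : a = b := by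
  have := congrArg Units.val h
  rw [fracUnit_val, fracUnit_val, OreLocalization.numeratorHom_apply,
    OreLocalization.numeratorHom_apply, OreLocalization.oreDiv_eq_iff] at this
  obtain ⟨u, v, h₁, h₂⟩ := this
  simp only [Submonoid.coe_one, mul_one, Submonoid.smul_def, smul_eq_mul] at h₁ h₂
  rw [← h₂] at h₁
  exact (mul_left_cancel' h₁).symm

/-- The homomorphism from the braid group to the group of fractions. -/
noncomputable def ofB (n : ℕ) : B n →* Frac (n - 1) :=
  PresentedGroup.toGroup (f := fun i => fracUnit (s i)) (by
    rintro r (⟨i, j, h, rfl⟩ | ⟨i, j, h, rfl⟩)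
    · simp only [map_mul, map_inv, FreeGroup.lift_apply_of]
      rw [mul_inv_eq_one, mul_inv_eq_iff_eq_mul, ← fracUnit_mul, ← fracUnit_mul,
        s_comm (.inl h)]
    · simp only [map_mul, map_inv, FreeGroup.lift_apply_of]
      rw [mul_inv_eq_one, mul_inv_eq_iff_eq_mul, mul_inv_eq_iff_eq_mul]
      simp only [← fracUnit_mul]
      rw [s_braid (.inl h)])

lemma ofB_toB {n : ℕ} (a : M (n - 1)) : ofB n (toB n a) = fracUnit a := by
  induction a using M.ind with
  | one =>
    ext
    rw [fracUnit_val, map_one, map_one, Units.val_one, map_one]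
  | mul i a ih =>
    rw [map_mul, map_mul, ih, fracUnit_mul, toB_s]
    congr 1
    exact PresentedGroup.toGroup.of _

/-- The positive braid monoid embeds in the braid group. -/
theorem toB_injective (n : ℕ) : Function.Injective (toB n) := by
  intro a b h
  exact fracUnit_inj (by rw [← ofB_toB, ← ofB_toB, h])

lemma mem_P_iff {n : ℕ} {x : B n} : x ∈ P n ↔ ∃ a, toB n a = x := by
  constructor
  · intro h
    have hle : P n ≤ MonoidHom.mrange (toB n) := by
      refine Submonoid.closure_le.2 ?_
      rintro _ ⟨i, rfl⟩
      exact ⟨s i, toB_s i⟩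
    exact hle h
  · rintro ⟨a, rfl⟩
    induction a using M.ind with
    | one => rw [map_one]; exact one_mem _
    | mul i a ih =>
      rw [map_mul, toB_s]
      exact mul_mem (Submonoid.subset_closure ⟨i, rfl⟩) ih

lemma toB_mem {n : ℕ} (a : M (n - 1)) : toB n a ∈ P n := mem_P_iff.2 ⟨a, rfl⟩

lemma toB_t {n : ℕ} (j : ℕ) : toB n (t j) = σ' j := by
  unfold t σ'; split <;> simp

lemma toB_desc (n m : ℕ) :
    toB n (desc (n - 1) m) = ((List.range m).reverse.map (σ' (n := n))).prod := by
  induction m with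
  | zero => simp [desc]
  | succ m ih => simp [desc, List.range_succ, toB_t, ih]

lemma toB_D (n : ℕ) : toB n (D (n - 1)) = Δ n := by
  have key : ∀ m, toB n (dl (n - 1) m) = ((List.range m).map
      (fun k => (((List.range (k + 1)).reverse).map (σ' (n := n))).prod)).prod := by
    intro m
    induction m with
    | zero => simp [dl]
    | succ m ih => rw [dl, map_mul, ih, toB_desc, List.range_succ (n := m)]; simp [List.range_succ]
  exact key (n - 1)

lemma Δ_pow_mem (n m : ℕ) : Δ n ^ m ∈ P n :=
  pow_mem (toB_D n ▸ toB_mem _) m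

/-- Conjugation by powers of `Δ` preserves positivity. -/
lemma conj_mem {n : ℕ} {x : B n} (hx : x ∈ P n) (z : ℤ) : Δ n ^ (-z) * x * Δ n ^ z ∈ P n := by
  obtain ⟨a, rfl⟩ := mem_P_iff.1 hx
  rcases z.eq_nat_or_neg with ⟨m, rfl | rfl⟩
  · obtain ⟨b, hb⟩ := mul_D_pow a m
    have := congrArg (toB n) hb
    simp only [map_mul, map_pow, toB_D] at this
    rw [zpow_neg, zpow_natCast, mul_assoc, this, inv_mul_cancel_left]
    exact toB_mem b
  · obtain ⟨b, hb⟩ := D_pow_mul a m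
    have := congrArg (toB n) hb
    simp only [map_mul, map_pow, toB_D] at this
    rw [neg_neg, zpow_neg, zpow_natCast, this, mul_inv_cancel_right]
    exact toB_mem b

/-- Positivity of `y⁻¹ * z * Δ ^ r` in the group, for `r` an integer, as a divisibility in the
monoid; for negative `r` the power of `D` is trivial and the conclusion is just `y ∣ z`. -/
lemma dvd_of_mem {n : ℕ} {y z : M (n - 1)} {r : ℤ}
    (h : (toB n y)⁻¹ * toB n z * Δ n ^ r ∈ P n) : y ∣ z * D (n - 1) ^ r.toNat := by
  have hr : (r.toNat : ℤ) = r + (-r).toNat := by omega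
  obtain ⟨w, hw⟩ := mem_P_iff.1 (mul_mem h (Δ_pow_mem n (-r).toNat))
  refine ⟨w, toB_injective n ?_⟩
  rw [map_mul, map_mul, map_pow, toB_D, hw, ← zpow_natCast, hr, zpow_add, zpow_natCast]
  group

section Epsilon

variable {n : ℕ} {ε : B n ≃* B n}

/-- Since `ε` inverts generators without reversing words, it sends a positive braid to the inverse
of its reversal. -/
lemma eps_toB (hε : ∀ i : Fin (n - 1), ε (σ i) = (σ i)⁻¹) (a : M (n - 1)) :
    ε (toB n a) = (toB n (rev a))⁻¹ := by
  induction a using M.ind with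
  | one => simp
  | mul i a ih => simp [ih, hε]

lemma eps_Δ (hε : ∀ i : Fin (n - 1), ε (σ i) = (σ i)⁻¹) : ε (Δ n) = (Δ n)⁻¹ := by
  rw [← toB_D, eps_toB hε, rev_D]

lemma eps_inv_mem (hε : ∀ i : Fin (n - 1), ε (σ i) = (σ i)⁻¹) {x : B n} (hx : x ∈ P n) :
    (ε x)⁻¹ ∈ P n := by
  obtain ⟨a, rfl⟩ := mem_P_iff.1 hx
  rw [eps_toB hε, inv_inv]
  exact toB_mem _

theorem lenLE_double (hε : ∀ i : Fin (n - 1), ε (σ i) = (σ i)⁻¹) {x : B n} {m : ℕ}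
    (h : lenLE x m) : lenLE (ε x * x) (2 * m) := by
  obtain ⟨p, h₁, h₂⟩ := h
  have h₁' := eps_inv_mem hε h₁
  have h₂' := eps_inv_mem hε h₂
  simp only [map_mul, map_inv, map_zpow, eps_Δ hε, mul_inv_rev, inv_inv, inv_zpow', neg_neg]
    at h₁' h₂'
  refine ⟨-m, ?_, ?_⟩
  · have := mul_mem (conj_mem h₂' p) h₁
    convert this using 1
    rw [zpow_neg _ (p + m : ℤ), inv_inv, neg_neg, zpow_add]
    group
  · have := mul_mem h₂ (conj_mem h₁' (p + m))
    convert this using 1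
    have hpm : (-(m : ℤ) + ((2 * m : ℕ) : ℤ)) = -p + (p + m) := by push_cast; ring
    rw [hpm, zpow_add _ (-p) (p + m : ℤ)]
    group

theorem not_lenLE_double (hε : ∀ i : Fin (n - 1), ε (σ i) = (σ i)⁻¹) {x : B n} (hx : x ∈ P n)
    {m : ℕ} (hpf : PalFree x) (hm : 1 < m) (h : ¬ lenLE x (m - 1)) :
    ¬ lenLE (ε x * x) (2 * m - 1) := by
  obtain ⟨a, rfl⟩ := mem_P_iff.1 hx
  obtain ⟨q, rfl⟩ : ∃ q, m = q + 2 := ⟨m - 2, by omega⟩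
  have hPF : PF a := by
    rintro i y rfl
    refine hpf i ?_
    have : (σ i)⁻¹ * toB n (s i * y * s i) * (σ i)⁻¹ = toB n y := by simp [mul_assoc]
    rw [this]
    exact toB_mem y
  have hdvd : ¬ a ∣ D (n - 1) ^ (q + 1) := by
    rintro ⟨b, hb⟩
    refine h ⟨0, by simpa using hx, ?_⟩
    have := congrArg (toB n) hb
    rw [map_pow, toB_D, map_mul] at this
    have hq : (0 : ℤ) + ((q + 2 - 1 : ℕ) : ℤ) = ((q + 1 : ℕ) : ℤ) := by omega
    rw [hq, zpow_natCast, this, inv_mul_cancel_left]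
    exact toB_mem b
  obtain ⟨g, y, z, hy, hz, hyz, hzy⟩ := hPF.reduced_fraction hdvd
  have hfrac : ε (toB n a) * toB n a = (toB n z)⁻¹ * toB n y := by
    have hy' : toB n a = toB n g * toB n y := by rw [← map_mul, ← hy]
    rw [eps_toB hε, hz, map_mul, hy']
    group
  rw [hfrac]
  rintro ⟨p, h₁, h₂⟩
  -- The infimum is at most `-(q + 2)` and the supremum at least `q + 2`.
  have e₁ : q + 2 ≤ (-p).toNat := by
    refine hzy _ (dvd_of_mem ?_)
    have := conj_mem h₁ (-p)
    convert this using 1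
    group
  have e₂ : q + 2 ≤ (p + ((2 * (q + 2) - 1 : ℕ) : ℤ)).toNat := by
    refine hyz _ (dvd_of_mem ?_)
    convert h₂ using 1
    group
  omega

end Epsilon

end PosBraid

/-- if `ℓ(x) = m` then `ℓ(ε(x)x) ≤ 2m`, with equality when `x` is
palindromic-free and `m > 1`. -/
theorem pal_free_double_length (n : ℕ)
    (ε : B n ≃* B n) (hε : ∀ i : Fin (n - 1), ε (σ i) = (σ i)⁻¹)
    (x : B n) (hx : x ∈ P n) (m : ℕ) (hm : lenEQ x m) :
    lenLE (ε x * x) (2 * m) ∧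
    (PalFree x → 1 < m → ¬ lenLE (ε x * x) (2 * m - 1)) :=
  ⟨PosBraid.lenLE_double hε hm.1, fun hpf h1 =>
    PosBraid.not_lenLE_double hε hx hpf h1 (hm.2 h1.le)⟩
end

section
/- Let u, v ∈ B_n be positive, palindromic-free braids, and let a, b ∈ P be nontrivial positive braids with a ∧_R b = 1. If rev(a)·u·a = rev(b)·v·b, then a and b have the same canonical length: for every natural number m, ℓ(a) ≤ m if and only if ℓ(b) ≤ m. -/
namespace TwistedConj

/-! ### The braid monoid and Garside's key lemma -/

/-- Generators `i`, `j` of index difference at least two. -/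
def Far {m : ℕ} (i j : Fin m) : Prop := (i : ℕ) + 1 < j ∨ (j : ℕ) + 1 < i

/-- Generators `i`, `j` of consecutive indices. -/
def Adj {m : ℕ} (i j : Fin m) : Prop := (i : ℕ) + 1 = j ∨ (j : ℕ) + 1 = i

theorem Far.symm {m : ℕ} {i j : Fin m} (h : Far i j) : Far j i := Or.symm h

theorem Adj.symm {m : ℕ} {i j : Fin m} (h : Adj i j) : Adj j i := Or.symm h

theorem trichotomy {m : ℕ} (i j : Fin m) : i = j ∨ Far i j ∨ Adj i j := by
  unfold Far Adj
  rw [Fin.ext_iff]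
  omega

/-- The braid relations, as relations between positive words. -/
inductive MRel (m : ℕ) : FreeMonoid (Fin m) → FreeMonoid (Fin m) → Prop
  | comm (i j : Fin m) (h : Far i j) :
      MRel m (FreeMonoid.of i * FreeMonoid.of j) (FreeMonoid.of j * FreeMonoid.of i)
  | braid (i j : Fin m) (h : Adj i j) :
      MRel m (FreeMonoid.of i * FreeMonoid.of j * FreeMonoid.of i)
        (FreeMonoid.of j * FreeMonoid.of i * FreeMonoid.of j)

/-- The abstract monoid presented by the braid relations on `m` generators. It is shown below to
be isomorphic to the monoid of positive braids on `m + 1` strands. -/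
abbrev BM (m : ℕ) := PresentedMonoid (MRel m)

/-- The generators of the braid monoid. -/
def s {m : ℕ} (i : Fin m) : BM m := PresentedMonoid.of (MRel m) i

theorem s_comm {m : ℕ} {i j : Fin m} (h : Far i j) : s i * s j = s j * s i :=
  PresentedMonoid.mk_eq_mk_of_rel (MRel.comm i j h)

theorem s_braid {m : ℕ} {i j : Fin m} (h : Adj i j) :
    s i * s j * s i = s j * s i * s j :=
  PresentedMonoid.mk_eq_mk_of_rel (MRel.braid i j h)

/-- Word length, which the braid relations preserve. -/
def lenHom (m : ℕ) : BM m →* Multiplicative ℕ :=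
  PresentedMonoid.lift (fun _ => Multiplicative.ofAdd 1) (by
    intro a b h
    cases h <;> simp)

/-- Word length, with values in `ℕ`. -/
def len {m : ℕ} (x : BM m) : ℕ := (lenHom m x).toAdd

theorem len_mul {m : ℕ} (x y : BM m) : len (x * y) = len x + len y := by
  simp [len]

theorem len_one {m : ℕ} : len (1 : BM m) = 0 := by
  simp [len]

theorem len_s {m : ℕ} (i : Fin m) : len (s i) = 1 := rfl

theorem BM_induction {m : ℕ} {C : BM m → Prop} (h1 : C 1)
    (hs : ∀ i x, C x → C (s i * x)) (x : BM m) : C x := by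
  obtain ⟨w, rfl⟩ := PresentedMonoid.surjective_mk x
  induction w using FreeMonoid.recOn with
  | one => exact h1
  | of_mul i w ih => exact hs i _ ih

theorem eq_one_or_cons {m : ℕ} (x : BM m) : x = 1 ∨ ∃ i y, x = s i * y :=
  BM_induction (C := fun x => x = 1 ∨ ∃ i y, x = s i * y) (Or.inl rfl)
    (fun i y _ => Or.inr ⟨i, y, rfl⟩) x

theorem eq_one_of_mul_eq_one {m : ℕ} {x y : BM m} (h : x * y = 1) : x = 1 := by
  rcases eq_one_or_cons x with h1 | ⟨i, z, rfl⟩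
  · exact h1
  · have := congrArg len h
    rw [len_mul, len_mul, len_s, len_one] at this
    omega

/-- One application of a braid relation inside a positive word. -/
inductive Step (m : ℕ) : List (Fin m) → List (Fin m) → Prop
  | comm (i j : Fin m) (h : Far i j) (w) : Step m (i :: j :: w) (j :: i :: w)
  | braid (i j : Fin m) (h : Adj i j) (w) : Step m (i :: j :: i :: w) (j :: i :: j :: w)
  | cons (i : Fin m) (v w) (h : Step m v w) : Step m (i :: v) (i :: w)

theorem Step.symm {m : ℕ} {v w : List (Fin m)} (h : Step m v w) : Step m w v := by
  induction h with
  | comm i j h w => exact Step.comm j i h.symm w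
  | braid i j h w => exact Step.braid j i h.symm w
  | cons i v w _ ih => exact Step.cons i _ _ ih

theorem Step.append_left {m : ℕ} {v w : List (Fin m)} (h : Step m v w) (t : List (Fin m)) :
    Step m (t ++ v) (t ++ w) := by
  induction t with
  | nil => exact h
  | cons i t ih => exact Step.cons i _ _ ih

theorem Step.append_right {m : ℕ} {v w : List (Fin m)} (h : Step m v w) (t : List (Fin m)) :
    Step m (v ++ t) (w ++ t) := by
  induction h with
  | comm i j h w => exact Step.comm i j h _
  | braid i j h w => exact Step.braid i j h _
  | cons i v w _ ih => exact Step.cons i _ _ ih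

theorem chain_symm {m : ℕ} {v w : List (Fin m)} (h : Relation.ReflTransGen (Step m) v w) :
    Relation.ReflTransGen (Step m) w v := by
  induction h with
  | refl => exact Relation.ReflTransGen.refl
  | tail _ h ih => exact ih.head h.symm

/-- The congruence of being connected by a chain of elementary steps. -/
def stepCon (m : ℕ) : Con (FreeMonoid (Fin m)) where
  r v w := Relation.ReflTransGen (Step m) v.toList w.toList
  iseqv :=
    { refl := fun _ => Relation.ReflTransGen.refl
      symm := chain_symm
      trans := fun h h' => h.trans h' }
  mul' := by
    intro w x y z h h'
    exact (h.lift (fun t => t ++ y.toList) (fun _ _ hh => hh.append_right _)).trans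
      (h'.lift (fun t => x.toList ++ t) (fun _ _ hh => hh.append_left _))

/-- The class of a positive word in the braid monoid. -/
def mkL {m : ℕ} (w : List (Fin m)) : BM m := PresentedMonoid.mk (MRel m) (FreeMonoid.ofList w)

theorem mkL_cons {m : ℕ} (i : Fin m) (w : List (Fin m)) : mkL (i :: w) = s i * mkL w := rfl

theorem mkL_surj {m : ℕ} (x : BM m) : ∃ w, mkL w = x := by
  obtain ⟨w, rfl⟩ := PresentedMonoid.surjective_mk x
  exact ⟨w.toList, rfl⟩

theorem chain_of_mkL_eq {m : ℕ} {v w : List (Fin m)} (h : mkL v = mkL w) :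
    Relation.ReflTransGen (Step m) v w := by
  have h1 : conGen (MRel m) (FreeMonoid.ofList v) (FreeMonoid.ofList w) :=
    PresentedMonoid.mk_eq_mk_iff.1 h
  have h2 : conGen (MRel m) ≤ stepCon m := by
    rw [Con.conGen_le]
    intro a b hab
    cases hab with
    | comm i j h => exact Relation.ReflTransGen.single (Step.comm i j h [])
    | braid i j h => exact Relation.ReflTransGen.single (Step.braid i j h [])
  exact h2 h1

theorem mkL_eq_of_step {m : ℕ} {v w : List (Fin m)} (h : Step m v w) : mkL v = mkL w := by
  induction h with
  | comm i j h w => simp only [mkL_cons, ← mul_assoc, s_comm h]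
  | braid i j h w => simp only [mkL_cons, ← mul_assoc, s_braid h]
  | cons i v w _ ih => rw [mkL_cons, mkL_cons, ih]

/-- The conclusion of Garside's key lemma for an equality `s a * x = s b * y`: it comes from a
common right multiple of the least common multiple of `s a` and `s b`. -/
def Concl {m : ℕ} (a b : Fin m) (x y : BM m) : Prop :=
  (a = b ∧ x = y) ∨ (Far a b ∧ ∃ z, x = s b * z ∧ y = s a * z) ∨
    (Adj a b ∧ ∃ z, x = s b * (s a * z) ∧ y = s a * (s b * z))

theorem Concl.symm {m : ℕ} {a b : Fin m} {x y : BM m} (h : Concl a b x y) : Concl b a y x := by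
  rcases h with ⟨h, h'⟩ | ⟨h, z, h1, h2⟩ | ⟨h, z, h1, h2⟩
  · exact Or.inl ⟨h.symm, h'.symm⟩
  · exact Or.inr (Or.inl ⟨h.symm, z, h2, h1⟩)
  · exact Or.inr (Or.inr ⟨h.symm, z, h2, h1⟩)

theorem Concl.eq {m : ℕ} {a : Fin m} {x y : BM m} (h : Concl a a x y) : x = y := by
  rcases h with ⟨-, h⟩ | ⟨h, -⟩ | ⟨h, -⟩
  · exact h
  · unfold Far at h; omega
  · unfold Adj at h; omega

theorem Concl.far {m : ℕ} {a b : Fin m} {x y : BM m} (h : Concl a b x y) (hab : Far a b) :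
    ∃ z, x = s b * z ∧ y = s a * z := by
  rcases h with ⟨rfl, -⟩ | ⟨-, h⟩ | ⟨h, -⟩
  · unfold Far at hab; omega
  · exact h
  · unfold Far at hab; unfold Adj at h; omega

theorem Concl.adj {m : ℕ} {a b : Fin m} {x y : BM m} (h : Concl a b x y) (hab : Adj a b) :
    ∃ z, x = s b * (s a * z) ∧ y = s a * (s b * z) := by
  rcases h with ⟨rfl, -⟩ | ⟨h, -⟩ | ⟨-, h⟩
  · unfold Adj at hab; omega
  · unfold Far at h; unfold Adj at hab; omega
  · exact h

theorem s_comm' {m : ℕ} {i j : Fin m} (h : Far i j) (z : BM m) :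
    s i * (s j * z) = s j * (s i * z) := by
  rw [← mul_assoc, s_comm h, mul_assoc]

theorem s_braid' {m : ℕ} {i j : Fin m} (h : Adj i j) (z : BM m) :
    s i * (s j * (s i * z)) = s j * (s i * (s j * z)) := by
  simp only [← mul_assoc, s_braid h]

/-- Garside's key lemma, restricted to equalities `s a * x = s b * y` with `len x < L`. -/
def KeyBelow (m L : ℕ) : Prop :=
  ∀ (x y : BM m) (a b : Fin m), len x < L → s a * x = s b * y → Concl a b x y

/-- Transitivity through a third generator `c`, when `c` is far from `a` and adjacent to `b`. -/
theorem concl_far_adj {m L : ℕ} (ih : KeyBelow m L) {a b c : Fin m} {z z' : BM m}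
    (hz : len z < L) (hac : Far a c) (hcb : Adj c b) (h : s a * z = s b * (s c * z')) :
    Concl a b (s c * z) (s c * (s b * z')) := by
  rcases trichotomy a b with rfl | hab | hab
  · unfold Far at hac; unfold Adj at hcb; omega
  · obtain ⟨v, rfl, h2⟩ := (ih _ _ _ _ hz h).far hab
    have hl := congrArg len h2
    simp only [len_mul, len_s] at hl hz
    obtain ⟨w, rfl, rfl⟩ := (ih _ _ _ _ (by omega) h2).far hac.symm
    refine Or.inr (Or.inl ⟨hab, s c * (s b * w), ?_, ?_⟩)
    · rw [s_braid' hcb]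
    · rw [s_comm' hab.symm, s_comm' hac.symm]
  · obtain ⟨v, rfl, h2⟩ := (ih _ _ _ _ hz h).adj hab
    have hl := congrArg len h2
    simp only [len_mul, len_s] at hl hz
    obtain ⟨w, rfl, h3⟩ := (ih _ _ _ _ (by omega) h2).far hac.symm
    obtain ⟨t, rfl, rfl⟩ := (ih _ _ _ _ (by omega) h3).adj hcb.symm
    refine Or.inr (Or.inr ⟨hab, s c * (s b * (s a * t)), ?_, ?_⟩)
    · rw [s_comm' hac, s_braid' hcb, s_braid' hab.symm, s_comm' hac.symm]
    · rw [s_braid' hab.symm, s_comm' hac.symm, s_comm' hac (t), s_braid' hcb]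

/-- Transitivity through a third generator `c`: the conclusion of the key lemma for `(a, c)` and
`(c, b)` gives it for `(a, b)`, provided the key lemma is known for shorter words. -/
theorem concl_trans {m L : ℕ} (ih : KeyBelow m L) {a b c : Fin m} {x w y : BM m}
    (hx : len x ≤ L) (hw : len w ≤ L) (hy : len y ≤ L)
    (h1 : Concl a c x w) (h2 : Concl c b w y) : Concl a b x y := by
  rcases h1 with ⟨rfl, rfl⟩ | ⟨hac, z, rfl, rfl⟩ | ⟨hac, z, rfl, rfl⟩
  · exact h2
  · rcases h2 with ⟨rfl, rfl⟩ | ⟨hcb, z', h3, rfl⟩ | ⟨hcb, z', h3, rfl⟩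
    · exact Or.inr (Or.inl ⟨hac, z, rfl, rfl⟩)
    · simp only [len_mul, len_s] at hx
      rcases ih _ _ _ _ (by omega) h3 with ⟨rfl, rfl⟩ | ⟨hab, t, rfl, rfl⟩ | ⟨hab, t, rfl, rfl⟩
      · exact Or.inl ⟨rfl, rfl⟩
      · exact Or.inr (Or.inl ⟨hab, s c * t, s_comm' hcb _, s_comm' hac.symm _⟩)
      · refine Or.inr (Or.inr ⟨hab, s c * t, ?_, ?_⟩)
        · rw [s_comm' hcb, s_comm' hac.symm]
        · rw [s_comm' hac.symm, s_comm' hcb]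
    · simp only [len_mul, len_s] at hx
      exact concl_far_adj ih (by omega) hac hcb h3
  · rcases h2 with ⟨rfl, rfl⟩ | ⟨hcb, z', h3, rfl⟩ | ⟨hcb, z', h3, rfl⟩
    · exact Or.inr (Or.inr ⟨hac, z, rfl, rfl⟩)
    · simp only [len_mul, len_s] at hy
      exact (concl_far_adj ih (by omega) hcb.symm hac.symm h3.symm).symm
    · simp only [len_mul, len_s] at hx hy
      have h4 := ih _ _ _ _ (by rw [len_mul, len_s]; omega) h3
      rcases trichotomy a b with rfl | hab | hab
      · have h5 := (ih _ _ _ _ (by omega) h4.eq).eq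
        exact Or.inl ⟨rfl, by rw [h5]⟩
      · obtain ⟨v, h5, h6⟩ := h4.far hab
        obtain ⟨t, rfl, h7⟩ := (ih _ _ _ _ (by omega) h5).adj hcb
        obtain ⟨t', rfl, h8⟩ := (ih _ _ _ _ (by omega) h6).adj hac.symm
        rw [h7] at h8
        simp only [len_mul, len_s] at hx
        have h9 := (ih _ _ _ _ (by rw [len_mul, len_s]; omega) h8).eq
        obtain ⟨r, rfl, rfl⟩ := (ih _ _ _ _ (by omega) h9).far hab.symm
        refine Or.inr (Or.inl ⟨hab, s c * (s b * (s a * (s c * r))), ?_, ?_⟩)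
        · rw [s_comm' hab, s_braid' hac, s_braid' hcb]
        · rw [s_comm' hab.symm, s_braid' hcb.symm, s_braid' hac.symm, s_comm' hab]
      · unfold Adj at *; omega

/-- Garside's key lemma: an equality `s a * x = s b * y` in the braid monoid comes from a common
right multiple of the least common multiple of `s a` and `s b`. The outer induction is on word
length, the inner one on a chain of elementary steps from `s a * x` to `s b * y`. -/
theorem keyBelow (m L : ℕ) : KeyBelow m L := by
  induction L with
  | zero => intro x y a b h; omega
  | succ L ih =>
    intro x y a b hx h
    obtain ⟨X, rfl⟩ := mkL_surj x
    obtain ⟨Y, rfl⟩ := mkL_surj y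
    rw [← mkL_cons, ← mkL_cons] at h
    have hlen : len (mkL (a :: X)) ≤ L + 1 := by rw [mkL_cons, len_mul, len_s]; omega
    have hy : len (mkL (b :: Y)) ≤ L + 1 := h ▸ hlen
    rw [mkL_cons, len_mul, len_s] at hy
    have main : ∀ w, Relation.ReflTransGen (Step m) w (b :: Y) → len (mkL w) ≤ L + 1 →
        ∀ a X, w = a :: X → Concl a b (mkL X) (mkL Y) := by
      intro w hw
      induction hw using Relation.ReflTransGen.head_induction_on with
      | refl =>
        intro _ a X h
        injection h with h1 h2
        exact Or.inl ⟨h1.symm, by rw [h2]⟩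
      | head hstep _ ih2 =>
        intro hl a X hX
        subst hX
        have hst := mkL_eq_of_step hstep
        have hl' := hl
        rw [hst] at hl'
        rw [mkL_cons, len_mul, len_s] at hl
        have ih3 := ih2 hl'
        cases hstep with
        | comm _ j hj t =>
          rw [mkL_cons, len_mul, len_s] at hl'
          exact concl_trans (w := mkL (a :: t)) ih (by omega) (by omega) (by omega)
            (Or.inr (Or.inl ⟨hj, mkL t, rfl, rfl⟩)) (ih3 j _ rfl)
        | braid _ j hj t =>
          rw [mkL_cons, len_mul, len_s] at hl'
          exact concl_trans (w := mkL (a :: j :: t)) ih (by omega) (by omega) (by omega)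
            (Or.inr (Or.inr ⟨hj, mkL t, rfl, rfl⟩)) (ih3 j _ rfl)
        | cons _ _ t ht =>
          rw [mkL_eq_of_step ht]
          exact ih3 a t rfl
    exact main _ (chain_of_mkL_eq h) hlen a X rfl

theorem key {m : ℕ} {x y : BM m} {a b : Fin m} (h : s a * x = s b * y) : Concl a b x y :=
  keyBelow m (len x + 1) x y a b (Nat.lt_succ_self _) h

theorem mul_left_cancel_BM {m : ℕ} (x : BM m) : ∀ {y z : BM m}, x * y = x * z → y = z := by
  induction x using BM_induction with
  | h1 => intro y z h; simpa using h
  | hs i x ih =>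
    intro y z h
    rw [mul_assoc, mul_assoc] at h
    exact ih (key h).eq

/-! ### Greatest common left divisors in the braid monoid -/

/-- Two generators dividing `x` have a least common multiple, and it divides `x`. Here `c` is the
complement of `s a` in that least common multiple. -/
theorem exists_lcm {m : ℕ} (a b : Fin m) :
    ∃ c : BM m, s b ∣ s a * c ∧ ∀ x : BM m, s a ∣ x → s b ∣ x → s a * c ∣ x := by
  rcases trichotomy a b with rfl | hab | hab
  · exact ⟨1, ⟨1, rfl⟩, fun x h _ => by simpa using h⟩
  · refine ⟨s b, ⟨s a, s_comm hab⟩, ?_⟩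
    rintro x ⟨y, rfl⟩ ⟨z, hz⟩
    obtain ⟨t, rfl, -⟩ := (key hz).far hab
    exact ⟨t, by rw [mul_assoc]⟩
  · refine ⟨s b * s a, ⟨s a * s b, by simpa [mul_assoc] using s_braid hab⟩, ?_⟩
    rintro x ⟨y, rfl⟩ ⟨z, hz⟩
    obtain ⟨t, rfl, -⟩ := (key hz).adj hab
    exact ⟨t, by simp only [mul_assoc]⟩

theorem dvd_of_mul_dvd_mul_left_BM {m : ℕ} {x y z : BM m} (h : x * y ∣ x * z) : y ∣ z := by
  obtain ⟨t, ht⟩ := h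
  rw [mul_assoc] at ht
  exact ⟨t, mul_left_cancel_BM x ht⟩

/-- By induction on length: if `s a` divides both `x` and `y`, the gcd is `s a` times the gcd of the
quotients. A common divisor starting with another generator `s b` divides `s b` times the gcd of
the quotients by `s b`, which is itself a multiple of `s a` because it is a multiple of the least
common multiple of `s a` and `s b`. -/
theorem exists_gcd {m : ℕ} (x y : BM m) :
    ∃ g : BM m, g ∣ x ∧ g ∣ y ∧ ∀ h : BM m, h ∣ x → h ∣ y → h ∣ g := by
  induction hL : len x using Nat.strong_induction_on generalizing x y with
  | _ L ih =>
  by_cases hgen : ∃ a : Fin m, s a ∣ x ∧ s a ∣ y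
  · obtain ⟨a, ⟨x', rfl⟩, ⟨y', rfl⟩⟩ := hgen
    rw [len_mul, len_s] at hL
    obtain ⟨g, ⟨x1, hx1⟩, ⟨y1, hy1⟩, hg⟩ := ih (len x') (by omega) x' y' rfl
    refine ⟨s a * g, ⟨x1, by rw [hx1, mul_assoc]⟩, ⟨y1, by rw [hy1, mul_assoc]⟩, ?_⟩
    -- common divisors that are multiples of `s a` are controlled by the gcd of the quotients
    have hga : ∀ h, s a * h ∣ s a * x' → s a * h ∣ s a * y' → s a * h ∣ s a * g := by
      intro h h1 h2
      exact mul_dvd_mul_left _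
        (hg h (dvd_of_mul_dvd_mul_left_BM h1) (dvd_of_mul_dvd_mul_left_BM h2))
    intro h hx hy
    rcases eq_one_or_cons h with rfl | ⟨b, h', rfl⟩
    · exact one_dvd _
    · obtain ⟨xb, hxb⟩ : s b ∣ s a * x' := (Dvd.intro _ rfl).trans hx
      obtain ⟨yb, hyb⟩ : s b ∣ s a * y' := (Dvd.intro _ rfl).trans hy
      have hlb := congrArg len hxb
      rw [len_mul, len_mul, len_s, len_s] at hlb
      obtain ⟨gb, hgx, hgy, hgb⟩ := ih (len xb) (by omega) xb yb rfl
      obtain ⟨c, hc1, hc2⟩ := exists_lcm b a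
      have hcx : c ∣ xb := dvd_of_mul_dvd_mul_left_BM
        (hxb ▸ hc2 (s a * x') ⟨xb, hxb⟩ ⟨x', rfl⟩)
      have hcy : c ∣ yb := dvd_of_mul_dvd_mul_left_BM
        (hyb ▸ hc2 (s a * y') ⟨yb, hyb⟩ ⟨y', rfl⟩)
      obtain ⟨e, he⟩ : s a ∣ s b * gb := hc1.trans (mul_dvd_mul_left _ (hgb c hcx hcy))
      rw [hxb] at hx
      rw [hyb] at hy
      have h1 : s b * h' ∣ s b * gb := mul_dvd_mul_left _
        (hgb h' (dvd_of_mul_dvd_mul_left_BM hx) (dvd_of_mul_dvd_mul_left_BM hy))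
      rw [he] at h1
      refine h1.trans (hga e ?_ ?_)
      · rw [← he, hxb]; exact mul_dvd_mul_left _ hgx
      · rw [← he, hyb]; exact mul_dvd_mul_left _ hgy
  · refine ⟨1, one_dvd _, one_dvd _, fun h hx hy => ?_⟩
    rcases eq_one_or_cons h with rfl | ⟨b, h', rfl⟩
    · exact one_dvd _
    · exact absurd ⟨b, (Dvd.intro _ rfl).trans hx, (Dvd.intro _ rfl).trans hy⟩ hgen

/-- Greatest common left divisors commute with left multiplication; stated for the divisors `w`
of `z * x` and `z * y`. -/
theorem exists_gcd_mul {m : ℕ} (x y : BM m) :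
    ∃ g : BM m, g ∣ x ∧ g ∣ y ∧ ∀ z w : BM m, w ∣ z * x → w ∣ z * y → w ∣ z * g := by
  obtain ⟨g, hx, hy, hg⟩ := exists_gcd x y
  refine ⟨g, hx, hy, fun z w h1 h2 => ?_⟩
  obtain ⟨k, kx, ky, hk⟩ := exists_gcd (z * x) (z * y)
  obtain ⟨t, rfl⟩ := hk (z * g) (mul_dvd_mul_left _ hx) (mul_dvd_mul_left _ hy)
  rw [mul_assoc] at kx ky
  have h3 := hg (g * t) (dvd_of_mul_dvd_mul_left_BM kx) (dvd_of_mul_dvd_mul_left_BM ky)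
  exact (hk w h1 h2).trans (by rw [mul_assoc]; exact mul_dvd_mul_left _ h3)

end TwistedConj


namespace TwistedConj

/-! ### The half twist -/

/-- A sequence whose first `m` terms satisfy the braid relations in a monoid. Indexing by `ℕ`
instead of `Fin m` lets the half twist be studied by induction on `m`. -/
structure BraidSeq {N : Type*} [Monoid N] (m : ℕ) (t : ℕ → N) : Prop where
  comm : ∀ i j, i + 1 < j → j < m → t i * t j = t j * t i
  braid : ∀ i, i + 1 < m → t i * t (i + 1) * t i = t (i + 1) * t i * t (i + 1)

section HalfTwist

variable {N : Type*} [Monoid N]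

/-- The ascending product `t 0 * t 1 * ⋯ * t (k - 1)`. -/
def up (t : ℕ → N) : ℕ → N
  | 0 => 1
  | k + 1 => up t k * t k

/-- The descending product `t (k - 1) * ⋯ * t 1 * t 0`. -/
def dn (t : ℕ → N) : ℕ → N
  | 0 => 1
  | k + 1 => t k * dn t k

/-- The half twist on the first `k` generators, as the product of the `dn t j` for
`j = 1, …, k`. -/
def half (t : ℕ → N) : ℕ → N
  | 0 => 1
  | k + 1 => half t k * dn t (k + 1)

variable {m : ℕ} {t : ℕ → N}

theorem up_comm (h : BraidSeq m t) {k j : ℕ} (hk : k < j) (hj : j < m) :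
    up t k * t j = t j * up t k := by
  induction k with
  | zero => simp [up]
  | succ k ih =>
    rw [up, mul_assoc, h.comm k j hk hj, ← mul_assoc, ih (by omega), mul_assoc]

theorem dn_comm (h : BraidSeq m t) {k j : ℕ} (hk : k < j) (hj : j < m) :
    dn t k * t j = t j * dn t k := by
  induction k with
  | zero => simp [dn]
  | succ k ih =>
    rw [dn, mul_assoc, ih (by omega), ← mul_assoc, h.comm k j hk hj, mul_assoc]

theorem half_comm (h : BraidSeq m t) {k j : ℕ} (hk : k < j) (hj : j < m) :
    half t k * t j = t j * half t k := by
  induction k with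
  | zero => simp [half]
  | succ k ih =>
    rw [half, mul_assoc, dn_comm h hk hj, ← mul_assoc, ih (by omega), mul_assoc]

theorem up_shift (h : BraidSeq m t) {k j : ℕ} (hj : j + 1 < k) (hk : k ≤ m) :
    up t k * t j = t (j + 1) * up t k := by
  induction k with
  | zero => omega
  | succ k ih =>
    rcases Nat.lt_or_ge (j + 1) k with h1 | h1
    · rw [up, mul_assoc, ← h.comm j k h1 (by omega), ← mul_assoc, ih h1 (by omega), mul_assoc]
    · obtain rfl : k = j + 1 := by omega
      have e : up t (j + 1 + 1) * t j = up t j * (t j * t (j + 1) * t j) := by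
        simp only [up, mul_assoc]
      rw [e, h.braid j (by omega), ← mul_assoc, ← mul_assoc, up_comm h (by omega) (by omega)]
      simp only [up, mul_assoc]

theorem dn_shift (h : BraidSeq m t) {k j : ℕ} (hj : j + 1 < k) (hk : k ≤ m) :
    dn t k * t (j + 1) = t j * dn t k := by
  induction k with
  | zero => omega
  | succ k ih =>
    rcases Nat.lt_or_ge (j + 1) k with h1 | h1
    · rw [dn, mul_assoc, ih h1 (by omega), ← mul_assoc, ← h.comm j k h1 (by omega), mul_assoc]
    · obtain rfl : k = j + 1 := by omega
      have e : dn t (j + 1 + 1) * t (j + 1) = t (j + 1) * t j * (dn t j * t (j + 1)) := by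
        simp only [dn, mul_assoc]
      rw [e, dn_comm h (by omega) (by omega), ← mul_assoc, ← h.braid j (by omega)]
      simp only [dn, mul_assoc]

theorem half_succ (h : BraidSeq m t) {k : ℕ} (hk : k + 1 ≤ m) :
    half t (k + 1) = up t (k + 1) * half t k := by
  induction k with
  | zero => simp [half, up, dn]
  | succ k ih =>
    calc half t (k + 1 + 1) = half t (k + 1) * t (k + 1) * dn t (k + 1) := by
          rw [half, dn, mul_assoc]
      _ = up t (k + 1) * (half t k * t (k + 1)) * dn t (k + 1) := by
          rw [ih (by omega)]; simp only [mul_assoc]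
      _ = up t (k + 1) * t (k + 1) * (half t k * dn t (k + 1)) := by
          rw [half_comm h (by omega) (by omega)]; simp only [mul_assoc]
      _ = up t (k + 1 + 1) * half t (k + 1) := rfl

/-- Conjugation by the half twist reverses the order of the generators. -/
theorem half_conj (h : BraidSeq m t) {k i : ℕ} (hi : i < k) (hk : k ≤ m) :
    half t k * t i = t (k - 1 - i) * half t k := by
  induction k generalizing i with
  | zero => omega
  | succ k ih =>
    rcases Nat.lt_or_ge i k with h1 | h1
    · rw [half_succ h hk, mul_assoc, ih h1 (by omega), ← mul_assoc,
        up_shift h (by omega) hk, mul_assoc]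
      congr 2
      omega
    · obtain rfl : i = k := by omega
      rcases i with _ | i
      · simp [half, dn]
      · rw [half, mul_assoc, dn_shift h (by omega) hk, ← mul_assoc, ih (by omega) (by omega),
          mul_assoc]
        congr 2
        omega

theorem dvd_half (h : BraidSeq m t) {k i : ℕ} (hi : i < k) (hk : k ≤ m) : t i ∣ half t k := by
  induction k generalizing i with
  | zero => omega
  | succ k ih =>
    rcases Nat.lt_or_ge i k with h1 | h1
    · exact (ih h1 (by omega)).trans ⟨_, rfl⟩
    · obtain rfl : i = k := by omega
      rcases i with _ | i
      · exact ⟨1, by simp [half, dn]⟩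
      · obtain ⟨z, hz⟩ := ih (i := i) (by omega) (by omega)
        rw [half_succ h hk, hz, ← mul_assoc, up_shift h (by omega) hk, mul_assoc]
        exact ⟨_, rfl⟩

theorem map_dn {N' : Type*} [Monoid N'] (f : N →* N') (k : ℕ) :
    f (dn t k) = dn (fun j => f (t j)) k := by
  induction k with
  | zero => simp [dn]
  | succ k ih => simp [dn, ih]

theorem map_half {N' : Type*} [Monoid N'] (f : N →* N') (k : ℕ) :
    f (half t k) = half (fun j => f (t j)) k := by
  induction k with
  | zero => simp [half]
  | succ k ih => simp [half, ih, map_dn]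

end HalfTwist

/-- The generators of the braid monoid indexed by `ℕ`, with junk value `1` out of range. -/
def sN (m : ℕ) (j : ℕ) : BM m := if h : j < m then s ⟨j, h⟩ else 1

theorem sN_of_lt {m j : ℕ} (h : j < m) : sN m j = s ⟨j, h⟩ := dif_pos h

theorem sN_seq (m : ℕ) : BraidSeq m (sN m) where
  comm i j hij hj := by
    rw [sN_of_lt hj, sN_of_lt (show i < m by omega)]
    exact s_comm (Or.inl hij)
  braid i hi := by
    rw [sN_of_lt hi, sN_of_lt (show i < m by omega)]
    exact s_braid (Or.inl rfl)

/-- The half twist in the braid monoid. -/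
def hT (m : ℕ) : BM m := half (sN m) m

theorem hT_conj {m : ℕ} (i : Fin m) : hT m * s i = s i.rev * hT m := by
  have h := half_conj (sN_seq m) i.2 le_rfl
  rw [sN_of_lt i.2, sN_of_lt (show m - 1 - (i : ℕ) < m by omega)] at h
  have e : (⟨m - 1 - (i : ℕ), by omega⟩ : Fin m) = i.rev := by
    ext; simp only [Fin.val_rev]; omega
  rw [e] at h
  exact h

theorem s_dvd_hT {m : ℕ} (i : Fin m) : s i ∣ hT m := by
  have h := dvd_half (sN_seq m) i.2 le_rfl
  rwa [sN_of_lt i.2] at h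

/-- The full twist, a central element of the braid monoid. -/
def fT (m : ℕ) : BM m := hT m * hT m

theorem fT_central {m : ℕ} (x : BM m) : fT m * x = x * fT m := by
  induction x using BM_induction with
  | h1 => simp
  | hs i x ih =>
    have h : fT m * s i = s i * fT m := by
      rw [fT, mul_assoc, hT_conj, ← mul_assoc, hT_conj, Fin.rev_rev, mul_assoc]
    rw [← mul_assoc, h, mul_assoc, ih, mul_assoc]

theorem fT_pow_central {m : ℕ} (k : ℕ) (x : BM m) : fT m ^ k * x = x * fT m ^ k :=
  (Commute.pow_left (fT_central x : Commute _ _) k)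

theorem exists_dvd_fT_pow {m : ℕ} (x : BM m) : ∃ k, x ∣ fT m ^ k := by
  induction x using BM_induction with
  | h1 => exact ⟨0, one_dvd _⟩
  | hs i x ih =>
    obtain ⟨k, y, hy⟩ := ih
    obtain ⟨z, hz⟩ : s i ∣ fT m := (s_dvd_hT i).trans ⟨_, rfl⟩
    refine ⟨k + 1, y * z, ?_⟩
    calc fT m ^ (k + 1) = fT m ^ k * s i * z := by rw [pow_succ, mul_assoc, ← hz]
      _ = s i * x * (y * z) := by rw [fT_pow_central, hy]; simp only [mul_assoc]

theorem exists_mul_eq_fT_pow {m : ℕ} (x : BM m) : ∃ k y, x * y = fT m ^ k ∧ y * x = fT m ^ k := by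
  obtain ⟨k, y, hy⟩ := exists_dvd_fT_pow x
  refine ⟨k, y, hy.symm, mul_left_cancel_BM x ?_⟩
  rw [← mul_assoc, ← hy, fT_pow_central]

theorem mul_right_cancel_BM {m : ℕ} {x y z : BM m} (h : x * z = y * z) : x = y := by
  obtain ⟨k, w, hw, -⟩ := exists_mul_eq_fT_pow z
  apply mul_left_cancel_BM (fT m ^ k)
  rw [fT_pow_central, fT_pow_central, ← hw, ← mul_assoc, ← mul_assoc, h]

/-! ### The braid monoid embeds in the braid group -/

/-- The whole braid monoid is an Ore set, with denominators powers of the full twist. -/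
noncomputable instance oreTop (m : ℕ) : OreLocalization.OreSet (⊤ : Submonoid (BM m)) where
  ore_right_cancel r₁ r₂ s h := ⟨1, by rw [mul_right_cancel_BM h]⟩
  oreNum r s := r * (exists_mul_eq_fT_pow (s : BM m)).choose_spec.choose
  oreDenom _ s := ⟨fT m ^ (exists_mul_eq_fT_pow (s : BM m)).choose, trivial⟩
  ore_eq r s := by
    rw [mul_assoc, (exists_mul_eq_fT_pow (s : BM m)).choose_spec.choose_spec.2]
    exact fT_pow_central _ _

theorem numeratorHom_injective (m : ℕ) : Function.Injective
    (OreLocalization.numeratorHom : BM m →* OreLocalization (⊤ : Submonoid (BM m)) (BM m)) := by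
  intro x y h
  rw [OreLocalization.numeratorHom_apply, OreLocalization.numeratorHom_apply,
    OreLocalization.oreDiv_eq_iff] at h
  obtain ⟨u, v, h1, h2⟩ := h
  have h3 : (u : BM m) = v := by simpa using h2
  rw [← h3] at h1
  exact (mul_left_cancel_BM (u : BM m) h1).symm

theorem σ_comm {n : ℕ} {i j : Fin (n - 1)} (h : Far i j) : (σ i : B n) * σ j = σ j * σ i := by
  have main : ∀ i j : Fin (n - 1), (i : ℕ) + 1 < j → (σ i : B n) * σ j = σ j * σ i := by
    intro i j hij
    have h := PresentedGroup.one_of_mem (rels := braidRels (n - 1)) (Or.inl ⟨i, j, hij, rfl⟩)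
    have h' : (σ i : B n) * σ j * (σ i)⁻¹ * (σ j)⁻¹ = 1 := h
    rw [mul_inv_eq_one, mul_inv_eq_iff_eq_mul] at h'
    exact h'
  rcases h with h | h
  · exact main i j h
  · exact (main j i h).symm

theorem σ_braid {n : ℕ} {i j : Fin (n - 1)} (h : Adj i j) :
    (σ i : B n) * σ j * σ i = σ j * σ i * σ j := by
  have main : ∀ i j : Fin (n - 1), (i : ℕ) + 1 = j →
      (σ i : B n) * σ j * σ i = σ j * σ i * σ j := by
    intro i j hij
    have h := PresentedGroup.one_of_mem (rels := braidRels (n - 1)) (Or.inr ⟨i, j, hij, rfl⟩)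
    have h' : (σ i : B n) * σ j * σ i * (σ j)⁻¹ * (σ i)⁻¹ * (σ j)⁻¹ = 1 := h
    rw [mul_inv_eq_one, mul_inv_eq_iff_eq_mul, mul_inv_eq_iff_eq_mul] at h'
    exact h'
  rcases h with h | h
  · exact main i j h
  · exact (main j i h).symm

/-- The canonical map from the braid monoid to the braid group. -/
def ι (n : ℕ) : BM (n - 1) →* B n :=
  PresentedMonoid.lift σ (by
    intro a b h
    cases h with
    | comm i j h => simpa using σ_comm h
    | braid i j h => simpa using σ_braid h)

theorem ι_s {n : ℕ} (i : Fin (n - 1)) : ι n (s i) = σ i := rfl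

/-- The braid monoid embeds in the braid group, because it embeds in its Ore localization, which is
a group containing elements that satisfy the braid relations. -/
theorem ι_injective (n : ℕ) : Function.Injective (ι n) := by
  set f : BM (n - 1) →* (OreLocalization (⊤ : Submonoid (BM (n - 1))) (BM (n - 1)))ˣ :=
    { toFun := fun x => OreLocalization.numeratorUnit (⟨x, trivial⟩ : (⊤ : Submonoid _))
      map_one' := by ext; exact map_one OreLocalization.numeratorHom
      map_mul' := fun x y => by ext; exact map_mul OreLocalization.numeratorHom x y } with hf
  have hrel : ∀ r ∈ braidRels (n - 1), FreeGroup.lift (fun i => f (s i)) r = 1 := by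
    rintro r (⟨i, j, hij, rfl⟩ | ⟨i, j, hij, rfl⟩)
    · simp only [map_mul, map_inv, FreeGroup.lift_apply_of]
      rw [mul_inv_eq_one, mul_inv_eq_iff_eq_mul, ← map_mul, ← map_mul, s_comm (Or.inl hij)]
    · simp only [map_mul, map_inv, FreeGroup.lift_apply_of]
      rw [mul_inv_eq_one, mul_inv_eq_iff_eq_mul, mul_inv_eq_iff_eq_mul, ← map_mul, ← map_mul,
        ← map_mul, ← map_mul, s_braid (Or.inl hij)]
  have hcomp : ∀ x, PresentedGroup.toGroup hrel (ι n x) = f x := by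
    intro x
    induction x using BM_induction with
    | h1 => simp
    | hs i x ih =>
      have h : PresentedGroup.toGroup hrel (σ i) = f (s i) := PresentedGroup.toGroup.of hrel
      rw [map_mul, map_mul, map_mul, ih, ι_s, h]
  intro x y hxy
  have h1 : f x = f y := by rw [← hcomp, ← hcomp, hxy]
  exact numeratorHom_injective (n - 1) (congrArg Units.val h1)

theorem ι_mem {n : ℕ} (x : BM (n - 1)) : ι n x ∈ P n := by
  induction x using BM_induction with
  | h1 => rw [map_one]; exact one_mem _
  | hs i x ih => rw [map_mul]; exact mul_mem (Submonoid.subset_closure ⟨i, rfl⟩) ih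

theorem mem_P_iff {n : ℕ} {x : B n} : x ∈ P n ↔ ∃ y, ι n y = x := by
  refine ⟨fun h => ?_, ?_⟩
  · have : P n ≤ MonoidHom.mrange (ι n) := by
      rw [P, Submonoid.closure_le]
      rintro _ ⟨i, rfl⟩
      exact ⟨s i, rfl⟩
    exact this h
  · rintro ⟨y, rfl⟩
    exact ι_mem y

/-! ### Garside structure of the braid group -/

theorem ι_sN {n : ℕ} (j : ℕ) : ι n (sN (n - 1) j) = σ' j := by
  unfold sN σ'
  split_ifs
  · rfl
  · exact map_one _

theorem Δ_eq_half (n : ℕ) : Δ n = half (σ' (n := n)) (n - 1) := by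
  have hdn : ∀ k, (((List.range k).reverse).map (σ' (n := n))).prod = dn σ' k := by
    intro k
    induction k with
    | zero => rfl
    | succ k ih => simp [List.range_succ, dn, ← ih]
  have hhalf : ∀ k, ((List.range k).map
      (fun k => (((List.range (k + 1)).reverse).map (σ' (n := n))).prod)).prod = half σ' k := by
    intro k
    induction k with
    | zero => rfl
    | succ k ih =>
      rw [List.range_succ, List.map_append, List.prod_append, ih, List.map_singleton,
        List.prod_singleton, hdn]
      rfl
  exact hhalf _

theorem ι_hT (n : ℕ) : ι n (hT (n - 1)) = Δ n := by
  rw [hT, map_half, Δ_eq_half]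
  simp only [ι_sN]

theorem Δ_mem (n : ℕ) : Δ n ∈ P n := ι_hT n ▸ ι_mem _

theorem Δ_conj_σ {n : ℕ} (i : Fin (n - 1)) : Δ n * σ i = σ i.rev * Δ n := by
  rw [← ι_hT, ← ι_s, ← map_mul, hT_conj, map_mul, ι_s]

theorem Δ_conj_mem {n : ℕ} {x : B n} (hx : x ∈ P n) : Δ n * x * (Δ n)⁻¹ ∈ P n := by
  induction hx using Submonoid.closure_induction with
  | mem x h =>
    obtain ⟨i, rfl⟩ := h
    rw [Δ_conj_σ, mul_inv_cancel_right]
    exact Submonoid.subset_closure ⟨_, rfl⟩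
  | one => simp
  | mul x y _ _ h1 h2 =>
    have : Δ n * (x * y) * (Δ n)⁻¹ = (Δ n * x * (Δ n)⁻¹) * (Δ n * y * (Δ n)⁻¹) := by group
    rw [this]
    exact mul_mem h1 h2

theorem Δ_inv_conj_mem {n : ℕ} {x : B n} (hx : x ∈ P n) : (Δ n)⁻¹ * x * Δ n ∈ P n := by
  induction hx using Submonoid.closure_induction with
  | mem x h =>
    obtain ⟨i, rfl⟩ := h
    have := Δ_conj_σ i.rev
    rw [Fin.rev_rev] at this
    rw [mul_assoc, ← this, inv_mul_cancel_left]
    exact Submonoid.subset_closure ⟨_, rfl⟩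
  | one => simp
  | mul x y _ _ h1 h2 =>
    have : (Δ n)⁻¹ * (x * y) * Δ n = ((Δ n)⁻¹ * x * Δ n) * ((Δ n)⁻¹ * y * Δ n) := by group
    rw [this]
    exact mul_mem h1 h2

theorem ι_fT (n : ℕ) : ι n (fT (n - 1)) = Δ n ^ 2 := by
  rw [fT, map_mul, ι_hT, pow_two]

theorem Δ_sq_central {n : ℕ} (x : B n) : Δ n ^ 2 * x = x * Δ n ^ 2 := by
  have h := PresentedGroup.generated_by (braidRels (n - 1)) (Subgroup.centralizer {Δ n ^ 2})
    (fun i => by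
      rw [Subgroup.mem_centralizer_singleton_iff, ← ι_fT]
      change ι n (s i) * _ = _ * ι n (s i)
      rw [← map_mul, ← map_mul, fT_central]) x
  rw [Subgroup.mem_centralizer_singleton_iff] at h
  exact h.symm

theorem exists_Δ_pow {n : ℕ} {x : B n} (hx : x ∈ P n) : ∃ k : ℕ, x⁻¹ * Δ n ^ k ∈ P n := by
  obtain ⟨y, rfl⟩ := mem_P_iff.1 hx
  obtain ⟨k, z, hz⟩ := exists_dvd_fT_pow y
  refine ⟨2 * k, ?_⟩
  rw [pow_mul, ← ι_fT, ← map_pow, hz, map_mul, inv_mul_cancel_left]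
  exact ι_mem z

/-- Every braid becomes positive after multiplication by a power of the full twist. -/
theorem exists_frac {n : ℕ} (x : B n) : ∃ (k : ℕ) (z : BM (n - 1)), (Δ n ^ 2) ^ k * x = ι n z := by
  have hc : ∀ (k : ℕ) (x : B n), (Δ n ^ 2) ^ k * x = x * (Δ n ^ 2) ^ k := fun k x =>
    Commute.pow_left (Δ_sq_central x : Commute _ _) k
  let H : Subgroup (B n) :=
    { carrier := {x | ∃ (k : ℕ) (z : BM (n - 1)), (Δ n ^ 2) ^ k * x = ι n z}
      one_mem' := ⟨0, 1, by simp⟩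
      mul_mem' := by
        rintro x y ⟨k, z, hz⟩ ⟨l, w, hw⟩
        refine ⟨k + l, z * w, ?_⟩
        rw [map_mul, ← hz, ← hw, pow_add, mul_assoc, ← mul_assoc _ x y, hc l x]
        simp only [mul_assoc]
      inv_mem' := by
        rintro x ⟨k, z, hz⟩
        obtain ⟨l, w, hw, -⟩ := exists_mul_eq_fT_pow z
        refine ⟨l, w * fT _ ^ k, ?_⟩
        have h1 : (Δ n ^ 2) ^ l = (Δ n ^ 2) ^ k * x * ι n w := by
          rw [hz, ← map_mul, hw, map_pow, ι_fT]
        rw [map_mul, map_pow, ι_fT, mul_inv_eq_iff_eq_mul]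
        refine mul_right_cancel (b := ι n w) ?_
        rw [hc, mul_assoc (ι n w), mul_assoc (ι n w), ← h1] }
  exact PresentedGroup.generated_by (braidRels (n - 1)) H
    (fun i => ⟨0, s i, by simp [ι_s]; rfl⟩) x

/-- The lattice property: positive `c`, `r` have a common prefix `g` such that any braid `z`
that becomes positive after right multiplication by `c` and by `r` does so by `g`. Taking for `z`
the inverses of common prefixes shows that `g` is the greatest common prefix. -/
theorem exists_gcd_P {n : ℕ} {c r : B n} (hc : c ∈ P n) (hr : r ∈ P n) :
    ∃ g ∈ P n, g⁻¹ * c ∈ P n ∧ g⁻¹ * r ∈ P n ∧ ∀ z : B n, z * c ∈ P n → z * r ∈ P n → z * g ∈ P n := by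
  obtain ⟨c, rfl⟩ := mem_P_iff.1 hc
  obtain ⟨r, rfl⟩ := mem_P_iff.1 hr
  obtain ⟨g, ⟨c', hc'⟩, ⟨r', hr'⟩, hg⟩ := exists_gcd_mul c r
  refine ⟨ι n g, ι_mem g, ?_, ?_, ?_⟩
  · rw [hc', map_mul, inv_mul_cancel_left]; exact ι_mem _
  · rw [hr', map_mul, inv_mul_cancel_left]; exact ι_mem _
  intro z h1 h2
  obtain ⟨k, w, hw⟩ := exists_frac z
  rw [← ι_fT, ← map_pow] at hw
  have hdvd : ∀ x, z * ι n x ∈ P n ↔ fT (n - 1) ^ k ∣ w * x := by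
    intro x
    rw [mem_P_iff]
    refine exists_congr fun y => ?_
    rw [← (ι_injective n).eq_iff, map_mul, map_mul, ← hw, mul_assoc, mul_left_cancel_iff, eq_comm]
  rw [hdvd] at *
  exact hg w _ h1 h2

theorem eq_one_of_inv_mem {n : ℕ} {x : B n} (h : x ∈ P n) (h' : x⁻¹ ∈ P n) : x = 1 := by
  obtain ⟨y, rfl⟩ := mem_P_iff.1 h
  obtain ⟨z, hz⟩ := mem_P_iff.1 h'
  have : y * z = 1 := ι_injective n (by rw [map_mul, hz, map_one, mul_inv_cancel])
  rw [eq_one_of_mul_eq_one this, map_one]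

theorem σ_ne_one {n : ℕ} (i : Fin (n - 1)) : (σ i : B n) ≠ 1 := by
  intro h
  have h1 : s i = 1 := ι_injective n (by rw [ι_s, h, map_one])
  have := congrArg len h1
  rw [len_s, len_one] at this
  omega

end TwistedConj


/-! ### Powers of the half twist -/

namespace TwistedConj

variable {n : ℕ}

theorem Δ_pow_mem (k : ℕ) : Δ n ^ k ∈ P n := pow_mem (Δ_mem n) k

theorem Δ_pow_conj_mem {x : B n} (hx : x ∈ P n) (k : ℕ) : Δ n ^ k * x * (Δ n ^ k)⁻¹ ∈ P n := by
  induction k with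
  | zero => simpa using hx
  | succ k ih =>
    have e : Δ n ^ (k + 1) * x * (Δ n ^ (k + 1))⁻¹ =
        Δ n * (Δ n ^ k * x * (Δ n ^ k)⁻¹) * (Δ n)⁻¹ := by
      rw [pow_succ']; group
    rw [e]
    exact Δ_conj_mem ih

theorem Δ_pow_inv_conj_mem {x : B n} (hx : x ∈ P n) (k : ℕ) :
    (Δ n ^ k)⁻¹ * x * Δ n ^ k ∈ P n := by
  induction k with
  | zero => simpa using hx
  | succ k ih =>
    have e : (Δ n ^ (k + 1))⁻¹ * x * Δ n ^ (k + 1) =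
        (Δ n)⁻¹ * ((Δ n ^ k)⁻¹ * x * Δ n ^ k) * Δ n := by
      rw [pow_succ]; group
    rw [e]
    exact Δ_inv_conj_mem ih

/-- Conjugation by `Δ` preserves `P`, so a power of `Δ` may be moved from one side of a braid to
the other without affecting positivity. -/
theorem Δ_pow_swap {x : B n} {k : ℕ} : Δ n ^ k * x ∈ P n ↔ x * Δ n ^ k ∈ P n := by
  constructor
  · intro h
    have h1 := Δ_pow_inv_conj_mem h k
    rwa [inv_mul_cancel_left] at h1
  · intro h
    have h1 := Δ_pow_conj_mem h k
    rwa [← mul_assoc, mul_inv_cancel_right] at h1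

theorem Δ_mul_σ_inv_mem (i : Fin (n - 1)) : Δ n * (σ i)⁻¹ ∈ P n := by
  obtain ⟨y, hy⟩ := s_dvd_hT i.rev
  have e : Δ n * (σ i)⁻¹ = ι n y := by
    rw [mul_inv_eq_iff_eq_mul]
    refine mul_left_cancel (a := σ i.rev) ?_
    rw [← Δ_conj_σ, ← mul_assoc, ← ι_s i.rev, ← map_mul, ← hy, ι_hT]
  rw [e]
  exact ι_mem y

theorem exists_last {x : B n} (hx : x ∈ P n) (h1 : x ≠ 1) : ∃ i, x * (σ i)⁻¹ ∈ P n := by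
  have key : x = 1 ∨ ∃ i, x * (σ i)⁻¹ ∈ P n := by
    clear h1
    induction hx using Submonoid.closure_induction with
    | mem x h =>
      obtain ⟨i, rfl⟩ := h
      exact Or.inr ⟨i, by simp⟩
    | one => exact Or.inl rfl
    | mul x y hx _ ihx ihy =>
      rcases ihy with rfl | ⟨i, hi⟩
      · simpa using ihx
      · exact Or.inr ⟨i, by rw [mul_assoc]; exact mul_mem hx hi⟩
  exact key.resolve_left h1

/-! ### The reversal anti-automorphism -/

/-- `rev` is the reversal: the anti-automorphism of the braid group fixing the generators. -/
structure IsRev (rev : B n → B n) : Prop where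
  mul : ∀ x y, rev (x * y) = rev y * rev x
  gen : ∀ i, rev (σ i) = σ i

namespace IsRev

variable {rev : B n → B n}

theorem one (h : IsRev rev) : rev 1 = 1 := by
  have h1 := h.mul 1 1
  rw [mul_one] at h1
  exact left_eq_mul.1 h1

theorem inv (h : IsRev rev) (x : B n) : rev x⁻¹ = (rev x)⁻¹ := by
  rw [eq_inv_iff_mul_eq_one, ← h.mul, mul_inv_cancel, h.one]

theorem rev_rev (h : IsRev rev) (x : B n) : rev (rev x) = x := by
  let H : Subgroup (B n) :=
    { carrier := {x | rev (rev x) = x}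
      one_mem' := by simp [h.one]
      mul_mem' := fun {x y} (hx : _ = _) (hy : _ = _) => by
        change rev (rev (x * y)) = x * y
        rw [h.mul, h.mul, hx, hy]
      inv_mem' := fun {x} (hx : _ = _) => by
        change rev (rev x⁻¹) = x⁻¹
        rw [h.inv, h.inv, hx] }
  exact PresentedGroup.generated_by (braidRels (n - 1)) H
    (fun i => show rev (rev (σ i)) = σ i by rw [h.gen, h.gen]) x

theorem mem (h : IsRev rev) {x : B n} (hx : x ∈ P n) : rev x ∈ P n := by
  induction hx using Submonoid.closure_induction with
  | mem x hx =>
    obtain ⟨i, rfl⟩ := hx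
    rw [h.gen]
    exact Submonoid.subset_closure ⟨i, rfl⟩
  | one => rw [h.one]; exact one_mem _
  | mul x y _ _ hx hy => rw [h.mul]; exact mul_mem hy hx

theorem mem_iff (h : IsRev rev) {x : B n} : rev x ∈ P n ↔ x ∈ P n :=
  ⟨fun hx => h.rev_rev x ▸ h.mem hx, h.mem⟩

theorem σ'_eq (h : IsRev rev) (j : ℕ) : rev (σ' j) = σ' j := by
  unfold σ'
  split_ifs
  · exact h.gen _
  · exact h.one

/-- The half twist is a palindrome: reversing its defining product yields the other standard
factorization, with ascending instead of descending runs. -/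
theorem Δ_eq (h : IsRev rev) : rev (Δ n) = Δ n := by
  have hseq : BraidSeq (n - 1) (σ' (n := n)) :=
    { comm := fun i j hij hj => by
        rw [← ι_sN, ← ι_sN, ← map_mul, (sN_seq (n - 1)).comm i j hij hj, map_mul]
      braid := fun i hi => by
        rw [← ι_sN, ← ι_sN, ← map_mul, ← map_mul, (sN_seq (n - 1)).braid i hi, map_mul, map_mul] }
  have hdn : ∀ k, rev (dn σ' k) = up σ' k := by
    intro k
    induction k with
    | zero => exact h.one
    | succ k ih => rw [dn, up, h.mul, ih, h.σ'_eq]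
  have hhalf : ∀ k, k ≤ n - 1 → rev (half σ' k) = half σ' k := by
    intro k
    induction k with
    | zero => exact fun _ => h.one
    | succ k ih =>
      intro hk
      change rev (half σ' k * dn σ' (k + 1)) = _
      rw [h.mul, hdn, ih (by omega), half_succ hseq hk]
  rw [Δ_eq_half]
  exact hhalf _ le_rfl

theorem Δ_pow_eq (h : IsRev rev) (k : ℕ) : rev (Δ n ^ k) = Δ n ^ k := by
  induction k with
  | zero => simpa using h.one
  | succ k ih => rw [pow_succ, h.mul, ih, h.Δ_eq, ← pow_succ', pow_succ]

end IsRev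

/-! ### Coprime positive braids -/

/-- The only common positive prefix of `x` and `y` is trivial. -/
def CoprimeL (x y : B n) : Prop :=
  ∀ h ∈ P n, h⁻¹ * x ∈ P n → h⁻¹ * y ∈ P n → h = 1

/-- If `z` times each of two left coprime braids is positive, then `z` is positive, since the gcd
of `z x` and `z y` is `z` times that of `x` and `y`. -/
theorem CoprimeL.mem {x y z : B n} (h : CoprimeL x y) (hx : x ∈ P n) (hy : y ∈ P n)
    (hzx : z * x ∈ P n) (hzy : z * y ∈ P n) : z ∈ P n := by
  obtain ⟨g, hg, h1, h2, h3⟩ := exists_gcd_P hx hy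
  simpa [h g hg h1 h2] using h3 z hzx hzy

/-- The mirror image of `CoprimeL.mem`, for braids without common suffix. -/
theorem mem_of_coprimeR {rev : B n → B n} (h : IsRev rev) {x y z : B n}
    (hxy : ∀ c ∈ P n, x * c⁻¹ ∈ P n → y * c⁻¹ ∈ P n → c = 1) (hx : x ∈ P n) (hy : y ∈ P n)
    (hzx : x * z ∈ P n) (hzy : y * z ∈ P n) : z ∈ P n := by
  rw [← h.mem_iff]
  refine CoprimeL.mem (x := rev x) (y := rev y) ?_ (h.mem hx) (h.mem hy) ?_ ?_
  · intro g hg h1 h2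
    have h3 : rev g = 1 := by
      refine hxy _ (h.mem hg) ?_ ?_
      · rwa [← h.mem_iff, h.mul, h.inv, h.rev_rev]
      · rwa [← h.mem_iff, h.mul, h.inv, h.rev_rev]
    rw [← h.rev_rev g, h3, h.one]
  · rw [← h.mul]; exact h.mem hzx
  · rw [← h.mul]; exact h.mem hzy

/-- Removing the greatest common prefix leaves coprime braids. -/
theorem coprimeL_of_gcd {x y g : B n} (hg : ∀ z : B n, z * x ∈ P n → z * y ∈ P n → z * g ∈ P n) :
    CoprimeL (g⁻¹ * x) (g⁻¹ * y) := by
  intro h hh h1 h2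
  refine eq_one_of_inv_mem hh ?_
  have h3 := hg (h⁻¹ * g⁻¹) (by rwa [mul_assoc]) (by rwa [mul_assoc])
  rwa [inv_mul_cancel_right] at h3

/-! ### Twisted conjugators and prefixes of powers of the half twist -/

/-- If `rev(c)⁻¹ u c⁻¹ = rev(d)⁻¹ v d⁻¹` with `c`, `d` left coprime and `d` a prefix of `Δ ^ p`,
then `u` ends in the part `cp⁻¹ c` of `c` that remains after removing its greatest common prefix
`cp` with `Δ ^ p`. -/
theorem suffix_step {rev : B n → B n} (h : IsRev rev) {u v c d cp : B n} {p : ℕ}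
    (hu : u ∈ P n) (hv : v ∈ P n) (hc : c ∈ P n) (hd : d ∈ P n) (hcd : CoprimeL c d)
    (hdp : d⁻¹ * Δ n ^ p ∈ P n) (hrel : (rev c)⁻¹ * u * c⁻¹ = (rev d)⁻¹ * v * d⁻¹)
    (hcp : ∀ z : B n, z * c ∈ P n → z * Δ n ^ p ∈ P n → z * cp ∈ P n) :
    u * c⁻¹ * cp ∈ P n := by
  refine hcp _ (by simpa using hu) (Δ_pow_swap.1 ?_)
  refine hcd.mem hc hd ?_ ?_
  · have e : Δ n ^ p * (u * c⁻¹) * c = Δ n ^ p * u := by group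
    rw [e]
    exact mul_mem (Δ_pow_mem p) hu
  · have e1 : u * c⁻¹ * d = rev c * (rev d)⁻¹ * v := by
      calc u * c⁻¹ * d = rev c * ((rev c)⁻¹ * u * c⁻¹) * d := by group
        _ = _ := by rw [hrel]; group
    have e : Δ n ^ p * (u * c⁻¹) * d =
        (Δ n ^ p * rev c * (Δ n ^ p)⁻¹) * rev (d⁻¹ * Δ n ^ p) * v := by
      rw [mul_assoc, e1, h.mul, h.inv, h.Δ_pow_eq]; group
    rw [e]
    exact mul_mem (mul_mem (Δ_pow_conj_mem (h.mem hc) p) (h.mem hdp)) hv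

/-- Left form of the main step: palindromic-freeness of `u` forces `c` to be a prefix of `Δ ^ p`
as soon as `d` is. -/
theorem dvd_Δ_pow_of_twisted {rev : B n → B n} (h : IsRev rev) {u v c d : B n} {p : ℕ}
    (hu : u ∈ P n) (hpf : PalFree u) (hv : v ∈ P n) (hc : c ∈ P n) (hd : d ∈ P n)
    (hcd : CoprimeL c d) (hdp : d⁻¹ * Δ n ^ p ∈ P n)
    (hrel : (rev c)⁻¹ * u * c⁻¹ = (rev d)⁻¹ * v * d⁻¹) : c⁻¹ * Δ n ^ p ∈ P n := by
  obtain ⟨cp, hcp, hc', he, hg⟩ := exists_gcd_P hc (Δ_pow_mem (n := n) p)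
  have hec : CoprimeL (cp⁻¹ * c) (cp⁻¹ * Δ n ^ p) := coprimeL_of_gcd hg
  obtain ⟨c', hc'e⟩ : ∃ c', c' = cp⁻¹ * c := ⟨_, rfl⟩
  obtain ⟨e, hee⟩ : ∃ e, e = cp⁻¹ * Δ n ^ p := ⟨_, rfl⟩
  rw [← hc'e] at hc' hec
  rw [← hee] at he hec
  have hceq : c = cp * c' := by rw [hc'e, mul_inv_cancel_left]
  have s1 : u * c'⁻¹ ∈ P n := by
    have := suffix_step h hu hv hc hd hcd hdp hrel hg
    rw [hc'e]
    simpa [mul_assoc] using this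
  have s2 : (rev c')⁻¹ * u ∈ P n := by
    have hrel' : (rev c)⁻¹ * rev u * c⁻¹ = (rev d)⁻¹ * rev v * d⁻¹ := by
      have := congrArg rev hrel
      simpa only [h.mul, h.inv, h.rev_rev, mul_assoc] using this
    have := suffix_step h (h.mem hu) (h.mem hv) hc hd hcd hdp hrel' hg
    rw [← h.mem_iff, h.mul, h.inv, h.rev_rev, hc'e]
    simpa [mul_assoc] using this
  obtain ⟨y, hy⟩ : ∃ y, y = (rev c')⁻¹ * u * c'⁻¹ := ⟨_, rfl⟩
  have hyc : y * c' ∈ P n := by rw [hy, inv_mul_cancel_right]; exact s2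
  have hcy : rev c' * y ∈ P n := by
    rw [hy, ← mul_assoc, mul_inv_cancel_left]; exact s1
  have hΔ : rev e * y * e ∈ P n := by
    have e1 : rev e * y * e = rev (d⁻¹ * Δ n ^ p) * v * (d⁻¹ * Δ n ^ p) := by
      calc rev e * y * e = Δ n ^ p * ((rev c)⁻¹ * u * c⁻¹) * Δ n ^ p := by
            rw [hy, hee, hceq, h.mul, h.mul, h.inv, h.Δ_pow_eq]; group
        _ = _ := by rw [hrel, h.mul, h.inv, h.Δ_pow_eq]; group
    rw [e1]
    exact mul_mem (mul_mem (h.mem hdp) hv) hdp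
  have hey : rev e * y ∈ P n := by
    refine hec.mem hc' he ?_ hΔ
    rw [mul_assoc]
    exact mul_mem (h.mem he) hyc
  have hyP : y ∈ P n := by
    rw [← h.mem_iff]
    refine hec.mem hc' he ?_ ?_
    · rw [← h.mem_iff, h.mul, h.rev_rev]; exact hcy
    · rw [← h.mem_iff, h.mul, h.rev_rev]; exact hey
  have hc1 : c' = 1 := by
    by_contra hne
    obtain ⟨i, hi⟩ := exists_last hc' hne
    apply hpf i
    have e1 : (σ i)⁻¹ * u * (σ i)⁻¹ = rev (c' * (σ i)⁻¹) * y * (c' * (σ i)⁻¹) := by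
      rw [hy, h.mul, h.inv, h.gen]; group
    rw [e1]
    exact mul_mem (mul_mem (h.mem hi) hyP) hi
  rw [hceq, hc1, mul_one, ← hee]
  exact he

/-- One direction of the theorem, expressed by prefixes of `Δ ^ p`. The pair `(a, b)` is traded
for the left coprime pair `(c, d)` with `c a = d b`. -/
theorem dvd_Δ_pow_of_dvd {rev : B n → B n} (h : IsRev rev) {u v a b : B n} {p : ℕ}
    (hu : u ∈ P n) (hpf : PalFree u) (hv : v ∈ P n) (ha : a ∈ P n) (hb : b ∈ P n)
    (hgcd : ∀ c ∈ P n, a * c⁻¹ ∈ P n → b * c⁻¹ ∈ P n → c = 1)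
    (heq : rev a * u * a = rev b * v * b) (hap : a⁻¹ * Δ n ^ p ∈ P n) :
    b⁻¹ * Δ n ^ p ∈ P n := by
  obtain ⟨N, hN⟩ := exists_Δ_pow hb
  have hA : Δ n ^ N * (a * b⁻¹) ∈ P n := by
    rw [Δ_pow_swap, mul_assoc]
    exact mul_mem ha hN
  obtain ⟨g, hg, hc, hd, hz⟩ := exists_gcd_P (Δ_pow_mem N) hA
  have hcd := coprimeL_of_gcd hz
  obtain ⟨c, hce⟩ : ∃ c, c = g⁻¹ * Δ n ^ N := ⟨_, rfl⟩
  obtain ⟨d, hde⟩ : ∃ d, d = g⁻¹ * (Δ n ^ N * (a * b⁻¹)) := ⟨_, rfl⟩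
  rw [← hce] at hc hcd
  rw [← hde] at hd hcd
  have hdc : d = c * a * b⁻¹ := by rw [hde, hce]; group
  have hdp : d⁻¹ * Δ n ^ p ∈ P n := by
    rw [← Δ_pow_swap]
    refine hcd.mem hc hd ?_ ?_
    · rw [mul_assoc, Δ_pow_swap]
      have e : d⁻¹ * c * Δ n ^ p = b * (a⁻¹ * Δ n ^ p) := by rw [hdc]; group
      rw [e]
      exact mul_mem hb hap
    · rw [inv_mul_cancel_right]
      exact Δ_pow_mem p
  have hrel : (rev c)⁻¹ * u * c⁻¹ = (rev d)⁻¹ * v * d⁻¹ := by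
    have e : v = (rev b)⁻¹ * (rev b * v * b) * b⁻¹ := by group
    rw [e, ← heq, hdc, h.mul, h.mul, h.inv]
    group
  have hcp := dvd_Δ_pow_of_twisted h hu hpf hv hc hd hcd hdp hrel
  refine mem_of_coprimeR h hgcd ha hb ?_ ?_
  · have e : a * (b⁻¹ * Δ n ^ p) = (c⁻¹ * d) * Δ n ^ p := by rw [hdc]; group
    rw [e, ← Δ_pow_swap, ← mul_assoc]
    exact mul_mem (Δ_pow_swap.2 hcp) hd
  · rw [mul_inv_cancel_left]
    exact Δ_pow_mem p

/-- A positive braid `a` that shares no suffix with some `b ≠ 1` is not right divisible by `Δ`,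
so its canonical length is at most `m` exactly when it is a prefix of `Δ ^ m`. -/
theorem lenLE_iff {a b : B n} (ha : a ∈ P n) (hb : b ∈ P n) (hb1 : b ≠ 1)
    (hgcd : ∀ c ∈ P n, a * c⁻¹ ∈ P n → b * c⁻¹ ∈ P n → c = 1) (m : ℕ) :
    lenLE a m ↔ a⁻¹ * Δ n ^ m ∈ P n := by
  constructor
  · rintro ⟨p, h1, h2⟩
    rcases le_or_gt p 0 with hp | hp
    · obtain ⟨k, hk⟩ := Int.eq_ofNat_of_zero_le (show 0 ≤ -p by omega)
      have e : a⁻¹ * Δ n ^ m = a⁻¹ * Δ n ^ (p + (m : ℤ)) * Δ n ^ k := by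
        rw [← zpow_natCast, ← zpow_natCast, ← hk]; group
      rw [e]
      exact mul_mem h2 (Δ_pow_mem k)
    · exfalso
      obtain ⟨k, hk⟩ := Int.eq_ofNat_of_zero_le (show 0 ≤ p - 1 by omega)
      obtain ⟨i, hi⟩ := exists_last hb hb1
      refine σ_ne_one i (hgcd _ (Submonoid.subset_closure ⟨i, rfl⟩) ?_ hi)
      -- `a = Δ ^ (k + 1) * x` with `x` positive, so `a` also ends in `Δ`, hence in `σ i`
      obtain ⟨x, hx⟩ : ∃ x, x = Δ n ^ (-p) * a := ⟨_, rfl⟩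
      rw [← hx] at h1
      have e : a * (σ i)⁻¹ = (Δ n ^ (k + 1) * x * (Δ n ^ (k + 1))⁻¹) * Δ n ^ k *
          (Δ n * (σ i)⁻¹) := by
        have hp' : p = ((k + 1 : ℕ) : ℤ) := by push_cast; omega
        rw [hx, hp', zpow_neg, zpow_natCast, mul_inv_cancel_left, pow_succ]
        group
      rw [e]
      exact mul_mem (mul_mem (Δ_pow_conj_mem h1 _) (Δ_pow_mem k)) (Δ_mul_σ_inv_mem i)
  · intro hm
    refine ⟨0, by simpa using ha, ?_⟩
    rwa [zero_add, zpow_natCast]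

end TwistedConj

/-- twisted conjugators with trivial common right gcd have the same
canonical length. -/
theorem equal_length_of_twisted_conjugators (n : ℕ)
    (rev : B n → B n)
    (hrev_mul : ∀ x y : B n, rev (x * y) = rev y * rev x)
    (hrev_gen : ∀ i : Fin (n - 1), rev (σ i) = σ i)
    (u v : B n)
    (hu_pos : u ∈ P n) (hu_pf : PalFree u)
    (hv_pos : v ∈ P n) (hv_pf : PalFree v)
    (a b : B n) (ha : a ∈ P n) (hb : b ∈ P n) (ha1 : a ≠ 1) (hb1 : b ≠ 1)
    (hgcd : ∀ c : B n, c ∈ P n → a * c⁻¹ ∈ P n → b * c⁻¹ ∈ P n → c = 1)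
    (heq : rev a * u * a = rev b * v * b) :
    ∀ m : ℕ, lenLE a m ↔ lenLE b m := by
  intro m
  have h : TwistedConj.IsRev rev := ⟨hrev_mul, hrev_gen⟩
  have hgcd' : ∀ c ∈ P n, b * c⁻¹ ∈ P n → a * c⁻¹ ∈ P n → c = 1 :=
    fun c hc h1 h2 => hgcd c hc h2 h1
  rw [TwistedConj.lenLE_iff ha hb hb1 hgcd m, TwistedConj.lenLE_iff hb ha ha1 hgcd' m]
  exact ⟨TwistedConj.dvd_Δ_pow_of_dvd h hu_pos hu_pf hv_pos ha hb hgcd heq,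
    TwistedConj.dvd_Δ_pow_of_dvd h hv_pos hv_pf hu_pos hb ha hgcd' heq.symm⟩
end

section
/- The conjugacy problem in B_n is solvable (Garside): for every n ≥ 2 there exists a computable function f taking two signed words u, v and returning a Boolean, such that f(u,v) = true if and only if π(u) and π(v) are conjugate in B_n. -/
namespace BraidConj

/-! ### The braid monoid -/

/-- Adjacency of generator indices. -/
def Adj {m : ℕ} (i j : Fin m) : Prop := (i : ℕ) + 1 = j ∨ (j : ℕ) + 1 = i

/-- Indices of distinct commuting generators. -/
def Far {m : ℕ} (i j : Fin m) : Prop := (i : ℕ) + 1 < j ∨ (j : ℕ) + 1 < i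

instance {m : ℕ} (i j : Fin m) : Decidable (Adj i j) := by unfold Adj; infer_instance

instance {m : ℕ} (i j : Fin m) : Decidable (Far i j) := by unfold Far; infer_instance

lemma Adj.symm {m : ℕ} {i j : Fin m} (h : Adj i j) : Adj j i := Or.symm h

lemma Far.symm {m : ℕ} {i j : Fin m} (h : Far i j) : Far j i := Or.symm h

lemma eq_or_adj_or_far {m : ℕ} (i j : Fin m) : i = j ∨ Adj i j ∨ Far i j := by
  unfold Adj Far; omega

/-- The defining relations of the braid monoid, closed under exchanging the two sides. -/
inductive Rel (m : ℕ) : FreeMonoid (Fin m) → FreeMonoid (Fin m) → Prop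
  | far (i j : Fin m) (h : Far i j) : Rel m (.of i * .of j) (.of j * .of i)
  | adj (i j : Fin m) (h : Adj i j) : Rel m (.of i * .of j * .of i) (.of j * .of i * .of j)

/-- The monoid of positive braids, by generators and relations. -/
abbrev BM (m : ℕ) := PresentedMonoid (Rel m)

variable {m : ℕ}

/-- The generators of the braid monoid. -/
def s (i : Fin m) : BM m := PresentedMonoid.of (Rel m) i

lemma s_far {i j : Fin m} (h : Far i j) : s i * s j = s j * s i :=
  PresentedMonoid.mk_eq_mk_of_rel (Rel.far i j h)

lemma s_adj {i j : Fin m} (h : Adj i j) : s i * (s j * s i) = s j * (s i * s j) :=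
  PresentedMonoid.mk_eq_mk_of_rel (Rel.adj i j h)

lemma s_far' {i j : Fin m} (h : Far i j) (x : BM m) : s i * (s j * x) = s j * (s i * x) := by
  rw [← mul_assoc, s_far h, mul_assoc]

lemma s_adj' {i j : Fin m} (h : Adj i j) (x : BM m) :
    s i * (s j * (s i * x)) = s j * (s i * (s j * x)) := by
  simpa only [mul_assoc] using congrArg (· * x) (s_adj h)

/-- The word length as a homomorphism; it is well defined since the relations are homogeneous. -/
def lenHom (m : ℕ) : BM m →* Multiplicative ℕ :=
  PresentedMonoid.lift (fun _ => Multiplicative.ofAdd 1) (by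
    rintro a b (⟨i, j, h⟩ | ⟨i, j, h⟩) <;> simp)

/-- The length of a positive braid. -/
def len (x : BM m) : ℕ := (lenHom m x).toAdd

@[simp] lemma len_mul (x y : BM m) : len (x * y) = len x + len y := by simp [len]

@[simp] lemma len_one : len (1 : BM m) = 0 := by simp [len]

@[simp] lemma len_s (i : Fin m) : len (s i) = 1 := rfl

lemma len_mk (w : FreeMonoid (Fin m)) : len (PresentedMonoid.mk (Rel m) w) = w.toList.length := by
  induction w using FreeMonoid.inductionOn' with
  | one => simp
  | of_mul i w ih =>
    have : len (PresentedMonoid.mk (Rel m) (FreeMonoid.of i)) = 1 := rfl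
    simp [ih, this, add_comm]

lemma eq_one_or (x : BM m) : x = 1 ∨ ∃ i y, x = s i * y := by
  obtain ⟨w, rfl⟩ := PresentedMonoid.surjective_mk x
  induction w using FreeMonoid.inductionOn' with
  | one => simp
  | of_mul i w ih => exact Or.inr ⟨i, PresentedMonoid.mk _ w, by simp [s, PresentedMonoid.of]⟩

lemma eq_one_of_len {x : BM m} (h : len x = 0) : x = 1 := by
  rcases eq_one_or x with h' | ⟨i, y, rfl⟩
  · exact h'
  · simp at h

/-- The element `i \ j` completing the generator `s i` to the least common right multiple of
`s i` and `s j`. -/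
def comp (i j : Fin m) : BM m := if i = j then 1 else if Adj i j then s j * s i else s j

@[simp] lemma comp_self (i : Fin m) : comp i i = 1 := by simp [comp]

lemma comp_adj {i j : Fin m} (h : Adj i j) : comp i j = s j * s i := by
  have : i ≠ j := by rintro rfl; unfold Adj at h; omega
  simp [comp, this, h]

lemma comp_far {i j : Fin m} (h : Far i j) : comp i j = s j := by
  have h1 : i ≠ j := by rintro rfl; unfold Far at h; omega
  have h2 : ¬ Adj i j := by unfold Far at h; unfold Adj; omega
  simp [comp, h1, h2]

lemma s_mul_comp (i j : Fin m) : s i * comp i j = s j * comp j i := by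
  rcases eq_or_adj_or_far i j with rfl | h | h
  · rfl
  · rw [comp_adj h, comp_adj h.symm, s_adj h]
  · rw [comp_far h, comp_far h.symm, s_far h]

/-- The pairs `s i * X`, `s j * Y` that are visibly equal because both are the same right
multiple of the least common multiple of `s i` and `s j`. -/
def Good (i : Fin m) (X : BM m) (j : Fin m) (Y : BM m) : Prop :=
  ∃ Z, X = comp i j * Z ∧ Y = comp j i * Z

lemma Good.symm {i j : Fin m} {X Y : BM m} (h : Good i X j Y) : Good j Y i X := by
  obtain ⟨Z, h1, h2⟩ := h
  exact ⟨Z, h2, h1⟩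

/-- Garside's lemma for elements of length less than `n`. -/
def KeyBelow (m n : ℕ) : Prop :=
  ∀ (i j : Fin m) (X Y : BM m), len X < n → s i * X = s j * Y → Good i X j Y

lemma KeyBelow.far {n : ℕ} (IH : KeyBelow m n) {i j : Fin m} {X Y : BM m} (h : Far i j)
    (hl : len X < n) (he : s i * X = s j * Y) : ∃ Z, X = s j * Z ∧ Y = s i * Z := by
  obtain ⟨Z, h1, h2⟩ := IH i j X Y hl he
  rw [comp_far h] at h1
  rw [comp_far h.symm] at h2
  exact ⟨Z, h1, h2⟩

lemma KeyBelow.adj {n : ℕ} (IH : KeyBelow m n) {i j : Fin m} {X Y : BM m} (h : Adj i j)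
    (hl : len X < n) (he : s i * X = s j * Y) :
    ∃ Z, X = s j * (s i * Z) ∧ Y = s i * (s j * Z) := by
  obtain ⟨Z, h1, h2⟩ := IH i j X Y hl he
  rw [comp_adj h, mul_assoc] at h1
  rw [comp_adj h.symm, mul_assoc] at h2
  exact ⟨Z, h1, h2⟩

lemma KeyBelow.cancel {n : ℕ} (IH : KeyBelow m n) {i : Fin m} {X Y : BM m}
    (hl : len X < n) (he : s i * X = s i * Y) : X = Y := by
  obtain ⟨Z, h1, h2⟩ := IH i i X Y hl he
  rw [h1, h2]

/-- The cube condition for `i`, `k`, `j` when `k` is adjacent to both `i` and `j`. -/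
lemma cube_adj_adj {n : ℕ} (IH : KeyBelow m n) {i k j : Fin m} {U V : BM m}
    (hki : Adj k i) (hkj : Adj k j) (hn : len U + 2 = n)
    (h : s i * (s k * U) = s j * (s k * V)) :
    Good i (s k * (s i * U)) j (s k * (s j * V)) := by
  have hl := congrArg len h
  simp only [len_mul, len_s] at hl
  rcases eq_or_adj_or_far i j with rfl | hij | hij
  · have := IH.cancel (by omega) (IH.cancel (by simp; omega) h)
    subst this
    exact ⟨_, by rw [comp_self, one_mul], by rw [comp_self, one_mul]⟩
  · unfold Adj at *; omega
  · obtain ⟨Z, e1, e2⟩ := IH.far hij (by simp; omega) h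
    have l1 := congrArg len e1
    simp only [len_mul, len_s] at l1
    obtain ⟨A, rfl, e3⟩ := IH.adj hkj (by omega) e1
    obtain ⟨A', rfl, e4⟩ := IH.adj hki (by omega) e2
    have l3 := congrArg len e3
    simp only [len_mul, len_s] at l3 hn
    rw [e3] at e4
    have e5 := IH.cancel (by simp; omega) e4
    obtain ⟨C, rfl, rfl⟩ := IH.far hij.symm (by omega) e5
    refine ⟨s k * (s j * (s i * (s k * C))), ?_, ?_⟩
    · rw [comp_far hij, s_far' hij (s k * _), s_adj' hki.symm, s_adj' hkj]
    · rw [comp_far hij.symm, s_far' hij.symm (s k * _), s_adj' hkj.symm, s_adj' hki,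
        s_far' hij (s k * C)]

/-- The cube condition for `i`, `k`, `j` when `k` is adjacent to `i` and commutes with `j`. -/
lemma cube_adj_far {n : ℕ} (IH : KeyBelow m n) {i k j : Fin m} {U V : BM m}
    (hki : Adj k i) (hkj : Far k j) (hn : len U + 2 = n)
    (h : s i * (s k * U) = s j * V) :
    Good i (s k * (s i * U)) j (s k * V) := by
  rcases eq_or_adj_or_far i j with rfl | hij | hij
  · unfold Adj Far at *; omega
  · obtain ⟨Z, e1, rfl⟩ := IH.adj hij (by simp; omega) h
    obtain ⟨Z', rfl, e2⟩ := IH.far hkj (by omega) e1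
    have l2 := congrArg len e2
    simp only [len_mul, len_s] at l2 hn
    obtain ⟨C, rfl, rfl⟩ := IH.adj hki.symm (by omega) e2
    refine ⟨s k * (s i * (s j * C)), ?_, ?_⟩
    · rw [comp_adj hij, mul_assoc, s_adj' hij, s_far' hkj, s_far' hkj.symm C, s_adj' hki]
    · rw [comp_adj hij.symm, mul_assoc, s_far' hkj.symm, s_adj' hki, s_adj' hij,
        s_far' hkj]
  · obtain ⟨Z, e1, rfl⟩ := IH.far hij (by simp; omega) h
    obtain ⟨C, rfl, rfl⟩ := IH.far hkj (by omega) e1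
    refine ⟨s k * (s i * C), ?_, ?_⟩
    · rw [comp_far hij, s_far' hij, s_far' hkj]
    · rw [comp_far hij.symm, s_adj' hki]

/-- Transitivity of `Good`, given Garside's lemma for shorter elements. -/
lemma Good.trans {n : ℕ} (IH : KeyBelow m n)
    {i k j : Fin m} {X W Y : BM m} (hn : len W = n)
    (h1 : Good i X k W) (h2 : Good k W j Y) : Good i X j Y := by
  obtain ⟨U, rfl, hW⟩ := h1
  obtain ⟨V, hV, rfl⟩ := h2
  have hn1 := hn
  rw [hW] at hn1
  rw [hV] at hn
  have h := hW.symm.trans hV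
  rcases eq_or_adj_or_far k i with rfl | hki | hki
  · rw [comp_self, one_mul] at h ⊢
    exact ⟨V, h, rfl⟩
  all_goals rcases eq_or_adj_or_far k j with rfl | hkj | hkj
  · rw [comp_self, one_mul] at h ⊢
    exact ⟨U, rfl, h.symm⟩
  · simp only [comp_adj hki, comp_adj hkj, comp_adj hki.symm, comp_adj hkj.symm, mul_assoc,
      len_mul, len_s] at h hn hn1 ⊢
    exact cube_adj_adj IH hki hkj (by omega) h
  · simp only [comp_adj hki, comp_far hkj, comp_adj hki.symm, comp_far hkj.symm, mul_assoc,
      len_mul, len_s] at h hn hn1 ⊢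
    exact cube_adj_far IH hki hkj (by omega) h
  · rw [comp_self, one_mul] at h ⊢
    exact ⟨U, rfl, h.symm⟩
  · simp only [comp_far hki, comp_adj hkj, comp_far hki.symm, comp_adj hkj.symm, mul_assoc,
      len_mul, len_s] at h hn hn1 ⊢
    exact (cube_adj_far IH hkj hki (by omega) h.symm).symm
  · simp only [comp_far hki, comp_far hkj, comp_far hki.symm, comp_far hkj.symm,
      len_mul, len_s] at h hn hn1 ⊢
    obtain ⟨Z, rfl, rfl⟩ := IH i j U V (by omega) h
    have hc : ∀ {i j : Fin m}, Far k i → Far k j → s k * comp i j = comp i j * s k := by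
      intro i j hi hj
      unfold comp
      split_ifs
      · simp
      · rw [mul_assoc, ← s_far hi, s_far' hj]
      · exact s_far hj
    exact ⟨s k * Z, by rw [← mul_assoc, hc hki hkj, mul_assoc],
      by rw [← mul_assoc, hc hkj hki, mul_assoc]⟩

/-- Garside's lemma on words: along a derivation, the tails of the two words are related by
`Good`. -/
lemma key_words {n : ℕ} (IH : KeyBelow m n) {w w' : FreeMonoid (Fin m)}
    (h : ConGen.Rel (Rel m) w w') : w.toList.length ≤ n + 1 →
    ∀ i j X Y, w = .of i * X → w' = .of j * Y →
      Good i (PresentedMonoid.mk (Rel m) X) j (PresentedMonoid.mk (Rel m) Y) := by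
  have hlen : ∀ {w w' : FreeMonoid (Fin m)}, ConGen.Rel (Rel m) w w' →
      w.toList.length = w'.toList.length := by
    intro w w' h
    rw [← len_mk, ← len_mk, PresentedMonoid.mk_eq_mk_iff.2 h]
  have split : ∀ w : FreeMonoid (Fin m), w = 1 ∨ ∃ i X, w = .of i * X := by
    intro w
    induction w using FreeMonoid.casesOn with
    | one => exact Or.inl rfl
    | of_mul i X => exact Or.inr ⟨i, X, rfl⟩
  have inj : ∀ {i j : Fin m} {X Y : FreeMonoid (Fin m)},
      FreeMonoid.of i * X = FreeMonoid.of j * Y → i = j ∧ X = Y := by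
    intro i j X Y h
    exact List.cons_eq_cons.1 h
  have hmul : ∀ {i : Fin m} {X : FreeMonoid (Fin m)},
      (FreeMonoid.of i * X).toList.length = X.toList.length + 1 := by
    intro i X; simp [add_comm]
  induction h with
  | of x y h =>
    intro _ i j X Y hx hy
    rcases h with ⟨a, b, hab⟩ | ⟨a, b, hab⟩
    · obtain ⟨rfl, rfl⟩ := inj hx
      obtain ⟨rfl, rfl⟩ := inj hy
      exact ⟨1, by rw [comp_far hab]; rfl, by rw [comp_far hab.symm]; rfl⟩
    · rw [mul_assoc] at hx hy
      obtain ⟨rfl, rfl⟩ := inj hx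
      obtain ⟨rfl, rfl⟩ := inj hy
      exact ⟨1, by rw [comp_adj hab]; rfl, by rw [comp_adj hab.symm]; rfl⟩
  | refl x =>
    intro _ i j X Y hx hy
    obtain ⟨rfl, rfl⟩ := inj (hx.symm.trans hy)
    exact ⟨_, by rw [comp_self, one_mul], by rw [comp_self, one_mul]⟩
  | symm h ih =>
    intro hl i j X Y hx hy
    exact (ih (by rw [hlen h]; exact hl) j i Y X hy hx).symm
  | @trans x y z h1 h2 ih1 ih2 =>
    intro hl i j X Y hx hy
    have l1 := hlen h1
    rcases split y with rfl | ⟨k, W, rfl⟩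
    · rw [hx, hmul] at l1
      simp at l1
    · rw [hmul] at l1
      refine Good.trans (n := W.toList.length) (k := k) (W := PresentedMonoid.mk _ W) ?_
        (len_mk W) (ih1 hl i k X W hx rfl) (ih2 (by rw [hmul]; omega) k j W Y rfl hy)
      intro a b A C hA
      exact IH a b A C (by omega)
  | @mul x x' y y' h1 h2 ih1 ih2 =>
    intro hl i j X Y hx hy
    have l1 := hlen h1
    have hl' : x.toList.length + y.toList.length ≤ n + 1 := by
      simpa using hl
    rcases split x with rfl | ⟨a, A, rfl⟩
    · rcases split x' with rfl | ⟨b, A', rfl⟩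
      · exact ih2 (by omega) i j X Y (by simpa using hx) (by simpa using hy)
      · rw [hmul] at l1
        simp at l1
    · rcases split x' with rfl | ⟨b, A', rfl⟩
      · rw [hmul] at l1
        simp at l1
      · rw [mul_assoc] at hx hy
        obtain ⟨rfl, rfl⟩ := inj hx
        obtain ⟨rfl, rfl⟩ := inj hy
        obtain ⟨Z, e1, e2⟩ := ih1 (by omega) _ _ _ _ rfl rfl
        refine ⟨Z * PresentedMonoid.mk _ y, by rw [map_mul, e1, mul_assoc], ?_⟩
        rw [map_mul, e2, mul_assoc, PresentedMonoid.mk_eq_mk_iff.2 h2]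

/-- Garside's lemma: every common right multiple of `s i` and `s j` is a right multiple of
`s i * comp i j = s j * comp j i`. For `i = j` this says that `s i` is left cancellable. -/
theorem key (i j : Fin m) (X Y : BM m) (h : s i * X = s j * Y) : Good i X j Y := by
  have : ∀ n, KeyBelow m n := by
    intro n
    induction n with
    | zero => intro i j X Y hX; omega
    | succ n ih =>
      intro i j X Y hX he
      obtain ⟨w, rfl⟩ := PresentedMonoid.surjective_mk X
      obtain ⟨w', rfl⟩ := PresentedMonoid.surjective_mk Y
      rw [len_mk] at hX
      refine key_words ih (w := .of i * w) (w' := .of j * w')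
        (PresentedMonoid.mk_eq_mk_iff.1 (by rw [map_mul, map_mul]; exact he)) ?_ i j w w' rfl rfl
      simp
      omega
  exact this (len X + 1) i j X Y (by omega) h

lemma mul_left_cancel' {x y z : BM m} (h : x * y = x * z) : y = z := by
  obtain ⟨w, rfl⟩ := PresentedMonoid.surjective_mk x
  induction w using FreeMonoid.inductionOn' with
  | one => simpa using h
  | of_mul i w ih =>
    rw [map_mul, mul_assoc, mul_assoc] at h
    obtain ⟨Z, h1, h2⟩ := key i i _ _ h
    exact ih (h1.trans h2.symm)

/-- If two elements have a common right multiple `w`, they have a least common right multiple. -/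
lemma exists_lcm (N : ℕ) : ∀ a b w : BM m, len w ≤ N → a ∣ w → b ∣ w →
    ∃ l, a ∣ l ∧ b ∣ l ∧ ∀ w', a ∣ w' → b ∣ w' → l ∣ w' := by
  induction N with
  | zero =>
    rintro a b w hw ⟨x, rfl⟩ ⟨y, hy⟩
    have hl := congrArg len hy
    simp only [len_mul] at hl hw
    obtain rfl := eq_one_of_len (x := a) (by omega)
    obtain rfl := eq_one_of_len (x := b) (by omega)
    exact ⟨1, dvd_rfl, dvd_rfl, fun w' h _ => h⟩
  | succ N ih =>
    intro a b w hw ha hb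
    rcases eq_one_or a with rfl | ⟨i, a, rfl⟩
    · exact ⟨b, ⟨b, (one_mul b).symm⟩, dvd_rfl, fun w' _ h => h⟩
    rcases eq_one_or b with rfl | ⟨j, b, rfl⟩
    · exact ⟨_, dvd_rfl, ⟨_, (one_mul _).symm⟩, fun w' h _ => h⟩
    have main : ∀ w', s i * a ∣ w' → s j * b ∣ w' → ∃ z, w' = s i * (comp i j * z) ∧
        a ∣ comp i j * z ∧ b ∣ comp j i * z := by
      rintro w' ⟨x, rfl⟩ ⟨y, hy⟩
      rw [mul_assoc, mul_assoc] at hy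
      obtain ⟨z, h1, h2⟩ := key i j _ _ hy
      exact ⟨z, by rw [mul_assoc, h1], ⟨x, h1.symm⟩, ⟨y, h2.symm⟩⟩
    have cancel : ∀ {x y z : BM m}, x * y ∣ x * z → y ∣ z := by
      rintro x y z ⟨t, ht⟩
      exact ⟨t, mul_left_cancel' (ht.trans (mul_assoc _ _ _))⟩
    have mono : ∀ {x y z : BM m}, y ∣ z → x * y ∣ x * z := by
      rintro x y z ⟨t, rfl⟩
      exact ⟨t, (mul_assoc _ _ _).symm⟩
    obtain ⟨z, rfl, hza, hzb⟩ := main w ha hb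
    have hl := congrArg len (s_mul_comp i j)
    simp only [len_mul, len_s] at hl hw
    obtain ⟨_, ha1, ⟨x, rfl⟩, hx⟩ := ih a (comp i j) (comp i j * z) (by simp; omega) hza ⟨z, rfl⟩
    obtain ⟨_, hb1, ⟨y, rfl⟩, hy⟩ := ih b (comp j i) (comp j i * z) (by simp; omega) hzb ⟨z, rfl⟩
    obtain ⟨l, hxl, hyl, hl⟩ := ih x y z (by omega) (cancel (hx _ hza ⟨z, rfl⟩))
      (cancel (hy _ hzb ⟨z, rfl⟩))
    refine ⟨s i * (comp i j * l), mono (ha1.trans (mono hxl)), ?_, ?_⟩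
    · rw [← mul_assoc, s_mul_comp, mul_assoc]
      exact mono (hb1.trans (mono hyl))
    · intro w' h1 h2
      obtain ⟨z', rfl, hza', hzb'⟩ := main w' h1 h2
      exact mono (mono (hl _ (cancel (hx _ hza' ⟨z', rfl⟩)) (cancel (hy _ hzb' ⟨z', rfl⟩))))

/-- If `c` conjugates `p` to a positive element and `D` is central, then some greatest common
left divisor `g` of `c` and `D` already conjugates `p` to a positive element. -/
lemma exists_gcd_step {p c q D : BM m} (hD : ∀ x, D * x = x * D) (h : p * c = c * q) :
    ∃ g, g ∣ c ∧ g ∣ D ∧ (∀ d, d ∣ c → d ∣ D → d ∣ g) ∧ g ∣ p * g := by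
  have hle : ∀ {x y : BM m}, x ∣ y → len x ≤ len y := by
    rintro x y ⟨z, rfl⟩
    simp
  have hgcd : ∃ g, g ∣ c ∧ g ∣ D ∧ ∀ d, d ∣ c → d ∣ D → d ∣ g := by
    -- a common divisor of maximal length is greatest, since lcms of divisors are divisors
    have hex : ∃ k, ∃ g, g ∣ c ∧ g ∣ D ∧ len c - len g = k := ⟨_, 1, one_dvd _, one_dvd _, rfl⟩
    classical
    obtain ⟨g, hgc, hgD, hk⟩ := Nat.find_spec hex
    refine ⟨g, hgc, hgD, fun d hdc hdD => ?_⟩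
    obtain ⟨l, ⟨t, rfl⟩, hdl, hl⟩ := exists_lcm (len c) g d c le_rfl hgc hdc
    have hmin := Nat.find_min' hex ⟨g * t, hl _ hgc hdc, hl _ hgD hdD, rfl⟩
    have h1 := hle (hl _ hgc hdc)
    rw [len_mul] at h1 hmin
    obtain rfl := eq_one_of_len (x := t) (by omega)
    rwa [mul_one] at hdl
  obtain ⟨g, hgc, hgD, hg⟩ := hgcd
  refine ⟨g, hgc, hgD, hg, ?_⟩
  have h1 : g ∣ p * c := h ▸ hgc.trans (Dvd.intro _ rfl)
  have h2 : g ∣ p * D := hD p ▸ hgD.trans (Dvd.intro _ rfl)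
  obtain ⟨l, ⟨t, rfl⟩, hgl, hl⟩ := exists_lcm (len (p * c)) p g (p * c) le_rfl ⟨c, rfl⟩ h1
  have cancel : ∀ {x y z : BM m}, x * y ∣ x * z → y ∣ z := by
    rintro x y z ⟨t, ht⟩
    exact ⟨t, mul_left_cancel' (ht.trans (mul_assoc _ _ _))⟩
  obtain ⟨r, rfl⟩ := hg t (cancel (hl _ ⟨c, rfl⟩ h1)) (cancel (hl _ ⟨D, rfl⟩ h2))
  exact hgl.trans ⟨r, (mul_assoc _ _ _).symm⟩

/-! ### A central element -/

/-- The product `a 0 * ⋯ * a (k - 1)`. -/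
def pre {N : Type*} [Monoid N] (a : ℕ → N) : ℕ → N
  | 0 => 1
  | k + 1 => pre a k * a k

section central

variable {N : Type*} [Monoid N] {a : ℕ → N} {m : ℕ}

lemma pre_comm
    (hfar : ∀ i j, i + 1 < j → j < m → a i * a j = a j * a i)
    (k j : ℕ) (hk : k < j) (hj : j < m) : pre a k * a j = a j * pre a k := by
  induction k with
  | zero => simp [pre]
  | succ k ih =>
    rw [pre, mul_assoc, hfar k j hk hj, ← mul_assoc, ih (by omega), mul_assoc]

lemma pre_shift
    (hfar : ∀ i j, i + 1 < j → j < m → a i * a j = a j * a i)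
    (hadj : ∀ i, i + 1 < m → a i * a (i + 1) * a i = a (i + 1) * a i * a (i + 1))
    (k i : ℕ) (hi : i + 1 < k) (hk : k ≤ m) : pre a k * a i = a (i + 1) * pre a k := by
  induction k with
  | zero => omega
  | succ k ih =>
    rcases Nat.lt_or_ge (i + 1) k with h | h
    · rw [pre, mul_assoc, ← hfar i k h (by omega), ← mul_assoc, ih h (by omega), mul_assoc]
    · obtain rfl : k = i + 1 := by omega
      rw [pre, pre, mul_assoc, mul_assoc, ← mul_assoc (a i), hadj i (by omega), ← mul_assoc,
        ← mul_assoc, pre_comm hfar i (i + 1) (by omega) (by omega)]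
      simp only [mul_assoc]

lemma pre_succ_left (k : ℕ) : pre a (k + 1) = a 0 * pre (fun j => a (j + 1)) k := by
  induction k with
  | zero => simp [pre]
  | succ k ih => rw [pre, ih, pre, mul_assoc]

lemma pre_mul_pre
    (hfar : ∀ i j, i + 1 < j → j < m → a i * a j = a j * a i)
    (hadj : ∀ i, i + 1 < m → a i * a (i + 1) * a i = a (i + 1) * a i * a (i + 1))
    (k : ℕ) (hk : k < m) :
    pre a m * pre a k = pre (fun j => a (j + 1)) k * pre a m := by
  induction k with
  | zero => simp [pre]
  | succ k ih =>
    rw [pre, ← mul_assoc, ih (by omega), mul_assoc, pre_shift hfar hadj m k hk le_rfl, pre,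
      mul_assoc]

lemma pre_sq
    (hfar : ∀ i j, i + 1 < j → j < m → a i * a j = a j * a i)
    (hadj : ∀ i, i + 1 < m → a i * a (i + 1) * a i = a (i + 1) * a i * a (i + 1))
    (k : ℕ) (hk : m = k + 1) : pre a m * pre a m * a k = a 0 * (pre a m * pre a m) := by
  have h1 : pre a m = pre a k * a k := by rw [hk, pre]
  have h2 : pre a m = a 0 * pre (fun j => a (j + 1)) k := by rw [hk, pre_succ_left]
  calc pre a m * pre a m * a k
      = a 0 * (pre (fun j => a (j + 1)) k * pre a m) * a k := by
        rw [← mul_assoc (a 0), ← h2]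
    _ = a 0 * (pre a m * pre a k) * a k := by rw [pre_mul_pre hfar hadj k (by omega)]
    _ = a 0 * (pre a m * pre a m) := by
        rw [mul_assoc, mul_assoc, ← h1]

lemma pre_pow_zero
    (hfar : ∀ i j, i + 1 < j → j < m → a i * a j = a j * a i)
    (hadj : ∀ i, i + 1 < m → a i * a (i + 1) * a i = a (i + 1) * a i * a (i + 1))
    (i : ℕ) (hi : i < m) : pre a m ^ i * a 0 = a i * pre a m ^ i := by
  induction i with
  | zero => simp
  | succ i ih =>
    rw [pow_succ', mul_assoc, ih (by omega), ← mul_assoc, pre_shift hfar hadj m i hi le_rfl,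
      mul_assoc]

lemma pre_pow_last
    (hfar : ∀ i j, i + 1 < j → j < m → a i * a j = a j * a i)
    (hadj : ∀ i, i + 1 < m → a i * a (i + 1) * a i = a (i + 1) * a i * a (i + 1))
    (k d : ℕ) (hk : m = k + 1) (hd : d ≤ k) :
    pre a m ^ d * a (k - d) = a k * pre a m ^ d := by
  induction d with
  | zero => simp
  | succ d ih =>
    rw [pow_succ, mul_assoc, pre_shift hfar hadj m _ (by omega) le_rfl, ← mul_assoc,
      show k - (d + 1) + 1 = k - d by omega, ih (by omega), mul_assoc]

/-- The full twist `(a 0 ⋯ a (m - 1)) ^ (m + 1)` commutes with the generators: conjugation by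
`a 0 ⋯ a (m - 1)` shifts indices up by one, and its square takes the last generator to the
first. -/
lemma pre_pow_comm
    (hfar : ∀ i j, i + 1 < j → j < m → a i * a j = a j * a i)
    (hadj : ∀ i, i + 1 < m → a i * a (i + 1) * a i = a (i + 1) * a i * a (i + 1))
    (i : ℕ) (hi : i < m) :
    pre a m ^ (m + 1) * a i = a i * pre a m ^ (m + 1) := by
  obtain ⟨k, hk⟩ : ∃ k, m = k + 1 := ⟨m - 1, by omega⟩
  have e : pre a m ^ (m + 1) = pre a m ^ i * (pre a m * pre a m) * pre a m ^ (k - i) := by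
    rw [← pow_two, ← pow_add, ← pow_add]
    congr 1
    omega
  have h1 := pre_pow_last hfar hadj k (k - i) hk (by omega)
  rw [show k - (k - i) = i by omega] at h1
  rw [e, mul_assoc, h1, mul_assoc, ← mul_assoc (pre a m * pre a m), pre_sq hfar hadj k hk]
  simp only [← mul_assoc]
  rw [pre_pow_zero hfar hadj i hi]

lemma dvd_pre_pow
    (hfar : ∀ i j, i + 1 < j → j < m → a i * a j = a j * a i)
    (hadj : ∀ i, i + 1 < m → a i * a (i + 1) * a i = a (i + 1) * a i * a (i + 1))
    (i : ℕ) (hi : i < m) : a i ∣ pre a m ^ (m + 1) := by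
  obtain ⟨k, hk⟩ : ∃ k, m = k + 1 := ⟨m - 1, by omega⟩
  have h2 : pre a m = a 0 * pre (fun j => a (j + 1)) k := by rw [hk, pre_succ_left]
  have e : pre a m ^ (m + 1) = pre a m ^ i * pre a m * pre a m ^ (m - i) := by
    rw [← pow_succ, ← pow_add]
    congr 1
    omega
  refine ⟨pre a m ^ i * pre (fun j => a (j + 1)) k * pre a m ^ (m - i), ?_⟩
  calc pre a m ^ (m + 1) = pre a m ^ i * pre a m * pre a m ^ (m - i) := e
    _ = pre a m ^ i * (a 0 * pre (fun j => a (j + 1)) k) * pre a m ^ (m - i) := by rw [← h2]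
    _ = (pre a m ^ i * a 0) * pre (fun j => a (j + 1)) k * pre a m ^ (m - i) := by
      simp only [mul_assoc]
    _ = _ := by rw [pre_pow_zero hfar hadj i hi]; simp only [mul_assoc]

end central

/-- The braid monoid has a central element divisible by every generator. -/
lemma exists_central (m : ℕ) :
    ∃ D : BM m, (∀ x, D * x = x * D) ∧ ∀ i, ∃ t, s i * t = D := by
  let a : ℕ → BM m := fun j => if h : j < m then s ⟨j, h⟩ else 1
  have ha : ∀ i : Fin m, a i = s i := fun i => by simp [a]
  have hfar : ∀ i j, i + 1 < j → j < m → a i * a j = a j * a i := by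
    intro i j hij hj
    have := s_far (i := (⟨i, by omega⟩ : Fin m)) (j := ⟨j, hj⟩) (Or.inl hij)
    rwa [← ha, ← ha] at this
  have hadj : ∀ i, i + 1 < m → a i * a (i + 1) * a i = a (i + 1) * a i * a (i + 1) := by
    intro i hi
    have := s_adj (i := (⟨i, by omega⟩ : Fin m)) (j := ⟨i + 1, hi⟩) (Or.inl rfl)
    rwa [← ha, ← ha, ← mul_assoc, ← mul_assoc] at this
  refine ⟨pre a m ^ (m + 1), fun x => ?_, fun i => ?_⟩
  · obtain ⟨w, rfl⟩ := PresentedMonoid.surjective_mk x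
    induction w using FreeMonoid.inductionOn' with
    | one => simp
    | of_mul i w ih =>
      have h : PresentedMonoid.mk (Rel m) (.of i) = a i := (ha i).symm
      rw [map_mul, h, ← mul_assoc, pre_pow_comm hfar hadj i i.2, mul_assoc, ih, mul_assoc]
  · obtain ⟨t, ht⟩ := dvd_pre_pow hfar hadj i i.2
    exact ⟨t, by rw [ht, ha]⟩

/-! ### The braid monoid inside the braid group -/

lemma sigma_far {n : ℕ} {i j : Fin (n - 1)} (h : Far i j) :
    (σ i : B n) * σ j = σ j * σ i := by
  have main : ∀ i j : Fin (n - 1), (i : ℕ) + 1 < j → (σ i : B n) * σ j = σ j * σ i := by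
    intro i j h
    have := PresentedGroup.mk_eq_mk_of_mul_inv_mem (rels := braidRels (n - 1))
      (x := .of i * .of j) (y := .of j * .of i) (Or.inl ⟨i, j, h, by group⟩)
    rw [map_mul, map_mul] at this
    exact this
  rcases h with h | h
  · exact main i j h
  · exact (main j i h).symm

lemma sigma_adj {n : ℕ} {i j : Fin (n - 1)} (h : Adj i j) :
    (σ i : B n) * σ j * σ i = σ j * σ i * σ j := by
  have main : ∀ i j : Fin (n - 1), (i : ℕ) + 1 = j →
      (σ i : B n) * σ j * σ i = σ j * σ i * σ j := by
    intro i j h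
    have := PresentedGroup.mk_eq_mk_of_mul_inv_mem (rels := braidRels (n - 1))
      (x := .of i * .of j * .of i) (y := .of j * .of i * .of j) (Or.inr ⟨i, j, h, by group⟩)
    rw [map_mul, map_mul, map_mul, map_mul] at this
    exact this
  rcases h with h | h
  · exact main i j h
  · exact (main j i h).symm

/-- The canonical homomorphism from the braid monoid to the braid group. -/
def toB (n : ℕ) : BM (n - 1) →* B n :=
  PresentedMonoid.lift σ (by
    rintro a b (⟨i, j, h⟩ | ⟨i, j, h⟩)
    · simpa using sigma_far h
    · simpa using sigma_adj h)

@[simp] lemma toB_s {n : ℕ} (i : Fin (n - 1)) : toB n (s i) = σ i := rfl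

/-- The braid monoid embeds in the braid group, because it embeds in its localization at a
central element divisible by every generator, where the generators become invertible. -/
lemma toB_injective (n : ℕ) : Function.Injective (toB n) := by
  obtain ⟨D, hD, ht⟩ := exists_central (n - 1)
  choose t ht using ht
  have hts : ∀ i, t i * s i = D := fun i =>
    mul_left_cancel' (x := s i) (by rw [← mul_assoc, ht, hD])
  let S : Submonoid (BM (n - 1)) := Submonoid.powers D
  have hS : ∀ (d : S) (x : BM (n - 1)), (d : BM (n - 1)) * x = x * d := by
    rintro ⟨_, k, rfl⟩ x
    exact (Commute.pow_left (hD x : Commute D x) k)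
  let _ : OreLocalization.OreSet S :=
    { ore_right_cancel := fun r₁ r₂ d h => ⟨d, by rw [hS, hS, h]⟩
      oreNum := fun r _ => r
      oreDenom := fun _ d => d
      ore_eq := fun r d => hS d r }
  let ι : BM (n - 1) →* OreLocalization S (BM (n - 1)) := OreLocalization.numeratorHom
  have hι : Function.Injective ι := by
    intro x y h
    obtain ⟨u, v, h1, h2⟩ := OreLocalization.oreDiv_eq_iff.1 h
    simp only [OneMemClass.coe_one, mul_one] at h2
    rw [← h2] at h1
    exact (mul_left_cancel' h1).symm
  let DU : (OreLocalization S (BM (n - 1)))ˣ := OreLocalization.numeratorUnit ⟨D, 1, pow_one D⟩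
  have hDU : (DU : OreLocalization S (BM (n - 1))) = ι D := rfl
  have hcomm : ∀ x, (DU : OreLocalization S (BM (n - 1))) * ι x = ι x * DU := by
    intro x; rw [hDU, ← map_mul, hD, map_mul]
  let g : Fin (n - 1) → (OreLocalization S (BM (n - 1)))ˣ := fun i =>
    { val := ι (s i)
      inv := ι (t i) * (DU⁻¹ : (OreLocalization S (BM (n - 1)))ˣ)
      val_inv := by rw [← mul_assoc, ← map_mul, ht, ← hDU, Units.mul_inv]
      inv_val := by
        rw [mul_assoc, ← Units.mul_right_inj DU, mul_one, ← mul_assoc, hcomm, mul_assoc,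
          Units.mul_inv_cancel_left, ← map_mul, hts, hDU] }
  have hg : ∀ i, ((g i : (OreLocalization S (BM (n - 1)))ˣ) : OreLocalization S (BM (n - 1)))
    = ι (s i) := fun _ => rfl
  have hrel : ∀ r ∈ braidRels (n - 1), FreeGroup.lift g r = 1 := by
    rintro r (⟨i, j, h, rfl⟩ | ⟨i, j, h, rfl⟩)
    · simp only [map_mul, map_inv, FreeGroup.lift_apply_of]
      have : g i * g j = g j * g i := by
        ext
        simp only [Units.val_mul, hg, ← map_mul, s_far (Or.inl h : Far i j)]
      rw [this]; group
    · simp only [map_mul, map_inv, FreeGroup.lift_apply_of]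
      have : g i * g j * g i = g j * g i * g j := by
        ext
        simp only [Units.val_mul, hg, ← map_mul, mul_assoc, s_adj (Or.inl h : Adj i j)]
      rw [this]; group
  let φ : B n →* (OreLocalization S (BM (n - 1)))ˣ := PresentedGroup.toGroup hrel
  have hφ : ∀ x, ((φ (toB n x) : (OreLocalization S (BM (n - 1)))ˣ) :
      OreLocalization S (BM (n - 1))) = ι x := by
    intro x
    obtain ⟨w, rfl⟩ := PresentedMonoid.surjective_mk x
    induction w using FreeMonoid.inductionOn' with
    | one => simp
    | of_mul i w ih =>
      rw [map_mul, map_mul, map_mul, map_mul, Units.val_mul, ih]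
      congr 1
      exact congrArg Units.val (PresentedGroup.toGroup.of hrel)
  intro x y h
  apply hι
  rw [← hφ, ← hφ, h]

/-! ### Cyclic rewriting of positive words -/

/-- Cyclic rotation of a word by one letter. -/
def rot (w : List (Fin m)) : List (Fin m) := w.drop 1 ++ w.take 1

/-- Application of the braid relation whose one side starts the word, if there is one. -/
def rew : List (Fin m) → List (Fin m)
  | i :: j :: k :: w =>
    if Far i j then j :: i :: k :: w
    else if Adj i j ∧ k = i then j :: i :: j :: w else i :: j :: k :: w
  | [i, j] => if Far i j then [j, i] else [i, j]
  | w => w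

/-- The words obtained from `w` by one move. -/
def next (w : List (Fin m)) : List (List (Fin m)) := [rot w, rew w]

/-- Reachability of words under rotations and braid relations. -/
def Reach : List (Fin m) → List (Fin m) → Prop :=
  Relation.ReflTransGen fun w w' => w' ∈ next w

lemma reach_rot (a b : List (Fin m)) : Reach (a ++ b) (b ++ a) := by
  induction a generalizing b with
  | nil => rw [List.append_nil]; exact Relation.ReflTransGen.refl
  | cons x a ih =>
    refine Relation.ReflTransGen.head (b := a ++ (b ++ [x])) ?_ ?_
    · simp [next, rot]
    · have := ih (b ++ [x])
      rwa [List.append_assoc] at this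

lemma rew_far {i j : Fin m} (h : Far i j) (w : List (Fin m)) :
    rew (i :: j :: w) = j :: i :: w := by
  cases w <;> simp [rew, h]

lemma rew_adj {i j : Fin m} (h : Adj i j) (w : List (Fin m)) :
    rew (i :: j :: i :: w) = j :: i :: j :: w := by
  have h2 : ¬ Far i j := by unfold Adj at h; unfold Far; omega
  simp [rew, h, h2]

/-- The positive braid represented by a word. -/
def mkw (w : List (Fin m)) : BM m := PresentedMonoid.mk (Rel m) (FreeMonoid.ofList w)

@[simp] lemma mkw_append (a b : List (Fin m)) : mkw (a ++ b) = mkw a * mkw b := by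
  simp [mkw, FreeMonoid.ofList_append]

@[simp] lemma mkw_nil : mkw ([] : List (Fin m)) = 1 := rfl

@[simp] lemma mkw_cons (i : Fin m) (w : List (Fin m)) : mkw (i :: w) = s i * mkw w := by
  simp [mkw, FreeMonoid.ofList_cons, s, PresentedMonoid.of]

lemma mkw_surjective (x : BM m) : ∃ w, mkw w = x := by
  obtain ⟨w, rfl⟩ := PresentedMonoid.surjective_mk x
  exact ⟨w.toList, rfl⟩

/-- Words that are equal in the braid monoid are mutually reachable, inside any word. Relations
at inner positions are brought to the front by rotation. -/
lemma reach_of_rel {w w' : FreeMonoid (Fin m)} (h : ConGen.Rel (Rel m) w w') :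
    ∀ b, Reach (w.toList ++ b) (w'.toList ++ b) ∧ Reach (w'.toList ++ b) (w.toList ++ b) := by
  have single : ∀ w : List (Fin m), Reach w (rew w) := fun w =>
    Relation.ReflTransGen.single (by simp [next])
  induction h with
  | of x y h =>
    intro b
    rcases h with ⟨i, j, h⟩ | ⟨i, j, h⟩
    · have h1 := single (i :: j :: b)
      have h2 := single (j :: i :: b)
      rw [rew_far h] at h1
      rw [rew_far h.symm] at h2
      exact ⟨h1, h2⟩
    · have h1 := single (i :: j :: i :: b)
      have h2 := single (j :: i :: j :: b)
      rw [rew_adj h] at h1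
      rw [rew_adj h.symm] at h2
      exact ⟨h1, h2⟩
  | refl x => exact fun b => ⟨.refl, .refl⟩
  | symm _ ih => exact fun b => (ih b).symm
  | trans _ _ ih1 ih2 =>
    exact fun b => ⟨(ih1 b).1.trans (ih2 b).1, (ih2 b).2.trans (ih1 b).2⟩
  | @mul x x' y y' _ _ ih1 ih2 =>
    intro b
    have r := fun a c : List (Fin m) => reach_rot a (c ++ b)
    have r' := fun a c : List (Fin m) => reach_rot (c ++ b) a
    simp only [FreeMonoid.toList_mul, List.append_assoc] at *
    have e1 := (ih1 (y.toList ++ b)).1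
    have e2 := (ih2 (b ++ x'.toList)).1
    have e3 := (ih2 (b ++ x'.toList)).2
    have e4 := (ih1 (y.toList ++ b)).2
    exact ⟨e1.trans ((r _ _).trans (e2.trans (r' _ _))),
      (r _ _).trans (e3.trans ((r' _ _).trans e4))⟩

lemma reach_of_mkw_eq {w w' : List (Fin m)} (h : mkw w = mkw w') : Reach w w' := by
  simpa using (reach_of_rel (PresentedMonoid.mk_eq_mk_iff.1 h) []).1

/-- If `p` and `q` are conjugate by a positive element `c`, then words for `p * D` and `q * D` are
related by rotations and braid relations. The conjugation by `g = gcd (c, D)` is such a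
transformation: with `D = g * t` and `p * g = g * p'`, it rotates `g * (p' * t) = p * D` to
`(p' * t) * g = p' * D`. -/
lemma reach_of_conj {D : BM m} (hD : ∀ x, D * x = x * D) (hs : ∀ i, ∃ t, s i * t = D) (N : ℕ) :
    ∀ p q c : BM m, len c ≤ N → p * c = c * q →
      ∀ w w', mkw w = p * D → mkw w' = q * D → Reach w w' := by
  induction N with
  | zero =>
    intro p q c hc h w w' hw hw'
    obtain rfl := eq_one_of_len (x := c) (by omega)
    apply reach_of_mkw_eq
    rw [hw, hw', show p = q by simpa using h]
  | succ N ih =>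
    intro p q c hc h w w' hw hw'
    rcases eq_one_or c with rfl | ⟨i, y, hy⟩
    · apply reach_of_mkw_eq
      rw [hw, hw', show p = q by simpa using h]
    obtain ⟨g, ⟨c', hc'⟩, ⟨t, ht⟩, hg, ⟨p', hp'⟩⟩ := exists_gcd_step hD h
    obtain ⟨r, hr⟩ := hs i
    obtain ⟨r', hr'⟩ := hg (s i) ⟨y, hy⟩ ⟨r, hr.symm⟩
    have htg : t * g = D := mul_left_cancel' (x := g) (by rw [← mul_assoc, ← ht, hD])
    have hl : len c' ≤ N := by
      have h1 := congrArg len hc'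
      have h2 := congrArg len hr'
      simp only [len_mul, len_s] at h1 h2
      omega
    have hconj : p' * c' = c' * q := by
      apply mul_left_cancel' (x := g)
      rw [← mul_assoc, ← hp', ← mul_assoc, ← hc', mul_assoc, ← hc', h]
    obtain ⟨wg, rfl⟩ := mkw_surjective g
    obtain ⟨wp, rfl⟩ := mkw_surjective p'
    obtain ⟨wt, rfl⟩ := mkw_surjective t
    have e1 : Reach w (wg ++ (wp ++ wt)) := by
      apply reach_of_mkw_eq
      rw [hw, mkw_append, mkw_append, ← mul_assoc, ← hp', mul_assoc, ← ht]
    exact e1.trans ((reach_rot _ _).trans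
      (ih (mkw wp) q c' hl hconj _ _ (by rw [mkw_append, mkw_append, mul_assoc, htg]) hw'))

lemma isConj_of_reach {n : ℕ} {w w' : List (Fin (n - 1))} (h : Reach w w') :
    IsConj (toB n (mkw w)) (toB n (mkw w')) := by
  induction h with
  | refl => exact IsConj.refl _
  | @tail b c _ hbc ih =>
    refine ih.trans ?_
    simp only [next, List.mem_cons, List.not_mem_nil, or_false] at hbc
    rcases hbc with rfl | rfl
    · cases b with
      | nil => exact IsConj.refl _
      | cons i b =>
        rw [isConj_iff]
        exact ⟨(toB n (s i))⁻¹, by simp [rot]⟩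
    · suffices mkw (rew b) = mkw b by rw [this]
      unfold rew
      split
      · split_ifs with h1 h2
        · simp [s_far' h1]
        · obtain ⟨h2, rfl⟩ := h2
          simp [s_adj' h2]
        · rfl
      · split_ifs with h1
        · simp [s_far h1]
        · rfl
      · rfl

/-! ### Exhaustive search is primitive recursive -/

section search

variable {α : Type*} (nxt : α → List α)

/-- Enlarge a list of states by all states that are one move away. -/
def grow (L : List α) : List α := L ++ L.flatMap nxt

lemma grow_sound {a : α} (k : ℕ) :
    ∀ x ∈ (grow nxt)^[k] [a], Relation.ReflTransGen (fun x y => y ∈ nxt x) a x := by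
  induction k with
  | zero => simpa using Relation.ReflTransGen.refl
  | succ k ih =>
    intro x hx
    rw [Function.iterate_succ_apply', grow, List.mem_append, List.mem_flatMap] at hx
    rcases hx with hx | ⟨y, hy, hx⟩
    · exact ih x hx
    · exact (ih y hy).tail hx

lemma grow_mono {L : List α} (j k : ℕ) (h : j ≤ k) : (grow nxt)^[j] L ⊆ (grow nxt)^[k] L := by
  induction k, h using Nat.le_induction with
  | base => exact List.Subset.refl _
  | succ k _ ih =>
    rw [Function.iterate_succ_apply']
    exact List.Subset.trans ih (List.subset_append_left _ _)

/-- If at most `N` states are reachable, all of them are found in `N` rounds: as long as a round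
finds something new, the number of states found exceeds the number of rounds. -/
lemma mem_grow_iff [DecidableEq α] {a : α} (U : Finset α) (N : ℕ) (hN : U.card ≤ N)
    (hU : ∀ x, Relation.ReflTransGen (fun x y => y ∈ nxt x) a x → x ∈ U) (x : α) :
    x ∈ (grow nxt)^[N] [a] ↔ Relation.ReflTransGen (fun x y => y ∈ nxt x) a x := by
  refine ⟨grow_sound nxt N x, fun hx => ?_⟩
  have key : ∀ k, (∃ j ≤ k, (grow nxt)^[j + 1] [a] ⊆ (grow nxt)^[j] [a]) ∨
      k < ((grow nxt)^[k] [a]).toFinset.card := by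
    intro k
    induction k with
    | zero => exact Or.inr (by simp)
    | succ k ih =>
      rcases ih with ⟨j, hj, h⟩ | h
      · exact Or.inl ⟨j, by omega, h⟩
      · by_cases hc : (grow nxt)^[k + 1] [a] ⊆ (grow nxt)^[k] [a]
        · exact Or.inl ⟨k, by omega, hc⟩
        · refine Or.inr (lt_of_le_of_lt (Nat.succ_le_of_lt h) (Finset.card_lt_card ?_))
          rw [Finset.ssubset_iff_subset_ne]
          refine ⟨?_, fun he => hc ?_⟩
          · intro y hy
            rw [List.mem_toFinset] at hy ⊢
            exact grow_mono nxt k (k + 1) (by omega) hy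
          · intro y hy
            rwa [← List.mem_toFinset, ← he, List.mem_toFinset] at hy
  rcases key N with ⟨j, hj, hc⟩ | h
  · refine grow_mono nxt j N hj ?_
    induction hx with
    | refl => exact grow_mono nxt 0 j (by omega) (by simp)
    | tail _ hy ih =>
      apply hc
      rw [Function.iterate_succ_apply', grow, List.mem_append, List.mem_flatMap]
      exact Or.inr ⟨_, ih, hy⟩
  · have : ((grow nxt)^[N] [a]).toFinset.card ≤ U.card := by
      apply Finset.card_le_card
      intro y hy
      exact hU y (grow_sound nxt N y (List.mem_toFinset.1 hy))
    omega

end search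

lemma length_of_reach {w w' : List (Fin m)} (h : Reach w w') : w'.length = w.length := by
  induction h with
  | refl => rfl
  | @tail b c _ hbc ih =>
    rw [← ih]
    simp only [next, List.mem_cons, List.not_mem_nil, or_false] at hbc
    rcases hbc with rfl | rfl
    · simp [rot]; omega
    · unfold rew
      split
      · split_ifs <;> simp
      · split_ifs <;> simp
      · rfl

/-- All words reachable from `w`, by exhaustive search; there are at most `m ^ w.length`. -/
def orbit (w : List (Fin m)) : List (List (Fin m)) := (grow next)^[m ^ w.length] [w]

lemma mem_orbit {w w' : List (Fin m)} : w' ∈ orbit w ↔ Reach w w' := by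
  refine mem_grow_iff next
    ((Finset.univ : Finset (Fin w.length → Fin m)).image List.ofFn) _ ?_ ?_ w'
  · exact Finset.card_image_le.trans (by simp)
  · intro x hx
    have hl : x.length = w.length := length_of_reach hx
    rw [← hl]
    exact Finset.mem_image.2 ⟨x.get, Finset.mem_univ _, List.ofFn_get x⟩

lemma primrec_rew : Primrec (rew : List (Fin m) → List (Fin m)) := by
  let ψ : Option (Fin m) × Option (Fin m) × Option (Fin m) → List (Fin m) := fun a =>
    rew (a.1.toList ++ (a.2.1.toList ++ a.2.2.toList))
  have hget : ∀ k : ℕ, Primrec fun w : List (Fin m) => w[k]? := fun k =>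
    Primrec.list_getElem?.comp Primrec.id (Primrec.const k)
  have h : Primrec fun w : List (Fin m) => ψ (w[0]?, w[1]?, w[2]?) ++ w.drop 3 :=
    Primrec.list_append.comp
      ((Primrec.dom_finite ψ).comp ((hget 0).pair ((hget 1).pair (hget 2))))
      (Primrec.list_drop.comp (Primrec.const 3) Primrec.id)
  refine h.of_eq fun w => ?_
  match w with
  | [] => rfl
  | [i] => rfl
  | [i, j] => simp [ψ]
  | i :: j :: k :: w =>
    simp only [ψ, rew, List.getElem?_cons_zero, List.getElem?_cons_succ, Option.toList_some,
      List.cons_append, List.nil_append, List.drop_succ_cons, List.drop_zero]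
    split_ifs <;> rfl

lemma primrec_next : Primrec (next : List (Fin m) → List (List (Fin m))) := by
  have hrot : Primrec (rot : List (Fin m) → List (Fin m)) :=
    Primrec.list_append.comp (Primrec.list_drop.comp (Primrec.const 1) Primrec.id)
      (Primrec.list_take.comp (Primrec.const 1) Primrec.id)
  exact Primrec.list_cons.comp hrot (Primrec.list_cons.comp primrec_rew (Primrec.const []))

lemma primrec_orbit : Primrec (orbit : List (Fin m) → List (List (Fin m))) := by
  have hpow : Primrec₂ ((· ^ ·) : ℕ → ℕ → ℕ) := Primrec₂.unpaired'.1 Nat.Primrec.pow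
  have hgrow : Primrec₂ fun (_ : List (Fin m)) (L : List (List (Fin m))) => grow next L :=
    (Primrec.list_append.comp Primrec.snd
      (Primrec.list_flatMap Primrec.snd (primrec_next.comp Primrec.snd).to₂)).to₂
  exact Primrec.nat_iterate (hpow.comp (Primrec.const m) Primrec.list_length)
    (Primrec.list_cons.comp Primrec.id (Primrec.const [])) hgrow

lemma exists_primrec_mem (α : Type*) [Primcodable α] [DecidableEq α] :
    ∃ F : α → List α → Bool, Primrec₂ F ∧ ∀ a L, F a L = true ↔ a ∈ L := by
  have h : PrimrecPred fun p : α × List α => p.2.idxOf p.1 < p.2.length :=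
    Primrec.nat_lt.comp (Primrec.list_idxOf.comp Primrec.fst Primrec.snd)
      (Primrec.list_length.comp Primrec.snd)
  exact ⟨fun a L => decide (L.idxOf a < L.length), h.decide, fun a L => by
    simp [List.idxOf_lt_length_iff]⟩

/-! ### Reduction to positive words -/

lemma isConj_mul_central {G : Type*} [Group G] {x y z : G} (hz : ∀ g, z * g = g * z)
    (h : IsConj (x * z) (y * z)) : IsConj x y := by
  rw [isConj_iff] at h ⊢
  obtain ⟨c, hc⟩ := h
  refine ⟨c, mul_right_cancel (b := z) ?_⟩
  rw [← hc, mul_assoc (c * x), ← hz]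
  group

lemma toB_central {n : ℕ} {D : BM (n - 1)} (hD : ∀ x, D * x = x * D) (g : B n) :
    toB n D * g = g * toB n D := by
  have := PresentedGroup.generated_by _ (Subgroup.centralizer {toB n D}) (fun j => by
    rw [Subgroup.mem_centralizer_singleton_iff]
    have := congrArg (toB n) (hD (s j))
    rw [map_mul, map_mul] at this
    exact this.symm) g
  rw [Subgroup.mem_centralizer_singleton_iff] at this
  exact this.symm

/-- Every braid becomes positive after multiplication by a power of the central element. -/
lemma exists_toB_eq {n : ℕ} {D : BM (n - 1)} (hD : ∀ x, D * x = x * D)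
    (hs : ∀ i, ∃ t, s i * t = D) (g : B n) : ∃ k c, g * toB n D ^ k = toB n c := by
  obtain ⟨z, rfl⟩ : ∃ z, PresentedGroup.mk _ z = g :=
    QuotientGroup.mk_surjective g
  induction z using FreeGroup.induction_on with
  | C1 => exact ⟨0, 1, by simp⟩
  | of i => exact ⟨0, s i, by simp; rfl⟩
  | inv_of i _ =>
    obtain ⟨t, ht⟩ := hs i
    refine ⟨1, t, ?_⟩
    rw [pow_one, ← ht, map_mul, map_inv]
    exact inv_mul_cancel_left _ _
  | mul x y hx hy =>
    obtain ⟨k, c, hc⟩ := hx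
    obtain ⟨l, d, hd⟩ := hy
    refine ⟨k + l, c * d, ?_⟩
    have hcomm : Commute (toB n D ^ k) (PresentedGroup.mk (braidRels (n - 1)) y) :=
      Commute.pow_left (toB_central hD _) k
    rw [map_mul, map_mul, ← hc, ← hd, pow_add, mul_assoc, mul_assoc, ← mul_assoc _ (_ ^ k),
      ← hcomm.eq, mul_assoc]

/-- Conjugacy of signed words reduces, by a primitive recursive map, to reachability of positive
words under rotations and braid relations. -/
lemma exists_reduction (n : ℕ) :
    ∃ A : List (Fin (n - 1) × Bool) × List (Fin (n - 1) × Bool) → List (Fin (n - 1)),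
      Primrec A ∧ ∀ u v, Reach (A (u, v)) (A (v, u)) ↔ IsConj (π u : B n) (π v) := by
  obtain ⟨D, hD, hs⟩ := exists_central (n - 1)
  obtain ⟨Dw, hDw⟩ := mkw_surjective D
  have hst : ∀ i, ∃ w : List (Fin (n - 1)), s i * mkw w = D := fun i => by
    obtain ⟨t, ht⟩ := hs i
    obtain ⟨w, rfl⟩ := mkw_surjective t
    exact ⟨w, ht⟩
  choose t ht using hst
  -- `g` sends a signed letter `x` to a positive word for `x * D`
  let g : Fin (n - 1) × Bool → List (Fin (n - 1)) := fun p => if p.2 then p.1 :: Dw else t p.1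
  -- `A (u, v)` is a positive word for `π u * D ^ (|u| + |v| + 1)`
  let A : List (Fin (n - 1) × Bool) × List (Fin (n - 1) × Bool) → List (Fin (n - 1)) := fun p =>
    p.1.flatMap g ++ (p.2.flatMap (fun _ => Dw) ++ Dw)
  have hA : Primrec A :=
    Primrec.list_append.comp
      (Primrec.list_flatMap Primrec.fst ((Primrec.dom_finite g).comp Primrec.snd).to₂)
      (Primrec.list_append.comp (Primrec.list_flatMap Primrec.snd (Primrec.const Dw).to₂)
        (Primrec.const Dw))
  refine ⟨A, hA, ?_⟩
  intro u v
  have hc := toB_central hD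
  have hDpow : ∀ v : List (Fin (n - 1) × Bool),
      mkw (v.flatMap (fun _ => Dw)) = D ^ v.length := by
    intro v
    induction v with
    | nil => simp
    | cons a v ih => rw [List.flatMap_cons, mkw_append, ih, hDw, List.length_cons, pow_succ']
  have hpos : ∀ u : List (Fin (n - 1) × Bool),
      toB n (mkw (u.flatMap g)) = π u * toB n D ^ u.length := by
    intro u
    induction u with
    | nil => simp [π]
    | cons a u ih =>
      have h1 : toB n (mkw (g a)) = (if a.2 then σ a.1 else (σ a.1)⁻¹) * toB n D := by
        by_cases h : a.2
        · simp [g, h, hDw]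
        · simp [g, h, ← ht a.1]
      have h2 : (π (a :: u) : B n) = (if a.2 then σ a.1 else (σ a.1)⁻¹) * π u := by
        simp [π]
      rw [List.flatMap_cons, mkw_append, map_mul, ih, h1, h2, List.length_cons, pow_succ',
        mul_assoc, ← mul_assoc _ (π u), hc]
      simp only [mul_assoc]
  have hAw : ∀ u v, mkw (A (u, v)) = mkw (u.flatMap g) * D ^ v.length * D := by
    intro u v
    simp only [A, mkw_append, hDpow, hDw, mul_assoc]
  have hcp : ∀ (k : ℕ) (x : B n), toB n D ^ k * x = x * toB n D ^ k := fun k x =>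
    Commute.pow_left (hc x : Commute _ _) k
  have hp : ∀ u v : List (Fin (n - 1) × Bool), toB n (mkw (u.flatMap g) * D ^ v.length) =
      π u * toB n D ^ (u.length + v.length) := by
    intro u v
    rw [map_mul, map_pow, hpos, pow_add, mul_assoc]
  constructor
  · intro h
    have h1 := isConj_of_reach h
    rw [hAw, hAw, map_mul, map_mul _ _ D, hp, hp, add_comm v.length] at h1
    exact isConj_mul_central (hcp _) (isConj_mul_central hc h1)
  · intro h
    obtain ⟨c, hcc⟩ := isConj_iff.1 h.symm
    obtain ⟨k, c', hc'⟩ := exists_toB_eq hD hs c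
    refine reach_of_conj hD hs (len c') _ _ c' le_rfl ?_ _ _ (hAw u v) (hAw v u)
    apply toB_injective n
    have e1 : π u * c = c * π v := by rw [← hcc]; group
    rw [map_mul, map_mul _ c', hp, hp, ← hc', add_comm v.length]
    have he := hcp (u.length + v.length)
    have hd := hcp k
    generalize toB n D ^ (u.length + v.length) = e at he ⊢
    generalize toB n D ^ k = d at hd ⊢
    calc π u * e * (c * d) = π u * (e * c) * d := by simp only [mul_assoc]
      _ = π u * c * (e * d) := by rw [he]; simp only [mul_assoc]
      _ = c * (d * π v) * e := by rw [e1, he d, hd (π v)]; simp only [mul_assoc]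
      _ = c * d * (π v * e) := by simp only [mul_assoc]

end BraidConj

/-- Garside: the conjugacy problem in `B n` is solvable. -/
theorem conjugacy_problem_solvable (n : ℕ) (hn : 2 ≤ n) :
    ∃ f : List (Fin (n - 1) × Bool) × List (Fin (n - 1) × Bool) → Bool,
      Computable f ∧
      ∀ u v : List (Fin (n - 1) × Bool),
        (f (u, v) = true ↔ IsConj (π u) (π v)) := by
  obtain ⟨A, hA, h⟩ := BraidConj.exists_reduction n
  have hA' : Primrec fun p : List (Fin (n - 1) × Bool) × List (Fin (n - 1) × Bool) =>
      A (p.2, p.1) := hA.comp (Primrec.snd.pair Primrec.fst)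
  obtain ⟨F, hF, hmem⟩ := BraidConj.exists_primrec_mem (List (Fin (n - 1)))
  exact ⟨fun p => F (A (p.2, p.1)) (BraidConj.orbit (A p)),
    (hF.comp hA' (BraidConj.primrec_orbit.comp hA)).to_comp,
    fun u v => (hmem _ _).trans (BraidConj.mem_orbit.trans (h u v))⟩
end
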